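/- Let φ_λ be a minimal nonnegative classical solution of the explosion problem at parameter λ > 0, and suppose there exist κ ∈ ℝ and a function ψ, C² in Ω, continuous on the closure of Ω, positive in Ω, vanishing on ∂Ω, such that −Δψ(x) + ⟨u(x), ∇ψ(x)⟩ − λ g'(φ_λ(x)) ψ(x) = κ ψ(x) for all x ∈ Ω (i.e. ψ is a principal eigenfunction of the linearized operator with eigenvalue κ). Then κ ≥ 0. -/

import Mathlib

open Set MeasureTheory
open scoped RealInnerProductSpace

noncomputable section

/-- The Laplacian of a real-valued function on Euclidean space, computed as the sum of
the second partial derivatives in the coordinate directions. -/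
def lapl {n : ℕ} (φ : EuclideanSpace ℝ (Fin n) → ℝ) (x : EuclideanSpace ℝ (Fin n)) : ℝ :=
  ∑ i : Fin n, fderiv ℝ (fun y => fderiv ℝ φ y (EuclideanSpace.single i 1)) x
    (EuclideanSpace.single i 1)

/-- The divergence of a vector field on Euclidean space. -/
def dvg {n : ℕ} (u : EuclideanSpace ℝ (Fin n) → EuclideanSpace ℝ (Fin n))
    (x : EuclideanSpace ℝ (Fin n)) : ℝ :=
  ∑ i : Fin n, fderiv ℝ (fun y => u y i) x (EuclideanSpace.single i 1)

/-- A classical solution of the explosion problem `-Δφ + ⟨u, ∇φ⟩ = λ g(φ)` in `Ω`,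
vanishing on `∂Ω`: `C²` in `Ω`, continuous on the closure of `Ω`. -/
def IsClassicalSol {n : ℕ} (Ω : Set (EuclideanSpace ℝ (Fin n)))
    (u : EuclideanSpace ℝ (Fin n) → EuclideanSpace ℝ (Fin n)) (g : ℝ → ℝ) (lam : ℝ)
    (φ : EuclideanSpace ℝ (Fin n) → ℝ) : Prop :=
  (∀ x ∈ Ω, ContDiffAt ℝ 2 φ x) ∧ ContinuousOn φ (closure Ω) ∧
  (∀ x ∈ Ω, -lapl φ x + ⟪u x, gradient φ x⟫ = lam * g (φ x)) ∧
  (∀ x ∈ frontier Ω, φ x = 0)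

/-- A nonnegative classical solution. -/
def IsNonnegSol {n : ℕ} (Ω : Set (EuclideanSpace ℝ (Fin n)))
    (u : EuclideanSpace ℝ (Fin n) → EuclideanSpace ℝ (Fin n)) (g : ℝ → ℝ) (lam : ℝ)
    (φ : EuclideanSpace ℝ (Fin n) → ℝ) : Prop :=
  IsClassicalSol Ω u g lam φ ∧ ∀ x ∈ Ω, 0 ≤ φ x

/-- A minimal nonnegative classical solution: one that lies below every nonnegative
classical solution at the same parameter. -/
def IsMinimalSol {n : ℕ} (Ω : Set (EuclideanSpace ℝ (Fin n)))
    (u : EuclideanSpace ℝ (Fin n) → EuclideanSpace ℝ (Fin n)) (g : ℝ → ℝ) (lam : ℝ)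
    (φ : EuclideanSpace ℝ (Fin n) → ℝ) : Prop :=
  IsNonnegSol Ω u g lam φ ∧ ∀ v, IsNonnegSol Ω u g lam v → ∀ x ∈ Ω, φ x ≤ v x

/-!
If `κ < 0`, then for small `ε > 0` the function `w = φ - ε ψ` is a supersolution: writing
`L = -Δ + ⟨u, ∇ ·⟩`, one has `L w = λ g(φ) - ε (λ g'(φ) + κ) ψ`, which is positive since `g(0) > 0`,
so `w ≥ 0` by the minimum principle, and which is at least `λ g(w)` because `-κ ε ψ` absorbs the
error of the first-order expansion of `g` at `φ`. A classical solution `v` with `0 ≤ v ≤ w` then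
lies below `φ`, strictly wherever `ψ > 0`, which contradicts minimality.

The solution `v` is the limit of the monotone iteration `L vₖ₊₁ = λ g(vₖ)`, `v₀ = 0`, for weak
solutions in `L²`. A linear equation `L v = f` with `0 ≤ f ≤ F` is solved between `0` and a given
nonnegative solution `W` of `L W = F` by the Hahn–Banach theorem: Kato's inequality gives
`∫ f ζ ≤ ∫ W (L* ζ)⁺` for test functions `ζ`, so that `L* ζ ↦ ∫ f ζ` is dominated by a sublinear
functional. Each step of the iteration adds to `vₖ` a weak solution below `w - vₖ`.

As `v` is bounded, a dyadic decomposition of localised Newtonian potentials shows that it is Hölder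
continuous, then `C¹`, then `C²`. No regularity of `∂Ω` enters, since the boundary values of `v` are
squeezed between `0` and those of `w`.
-/

namespace ExplosionProblem

open Filter Topology TopologicalSpace
open scoped ContDiff Distributions ENNReal

/-- Euclidean `n`-space. -/
abbrev Euc (n : ℕ) : Type := EuclideanSpace ℝ (Fin n)

/-- The partial derivative in the `i`-th coordinate direction; it is `0` where `f` is not
differentiable. -/
def pderiv {n : ℕ} (i : Fin n) (f : Euc n → ℝ) (x : Euc n) : ℝ :=
  fderiv ℝ f x (EuclideanSpace.single i 1)

section Calculus

variable {n : ℕ} {a b f : Euc n → ℝ} {x : Euc n} {k m : WithTop ℕ∞} {Ω : Opens (Euc n)}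

theorem lapl_eq_sum_pderiv (f : Euc n → ℝ) : lapl f = fun x ↦ ∑ i, pderiv i (pderiv i f) x := rfl

theorem fderiv_apply_eq_sum (f : Euc n → ℝ) (x v : Euc n) :
    fderiv ℝ f x v = ∑ i, v i * pderiv i f x := by
  conv_lhs => rw [← (EuclideanSpace.basisFun (Fin n) ℝ).sum_repr v]
  simp [pderiv]

theorem inner_gradient (f : Euc n → ℝ) (x v : Euc n) :
    ⟪v, gradient f x⟫ = ∑ i, v i * pderiv i f x := by
  rw [← fderiv_apply_eq_sum, real_inner_comm, gradient, InnerProductSpace.toDual_symm_apply]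

theorem pderiv_add (ha : DifferentiableAt ℝ a x) (hb : DifferentiableAt ℝ b x) (i : Fin n) :
    pderiv i (a + b) x = pderiv i a x + pderiv i b x := by
  simp only [pderiv, fderiv_add ha hb, add_apply]

theorem pderiv_const_smul (c : ℝ) (f : Euc n → ℝ) (i : Fin n) :
    pderiv i (c • f) = c • pderiv i f := by
  ext x
  simp only [pderiv, fderiv_const_smul_field, Pi.smul_apply, FunLike.coe_smul]

theorem pderiv_mul (ha : DifferentiableAt ℝ a x) (hb : DifferentiableAt ℝ b x) (i : Fin n) :
    pderiv i (fun y ↦ a y * b y) x = a x * pderiv i b x + pderiv i a x * b x := by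
  simp only [pderiv, fderiv_fun_mul ha hb, add_apply, FunLike.coe_smul,
    Pi.smul_apply, smul_eq_mul, mul_comm]

theorem pderiv_comp {J : ℝ → ℝ} (hJ : DifferentiableAt ℝ J (f x)) (hf : DifferentiableAt ℝ f x)
    (i : Fin n) : pderiv i (J ∘ f) x = deriv J (f x) * pderiv i f x := by
  have := (hJ.hasDerivAt.comp_hasFDerivAt x hf.hasFDerivAt).fderiv
  simp only [pderiv, Function.comp_def] at this ⊢
  rw [this, FunLike.coe_smul, Pi.smul_apply, smul_eq_mul]

theorem contDiff_pderiv (hf : ContDiff ℝ k f) (h : m + 1 ≤ k) (i : Fin n) :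
    ContDiff ℝ m (pderiv i f) :=
  (hf.fderiv_right h).clm_apply contDiff_const

theorem contDiffOn_pderiv (hf : ContDiffOn ℝ k f Ω) (h : m + 1 ≤ k) (i : Fin n) :
    ContDiffOn ℝ m (pderiv i f) Ω :=
  (hf.fderiv_of_isOpen Ω.isOpen h).clm_apply contDiffOn_const

theorem continuous_pderiv (hf : ContDiff ℝ 1 f) (i : Fin n) : Continuous (pderiv i f) :=
  (contDiff_pderiv (m := 0) hf (by norm_num) i).continuous

theorem continuousOn_pderiv (hf : ContDiffOn ℝ 1 f Ω) (i : Fin n) :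
    ContinuousOn (pderiv i f) Ω :=
  (contDiffOn_pderiv (m := 0) hf (by norm_num) i).continuousOn

theorem tsupport_pderiv_subset (f : Euc n → ℝ) (i : Fin n) :
    tsupport (pderiv i f) ⊆ tsupport f :=
  tsupport_fderiv_apply_subset ℝ _

theorem hasCompactSupport_pderiv (hf : HasCompactSupport f) (i : Fin n) :
    HasCompactSupport (pderiv i f) :=
  hf.mono' ((subset_tsupport _).trans (tsupport_pderiv_subset f i))

theorem continuous_lapl (hf : ContDiff ℝ 2 f) : Continuous (lapl f) :=
  continuous_finsetSum _ fun i _ ↦ continuous_pderiv (contDiff_pderiv hf (by norm_num) i) i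

theorem continuousOn_lapl (hf : ContDiffOn ℝ 2 f Ω) : ContinuousOn (lapl f) Ω :=
  continuousOn_finsetSum _ fun i _ ↦ continuousOn_pderiv (contDiffOn_pderiv hf (by norm_num) i) i

theorem lapl_eq_zero_of_notMem_tsupport (hx : x ∉ tsupport f) : lapl f x = 0 :=
  Finset.sum_eq_zero fun i _ ↦ image_eq_zero_of_notMem_tsupport (f := pderiv i (pderiv i f))
    fun h ↦ hx (tsupport_pderiv_subset f i (tsupport_pderiv_subset _ i h))

theorem tsupport_lapl_subset (f : Euc n → ℝ) : tsupport (lapl f) ⊆ tsupport f :=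
  closure_minimal (fun _ hx ↦ by_contra fun h ↦ hx (lapl_eq_zero_of_notMem_tsupport h))
    (isClosed_tsupport f)

theorem hasCompactSupport_lapl (hf : HasCompactSupport f) : HasCompactSupport (lapl f) :=
  hf.mono' ((subset_tsupport _).trans (tsupport_lapl_subset f))

theorem lapl_add (ha : ContDiffAt ℝ 2 a x) (hb : ContDiffAt ℝ 2 b x) :
    lapl (a + b) x = lapl a x + lapl b x := by
  simp only [lapl_eq_sum_pderiv, ← Finset.sum_add_distrib]
  refine Finset.sum_congr rfl fun i _ ↦ ?_
  have hadd : pderiv i (a + b) =ᶠ[𝓝 x] pderiv i a + pderiv i b := by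
    filter_upwards [ha.eventually (by simp), hb.eventually (by simp)] with y hya hyb
    exact pderiv_add (hya.differentiableAt (by norm_num)) (hyb.differentiableAt (by norm_num)) i
  have hdiff : ∀ {c : Euc n → ℝ}, ContDiffAt ℝ 2 c x → DifferentiableAt ℝ (pderiv i c) x :=
    fun hc ↦ ((hc.fderiv_right (m := 1) (by norm_num)).clm_apply
      contDiffAt_const).differentiableAt (by norm_num)
  rw [← pderiv_add (hdiff ha) (hdiff hb), pderiv, hadd.fderiv_eq, ← pderiv]

theorem lapl_const_smul (c : ℝ) (f : Euc n → ℝ) : lapl (c • f) = c • lapl f := by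
  ext x
  simp only [lapl_eq_sum_pderiv, pderiv_const_smul, Pi.smul_apply, Finset.smul_sum]

theorem lapl_mul (ha : ContDiff ℝ 2 a) (hb : ContDiff ℝ 2 b) (x : Euc n) :
    lapl (fun y ↦ a y * b y) x =
      a x * lapl b x + 2 * ∑ i, pderiv i a x * pderiv i b x + lapl a x * b x := by
  have hda := ha.differentiable (by norm_num)
  have hdb := hb.differentiable (by norm_num)
  have hdp : ∀ {c : Euc n → ℝ}, ContDiff ℝ 2 c → ∀ i, Differentiable ℝ (pderiv i c) :=
    fun hc i ↦ (contDiff_pderiv (m := 1) hc (by norm_num) i).differentiable (by norm_num)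
  simp only [lapl_eq_sum_pderiv, Finset.mul_sum, Finset.sum_mul, ← Finset.sum_add_distrib]
  refine Finset.sum_congr rfl fun i _ ↦ ?_
  have hmul : pderiv i (fun y ↦ a y * b y) =
      (fun y ↦ a y * pderiv i b y) + fun y ↦ pderiv i a y * b y :=
    funext fun y ↦ pderiv_mul (hda y) (hdb y) i
  rw [hmul, pderiv_add ((hda x).fun_mul (hdp hb i x)) ((hdp ha i x).fun_mul (hdb x)),
    pderiv_mul (hda x) (hdp hb i x), pderiv_mul (hdp ha i x) (hdb x)]
  ring

theorem lapl_comp {J : ℝ → ℝ} (hJ : ContDiff ℝ 2 J) (hf : ContDiff ℝ 2 f) (x : Euc n) :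
    lapl (J ∘ f) x =
      deriv J (f x) * lapl f x + deriv (deriv J) (f x) * ∑ i, pderiv i f x ^ 2 := by
  have hdJ : Differentiable ℝ J := hJ.differentiable (by norm_num)
  have hdJ' : Differentiable ℝ (deriv J) :=
    ((contDiff_succ_iff_deriv (n := 1)).1 hJ).2.2.differentiable (by norm_num)
  have hdf : Differentiable ℝ f := hf.differentiable (by norm_num)
  simp only [lapl_eq_sum_pderiv, Finset.mul_sum, ← Finset.sum_add_distrib]
  refine Finset.sum_congr rfl fun i _ ↦ ?_
  have hcomp : pderiv i (J ∘ f) = fun y ↦ deriv J (f y) * pderiv i f y :=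
    funext fun y ↦ pderiv_comp (hdJ _) (hdf y) i
  rw [hcomp, pderiv_mul ((hdJ' _).fun_comp' x (hdf x))
    ((contDiff_pderiv (m := 1) hf (by norm_num) i).differentiable (by norm_num) x),
    show (pderiv i fun y ↦ deriv J (f y)) x = deriv (deriv J) (f x) * pderiv i f x from
      pderiv_comp (hdJ' _) (hdf x) i]
  ring

end Calculus

section IntegrationByParts

variable {n : ℕ} {a b f : Euc n → ℝ} {Ω : Opens (Euc n)}

theorem continuous_mul_of_tsupport_subset (ha : ContinuousOn a Ω) (hb : Continuous b)
    (hs : tsupport b ⊆ Ω) : Continuous fun x ↦ a x * b x :=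
  (ha.mul hb.continuousOn).continuous_of_tsupport_subset Ω.isOpen
    ((tsupport_mul_subset_right).trans hs)

theorem integrable_mul_of_hasCompactSupport (hf : LocallyIntegrableOn f Ω) (hb : Continuous b)
    (hc : HasCompactSupport b) (hs : tsupport b ⊆ Ω) : Integrable fun x ↦ f x * b x := by
  rw [← integrableOn_iff_integrable_of_support_subset (s := tsupport b)]
  · exact (hf.integrableOn_compact_subset hs hc).mul_continuousOn hb.continuousOn hc
  · exact (Function.support_mul_subset_right f b).trans (subset_tsupport b)

theorem integral_mul_pderiv_add (ha : ContDiffOn ℝ 1 a Ω) (hb : ContDiff ℝ 1 b)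
    (hc : HasCompactSupport b) (hs : tsupport b ⊆ Ω) (i : Fin n) :
    Integrable (fun x ↦ a x * pderiv i b x + pderiv i a x * b x) ∧
      ∫ x, (a x * pderiv i b x + pderiv i a x * b x) = 0 := by
  have hΩ := Ω.isOpen.measurableSet
  have ha₀ := ha.continuousOn.locallyIntegrableOn (μ := volume) hΩ
  have ha₁ := (continuousOn_pderiv ha i).locallyIntegrableOn (μ := volume) hΩ
  have hab₁ : Integrable fun x ↦ a x * pderiv i b x :=
    integrable_mul_of_hasCompactSupport ha₀ (continuous_pderiv hb i)
      (hc.mono' ((subset_tsupport _).trans (tsupport_pderiv_subset b i)))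
      ((tsupport_pderiv_subset b i).trans hs)
  have ha₁b := integrable_mul_of_hasCompactSupport ha₁ hb.continuous hc hs
  refine ⟨hab₁.add ha₁b, ?_⟩
  rw [integral_add hab₁ ha₁b, add_eq_zero_iff_eq_neg]
  refine integral_mul_fderiv_eq_neg_fderiv_mul_of_integrable ha₁b hab₁
    (integrable_mul_of_hasCompactSupport ha₀ hb.continuous hc hs) (fun x hx ↦ ?_)
    fun x _ ↦ hb.differentiable (by norm_num) x
  exact (ha.contDiffAt (Ω.isOpen.mem_nhds (hs hx))).differentiableAt (by norm_num)

end IntegrationByParts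

section WeakFormulations

variable {n : ℕ} {Ω : Opens (Euc n)} {u : Euc n → Euc n} {v v' w f f' q₀ q₀' : Euc n → ℝ}
  {q q' : Fin n → Euc n → ℝ}

/-- The formal adjoint `-Δζ - div (ζ u)` of the operator `-Δ + u · ∇`. -/
def adjointOp (u : Euc n → Euc n) (ζ : Euc n → ℝ) (x : Euc n) : ℝ :=
  -lapl ζ x - (dvg u x * ζ x + ∑ i, u x i * pderiv i ζ x)

/-- `v` is a weak solution of `-Δv + u · ∇v = f` in `Ω`. -/
def IsWeakSol (Ω : Opens (Euc n)) (u : Euc n → Euc n) (v f : Euc n → ℝ) : Prop :=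
  ∀ ζ : 𝓓^{2}(Ω, ℝ), ∫ x, v x * adjointOp u ζ x = ∫ x, f x * ζ x

/-- `Δv = q₀ + ∑ i, ∂ᵢ (q i)` in `Ω`, in the sense of distributions. The functions are meant to be
locally integrable; all terms stand under one integral so that pointwise identities between
integrands suffice to compare two such equations. -/
def HasWeakLapl (Ω : Opens (Euc n)) (v q₀ : Euc n → ℝ) (q : Fin n → Euc n → ℝ) : Prop :=
  ∀ ζ : 𝓓^{2}(Ω, ℝ), ∫ x, (v x * lapl ζ x - q₀ x * ζ x + ∑ i, q i x * pderiv i ζ x) = 0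

theorem contDiffOn_coord (hu : ContDiffOn ℝ 1 u Ω) (i : Fin n) :
    ContDiffOn ℝ 1 (fun x ↦ u x i) Ω :=
  contDiffOn_euclidean.1 hu i

theorem continuousOn_dvg (hu : ContDiffOn ℝ 1 u Ω) : ContinuousOn (dvg u) Ω :=
  continuousOn_finsetSum _ fun i _ ↦ continuousOn_pderiv (contDiffOn_coord hu i) i

theorem adjointOp_eq_zero_of_notMem_tsupport {ζ : Euc n → ℝ} {x : Euc n} (hx : x ∉ tsupport ζ) :
    adjointOp u ζ x = 0 := by
  have hpderiv : ∀ i, pderiv i ζ x = 0 := fun i ↦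
    image_eq_zero_of_notMem_tsupport fun h ↦ hx (tsupport_pderiv_subset ζ i h)
  simp [adjointOp, lapl_eq_zero_of_notMem_tsupport hx, image_eq_zero_of_notMem_tsupport hx, hpderiv]

theorem tsupport_adjointOp_subset (u : Euc n → Euc n) (ζ : Euc n → ℝ) :
    tsupport (adjointOp u ζ) ⊆ tsupport ζ :=
  closure_minimal (fun _ hx ↦ by_contra fun h ↦ hx (adjointOp_eq_zero_of_notMem_tsupport h))
    (isClosed_tsupport ζ)

theorem hasCompactSupport_adjointOp (u : Euc n → Euc n) (ζ : 𝓓^{2}(Ω, ℝ)) :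
    HasCompactSupport (adjointOp u ζ) :=
  ζ.hasCompactSupport.mono' ((subset_tsupport _).trans (tsupport_adjointOp_subset u ζ))

theorem continuous_adjointOp (hu : ContDiffOn ℝ 1 u Ω) (ζ : 𝓓^{2}(Ω, ℝ)) :
    Continuous (adjointOp u ζ) := by
  refine (continuous_lapl ζ.contDiff).neg.sub ((continuous_mul_of_tsupport_subset
    (continuousOn_dvg hu) ζ.continuous ζ.tsupport_subset).add
    (continuous_finsetSum _ fun i _ ↦ ?_))
  exact continuous_mul_of_tsupport_subset (contDiffOn_coord hu i).continuousOn
    (continuous_pderiv (ζ.contDiff.of_le (by norm_num)) i)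
    ((tsupport_pderiv_subset ζ i).trans ζ.tsupport_subset)

theorem adjointOp_add {ζ η : Euc n → ℝ} (hζ : ContDiff ℝ 2 ζ) (hη : ContDiff ℝ 2 η) :
    adjointOp u (ζ + η) = adjointOp u ζ + adjointOp u η := by
  ext x
  have hpderiv : ∀ i, pderiv i (ζ + η) x = pderiv i ζ x + pderiv i η x := fun i ↦
    pderiv_add (hζ.differentiable (by norm_num) x) (hη.differentiable (by norm_num) x) i
  simp only [adjointOp, lapl_add hζ.contDiffAt hη.contDiffAt, hpderiv, mul_add,
    Finset.sum_add_distrib, Pi.add_apply]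
  ring

theorem adjointOp_const_smul (c : ℝ) (ζ : Euc n → ℝ) :
    adjointOp u (c • ζ) = c • adjointOp u ζ := by
  ext x
  simp only [adjointOp, lapl_const_smul, pderiv_const_smul, Pi.smul_apply, smul_eq_mul,
    mul_left_comm _ c, ← Finset.mul_sum]
  ring

theorem integrable_mul_testFunction (hf : LocallyIntegrableOn f Ω) (ζ : 𝓓^{2}(Ω, ℝ)) :
    Integrable fun x ↦ f x * ζ x :=
  integrable_mul_of_hasCompactSupport hf ζ.continuous ζ.hasCompactSupport ζ.tsupport_subset

theorem integrable_mul_adjointOp (hu : ContDiffOn ℝ 1 u Ω) (hv : LocallyIntegrableOn v Ω)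
    (ζ : 𝓓^{2}(Ω, ℝ)) : Integrable fun x ↦ v x * adjointOp u ζ x :=
  integrable_mul_of_hasCompactSupport hv (continuous_adjointOp hu ζ)
    (hasCompactSupport_adjointOp u ζ) ((tsupport_adjointOp_subset u ζ).trans ζ.tsupport_subset)

theorem IsWeakSol.congr (h : IsWeakSol Ω u v f) (hv : v =ᵐ[volume.restrict Ω] v')
    (hf : f =ᵐ[volume.restrict Ω] f') : IsWeakSol Ω u v' f' := by
  intro ζ
  have hζ {x : Euc n} (hx : x ∉ (Ω : Set (Euc n))) : x ∉ tsupport ζ :=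
    fun h ↦ hx (ζ.tsupport_subset h)
  have hleft : ∫ x, v' x * adjointOp u ζ x = ∫ x, v x * adjointOp u ζ x := by
    refine integral_congr_ae ?_
    filter_upwards [(ae_restrict_iff' Ω.isOpen.measurableSet).1 hv] with x hx
    by_cases hxΩ : x ∈ (Ω : Set (Euc n))
    · rw [hx hxΩ]
    · rw [adjointOp_eq_zero_of_notMem_tsupport (hζ hxΩ), mul_zero, mul_zero]
  rw [hleft, h ζ]
  refine integral_congr_ae ?_
  filter_upwards [(ae_restrict_iff' Ω.isOpen.measurableSet).1 hf] with x hx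
  by_cases hxΩ : x ∈ (Ω : Set (Euc n))
  · rw [hx hxΩ]
  · rw [image_eq_zero_of_notMem_tsupport (hζ hxΩ), mul_zero, mul_zero]

theorem HasWeakLapl.congr (h : HasWeakLapl Ω v q₀ q) (hv : v =ᵐ[volume.restrict Ω] v')
    (hq₀ : q₀ =ᵐ[volume.restrict Ω] q₀') (hq : ∀ i, q i =ᵐ[volume.restrict Ω] q' i) :
    HasWeakLapl Ω v' q₀' q' := by
  intro ζ
  rw [← h ζ]
  refine integral_congr_ae ?_
  have hΩ := Ω.isOpen.measurableSet
  filter_upwards [(ae_restrict_iff' hΩ).1 hv, (ae_restrict_iff' hΩ).1 hq₀,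
    (ae_restrict_iff' hΩ).1 (ae_all_iff.2 hq)] with x hvx hq₀x hqx
  by_cases hx : x ∈ (Ω : Set (Euc n))
  · simp only [hvx hx, hq₀x hx, hqx hx]
  · have hx' : x ∉ tsupport ζ := fun h ↦ hx (ζ.tsupport_subset h)
    have hpderiv : ∀ i, pderiv i ζ x = 0 := fun i ↦
      image_eq_zero_of_notMem_tsupport fun h ↦ hx' (tsupport_pderiv_subset ζ i h)
    simp [lapl_eq_zero_of_notMem_tsupport hx', image_eq_zero_of_notMem_tsupport hx', hpderiv]

theorem isWeakSol_iff_hasWeakLapl (hu : ContDiffOn ℝ 1 u Ω) (hv : LocallyIntegrableOn v Ω)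
    (hf : LocallyIntegrableOn f Ω) :
    IsWeakSol Ω u v f ↔
      HasWeakLapl Ω v (fun x ↦ -f x - dvg u x * v x) (fun i x ↦ u x i * v x) := by
  refine forall_congr' fun ζ ↦ ?_
  have hintegrand : ∀ x, v x * lapl ζ x - (-f x - dvg u x * v x) * ζ x +
      ∑ i, u x i * v x * pderiv i ζ x = f x * ζ x - v x * adjointOp u ζ x := by
    intro x
    simp only [adjointOp, mul_comm _ (v x), mul_assoc, ← Finset.mul_sum]
    ring
  simp_rw [hintegrand]
  rw [integral_sub (integrable_mul_testFunction hf ζ) (integrable_mul_adjointOp hu hv ζ),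
    sub_eq_zero, eq_comm]

theorem integral_add_of_integral_eq_zero {α : Type*} [MeasurableSpace α] {μ : Measure α}
    {F G : α → ℝ} (hG : Integrable G μ) (hG₀ : ∫ x, G x ∂μ = 0) :
    ∫ x, (F x + G x) ∂μ = ∫ x, F x ∂μ := by
  by_cases hF : Integrable F μ
  · rw [integral_add hF hG, hG₀, add_zero]
  · rw [integral_undef hF, integral_undef (f := fun x ↦ F x + G x) fun h ↦
      hF ((integrable_add_iff_integrable_left hG).1 h)]

theorem hasWeakLapl_iff_absorb_divergence (hq : ∀ i, ContDiffOn ℝ 1 (q i) Ω) :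
    HasWeakLapl Ω v q₀ q ↔ HasWeakLapl Ω v (fun x ↦ q₀ x + ∑ i, pderiv i (q i) x) 0 := by
  refine forall_congr' fun ζ ↦ ?_
  have hibp := fun i ↦ integral_mul_pderiv_add (hq i) (ζ.contDiff.of_le (by norm_num))
    ζ.hasCompactSupport ζ.tsupport_subset i
  have hintegrand : ∀ x, v x * lapl ζ x - q₀ x * ζ x + ∑ i, q i x * pderiv i ζ x =
      v x * lapl ζ x - (q₀ x + ∑ i, pderiv i (q i) x) * ζ x +
          ∑ i, (0 : Fin n → Euc n → ℝ) i x * pderiv i ζ x +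
        ∑ i, (q i x * pderiv i ζ x + pderiv i (q i) x * ζ x) := by
    intro x
    simp only [Pi.zero_apply, zero_mul, Finset.sum_const_zero, Finset.sum_add_distrib,
      ← Finset.sum_mul]
    ring
  simp_rw [hintegrand]
  rw [integral_add_of_integral_eq_zero (integrable_finsetSum _ fun i _ ↦ (hibp i).1)]
  rw [integral_finsetSum _ fun i _ ↦ (hibp i).1]
  exact Finset.sum_eq_zero fun i _ ↦ (hibp i).2

theorem hasWeakLapl_of_contDiffOn (hv : ContDiffOn ℝ 2 v Ω) : HasWeakLapl Ω v (lapl v) 0 := by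
  have hgrad : HasWeakLapl Ω v 0 (fun i ↦ pderiv i v) := by
    intro ζ
    have hibp := fun i ↦ integral_mul_pderiv_add (hv.of_le (by norm_num))
      (contDiff_pderiv (m := 1) ζ.contDiff (by norm_num) i)
      (hasCompactSupport_pderiv ζ.hasCompactSupport i)
      ((tsupport_pderiv_subset ζ i).trans ζ.tsupport_subset) i
    simp only [lapl_eq_sum_pderiv, Pi.zero_apply, zero_mul, sub_zero, Finset.mul_sum,
      ← Finset.sum_add_distrib]
    rw [integral_finsetSum _ fun i _ ↦ (hibp i).1]
    exact Finset.sum_eq_zero fun i _ ↦ (hibp i).2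
  have := (hasWeakLapl_iff_absorb_divergence fun i ↦
    contDiffOn_pderiv hv (by norm_num) i).1 hgrad
  simpa only [Pi.zero_apply, zero_add, ← lapl_eq_sum_pderiv] using this

theorem isWeakSol_iff_of_contDiffOn (hu : ContDiffOn ℝ 1 u Ω) (hv : ContDiffOn ℝ 1 v Ω)
    (hf : LocallyIntegrableOn f Ω) :
    IsWeakSol Ω u v f ↔ HasWeakLapl Ω v (fun x ↦ ⟪u x, gradient v x⟫ - f x) 0 := by
  rw [isWeakSol_iff_hasWeakLapl hu
      (hv.continuousOn.locallyIntegrableOn Ω.isOpen.measurableSet) hf,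
    hasWeakLapl_iff_absorb_divergence fun i ↦ (contDiffOn_coord hu i).mul hv]
  have hq₀ : (fun x ↦ -f x - dvg u x * v x + ∑ i, pderiv i (fun x ↦ u x i * v x) x)
      =ᵐ[volume.restrict Ω] fun x ↦ ⟪u x, gradient v x⟫ - f x := by
    filter_upwards [ae_restrict_mem Ω.isOpen.measurableSet] with x hx
    have hdiff : ∀ {a : Euc n → ℝ}, ContDiffOn ℝ 1 a Ω → DifferentiableAt ℝ a x := fun ha ↦
      (ha.contDiffAt (Ω.isOpen.mem_nhds hx)).differentiableAt (by norm_num)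
    have hmul : ∀ i, pderiv i (fun x ↦ u x i * v x) x =
        u x i * pderiv i v x + pderiv i (fun x ↦ u x i) x * v x := fun i ↦
      pderiv_mul (hdiff (contDiffOn_coord hu i)) (hdiff hv) i
    have hdvg : dvg u x = ∑ i, pderiv i (fun x ↦ u x i) x := rfl
    simp only [hmul, hdvg, Finset.sum_add_distrib, ← Finset.sum_mul, inner_gradient]
    ring
  exact ⟨fun h ↦ h.congr .rfl hq₀ fun _ ↦ .rfl, fun h ↦ h.congr .rfl hq₀.symm fun _ ↦ .rfl⟩

theorem continuousOn_inner_gradient (hu : ContDiffOn ℝ 1 u Ω) (hv : ContDiffOn ℝ 1 v Ω) :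
    ContinuousOn (fun x ↦ ⟪u x, gradient v x⟫) Ω := by
  simp only [inner_gradient]
  exact continuousOn_finsetSum _ fun i _ ↦
    (contDiffOn_coord hu i).continuousOn.mul (continuousOn_pderiv hv i)

theorem isWeakSol_of_contDiffOn (hu : ContDiffOn ℝ 1 u Ω) (hw : ContDiffOn ℝ 2 w Ω) :
    IsWeakSol Ω u w fun x ↦ -lapl w x + ⟪u x, gradient w x⟫ := by
  have hw₁ : ContDiffOn ℝ 1 w Ω := hw.of_le (by norm_num)
  refine (isWeakSol_iff_of_contDiffOn hu hw₁ (((continuousOn_lapl hw).neg.add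
    (continuousOn_inner_gradient hu hw₁)).locallyIntegrableOn Ω.isOpen.measurableSet)).2 ?_
  convert hasWeakLapl_of_contDiffOn hw using 2 with x
  simp only [Pi.add_apply, Pi.neg_apply]
  ring

theorem eqOn_of_hasWeakLapl (h : HasWeakLapl Ω v q₀ 0) (h' : HasWeakLapl Ω v q₀' 0)
    (hv : LocallyIntegrableOn v Ω) (hq₀ : ContinuousOn q₀ Ω) (hq₀' : ContinuousOn q₀' Ω) :
    EqOn q₀ q₀' Ω := by
  have hΩ := Ω.isOpen.measurableSet
  refine Measure.eqOn_open_of_ae_eq (μ := volume) ((ae_restrict_iff' hΩ).2 ?_) Ω.isOpen hq₀ hq₀'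
  have hdiff : ∀ᵐ x, x ∈ (Ω : Set (Euc n)) → q₀ x - q₀' x = 0 := by
    refine Ω.isOpen.ae_eq_zero_of_integral_contDiff_smul_eq_zero
      ((hq₀.sub hq₀').locallyIntegrableOn hΩ) fun η hη hηc hηs ↦ ?_
    let ζ : 𝓓^{2}(Ω, ℝ) := ⟨η, hη.of_le (by norm_cast), hηc, hηs⟩
    have hlapl : Integrable fun x ↦ v x * lapl η x :=
      integrable_mul_of_hasCompactSupport hv (continuous_lapl ζ.contDiff)
        (hasCompactSupport_lapl hηc) ((tsupport_lapl_subset η).trans hηs)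
    have hint : ∀ {p : Euc n → ℝ}, ContinuousOn p Ω → Integrable fun x ↦ p x * η x := fun hp ↦
      integrable_mul_testFunction (hp.locallyIntegrableOn hΩ) ζ
    have hweak : ∀ {p : Euc n → ℝ}, ContinuousOn p Ω → HasWeakLapl Ω v p 0 →
        ∫ x, p x * η x = ∫ x, v x * lapl η x := fun hp h ↦ by
      have hζ := h ζ
      simp only [Pi.zero_apply, zero_mul, Finset.sum_const_zero, add_zero] at hζ
      exact (sub_eq_zero.1 ((integral_sub hlapl (hint hp)).symm.trans hζ)).symm
    simp only [smul_eq_mul, mul_comm (η _), sub_mul]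
    rw [integral_sub (hint hq₀) (hint hq₀'), hweak hq₀ h, hweak hq₀' h', sub_self]
  filter_upwards [hdiff] with x hx hxΩ using sub_eq_zero.1 (hx hxΩ)

end WeakFormulations

section SmoothPositivePart

variable {ε : ℝ}

/-- A smooth convex approximation of `s ↦ max s 0`, normalised to vanish at `0` so that composing
with it preserves test functions. -/
def smoothPos (ε s : ℝ) : ℝ := (√(s ^ 2 + ε ^ 2) + s - ε) / 2

theorem sq_add_sq_pos (hε : 0 < ε) (s : ℝ) : 0 < s ^ 2 + ε ^ 2 := by positivity

theorem abs_le_sqrt_sq_add_sq (ε s : ℝ) : |s| ≤ √(s ^ 2 + ε ^ 2) :=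
  Real.abs_le_sqrt (le_add_of_nonneg_right (sq_nonneg ε))

theorem contDiff_smoothPos (hε : 0 < ε) : ContDiff ℝ 2 (smoothPos ε) := by
  have hsqrt : ContDiff ℝ 2 fun s : ℝ ↦ √(s ^ 2 + ε ^ 2) :=
    ContDiff.sqrt (by fun_prop) fun s ↦ (sq_add_sq_pos hε s).ne'
  unfold smoothPos
  fun_prop

theorem smoothPos_zero (hε : 0 < ε) : smoothPos ε 0 = 0 := by
  simp [smoothPos, Real.sqrt_sq hε.le]

theorem hasDerivAt_sqrt_sq_add_sq (hε : 0 < ε) (s : ℝ) :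
    HasDerivAt (fun s ↦ √(s ^ 2 + ε ^ 2)) (s / √(s ^ 2 + ε ^ 2)) s := by
  have hpoly : HasDerivAt (fun s : ℝ ↦ s ^ 2 + ε ^ 2) (2 * s) s := by
    simpa using (hasDerivAt_pow 2 s).add_const (ε ^ 2)
  convert! hpoly.sqrt (sq_add_sq_pos hε s).ne' using 1
  rw [mul_div_mul_left _ _ two_ne_zero]

theorem deriv_smoothPos (hε : 0 < ε) :
    deriv (smoothPos ε) = fun s ↦ (s / √(s ^ 2 + ε ^ 2) + 1) / 2 :=
  funext fun s ↦
    ((((hasDerivAt_sqrt_sq_add_sq hε s).add (hasDerivAt_id s)).sub_const ε).div_const 2).deriv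

theorem deriv_smoothPos_mem_Icc (hε : 0 < ε) (s : ℝ) : deriv (smoothPos ε) s ∈ Icc 0 1 := by
  have hratio : |s / √(s ^ 2 + ε ^ 2)| ≤ 1 := by
    rw [abs_div, abs_of_nonneg (Real.sqrt_nonneg _)]
    exact div_le_one_of_le₀ (abs_le_sqrt_sq_add_sq ε s) (Real.sqrt_nonneg _)
  rw [deriv_smoothPos hε]
  constructor <;> linarith [abs_le.1 hratio]

theorem deriv_deriv_smoothPos_nonneg (hε : 0 < ε) (s : ℝ) :
    0 ≤ deriv (deriv (smoothPos ε)) s := by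
  have hQ : 0 < √(s ^ 2 + ε ^ 2) := Real.sqrt_pos.2 (sq_add_sq_pos hε s)
  have hderiv : HasDerivAt (fun s ↦ (s / √(s ^ 2 + ε ^ 2) + 1) / 2) _ s :=
    (((hasDerivAt_id s).div (hasDerivAt_sqrt_sq_add_sq hε s) hQ.ne').add_const 1).div_const 2
  rw [deriv_smoothPos hε, hderiv.deriv]
  have hle : s * (s / √(s ^ 2 + ε ^ 2)) ≤ √(s ^ 2 + ε ^ 2) := by
    rw [← mul_div_assoc, div_le_iff₀ hQ, Real.mul_self_sqrt (sq_add_sq_pos hε s).le, ← sq]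
    exact le_add_of_nonneg_right (sq_nonneg ε)
  simp only [id, one_mul]
  have := sub_nonneg.2 hle
  positivity

theorem posPart_le_smoothPos_add (ε s : ℝ) : s⁺ ≤ smoothPos ε s + ε / 2 := by
  have hposPart : s⁺ = (|s| + s) / 2 := by
    linarith [posPart_sub_negPart s, posPart_add_negPart s]
  rw [hposPart, smoothPos]
  linarith [abs_le_sqrt_sq_add_sq ε s]

theorem abs_deriv_smoothPos_mul_sub_le (hε : 0 < ε) (s : ℝ) :
    |deriv (smoothPos ε) s * s - smoothPos ε s| ≤ ε / 2 := by
  have hQ : 0 < √(s ^ 2 + ε ^ 2) := Real.sqrt_pos.2 (sq_add_sq_pos hε s)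
  have hεQ : ε ≤ √(s ^ 2 + ε ^ 2) :=
    Real.le_sqrt_of_sq_le (le_add_of_nonneg_left (sq_nonneg s))
  have hQsq : √(s ^ 2 + ε ^ 2) ^ 2 = s ^ 2 + ε ^ 2 := Real.sq_sqrt (sq_add_sq_pos hε s).le
  simp only [deriv_smoothPos hε, smoothPos]
  generalize √(s ^ 2 + ε ^ 2) = Q at *
  have hdiff : (s / Q + 1) / 2 * s - (Q + s - ε) / 2 = (ε - ε ^ 2 / Q) / 2 := by
    field_simp
    linear_combination -hQsq
  have hle : ε ^ 2 / Q ≤ ε := by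
    rw [div_le_iff₀ hQ, sq]
    gcongr
  have hnonneg : 0 ≤ ε ^ 2 / Q := by positivity
  rw [hdiff, abs_of_nonneg (by linarith)]
  linarith

end SmoothPositivePart

section Kato

variable {n : ℕ} {Ω : Opens (Euc n)} {u : Euc n → Euc n} {W F f : Euc n → ℝ} {ε : ℝ}

/-- The test function `smoothPos ε ∘ ζ`. -/
def smoothPosTest (hε : 0 < ε) (ζ : 𝓓^{2}(Ω, ℝ)) : 𝓓^{2}(Ω, ℝ) where
  toFun := smoothPos ε ∘ ζ
  contDiff' := (contDiff_smoothPos hε).comp ζ.contDiff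
  hasCompactSupport' := ζ.hasCompactSupport.comp_left (smoothPos_zero hε)
  tsupport_subset' := (tsupport_comp_subset (smoothPos_zero hε) ζ).trans ζ.tsupport_subset

theorem adjointOp_comp {J : ℝ → ℝ} {ζ : Euc n → ℝ} (hJ : ContDiff ℝ 2 J) (hζ : ContDiff ℝ 2 ζ)
    (x : Euc n) :
    adjointOp u (J ∘ ζ) x = deriv J (ζ x) * adjointOp u ζ x -
      deriv (deriv J) (ζ x) * ∑ i, pderiv i ζ x ^ 2 +
      (deriv J (ζ x) * ζ x - J (ζ x)) * dvg u x := by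
  have hpderiv : ∀ i, pderiv i (J ∘ ζ) x = deriv J (ζ x) * pderiv i ζ x := fun i ↦
    pderiv_comp (hJ.differentiable (by norm_num) _) (hζ.differentiable (by norm_num) x) i
  simp only [adjointOp, lapl_comp hJ hζ, hpderiv, Function.comp_apply, mul_left_comm _ (deriv J _),
    ← Finset.mul_sum]
  ring

theorem adjointOp_smoothPos_le (hε : 0 < ε) {ζ : Euc n → ℝ} (hζ : ContDiff ℝ 2 ζ) (x : Euc n) :
    adjointOp u (smoothPos ε ∘ ζ) x ≤ (adjointOp u ζ x)⁺ + ε / 2 * |dvg u x| := by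
  obtain ⟨h0, h1⟩ := deriv_smoothPos_mem_Icc hε (ζ x)
  have hconvex : 0 ≤ deriv (deriv (smoothPos ε)) (ζ x) * ∑ i, pderiv i ζ x ^ 2 :=
    mul_nonneg (deriv_deriv_smoothPos_nonneg hε _) (Finset.sum_nonneg fun i _ ↦ sq_nonneg _)
  have hdiv : (deriv (smoothPos ε) (ζ x) * ζ x - smoothPos ε (ζ x)) * dvg u x ≤
      ε / 2 * |dvg u x| := by
    refine (le_abs_self _).trans ?_
    rw [abs_mul]
    gcongr
    exact abs_deriv_smoothPos_mul_sub_le hε _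
  have hmain : deriv (smoothPos ε) (ζ x) * adjointOp u ζ x ≤ (adjointOp u ζ x)⁺ :=
    (mul_le_mul_of_nonneg_left (le_posPart _) h0).trans
      (mul_le_of_le_one_left (posPart_nonneg _) h1)
  rw [adjointOp_comp (contDiff_smoothPos hε) hζ]
  linarith

theorem integrable_mul_adjointOp_posPart (hu : ContDiffOn ℝ 1 u Ω)
    (hW : LocallyIntegrableOn W Ω) (ζ : 𝓓^{2}(Ω, ℝ)) :
    Integrable fun x ↦ W x * (adjointOp u ζ x)⁺ :=
  integrable_mul_of_hasCompactSupport hW (b := (·⁺) ∘ adjointOp u ζ)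
    ((continuous_adjointOp hu ζ).max continuous_const)
    ((hasCompactSupport_adjointOp u ζ).comp_left posPart_zero)
    ((tsupport_comp_subset posPart_zero _).trans
      ((tsupport_adjointOp_subset u ζ).trans ζ.tsupport_subset))

theorem mul_sub_mul_posPart_le (hε : 0 < ε) (ζ : 𝓓^{2}(Ω, ℝ)) (x : Euc n)
    (hW : x ∈ tsupport ζ → 0 ≤ W x) (hfF : x ∈ tsupport ζ → 0 ≤ f x ∧ f x ≤ F x) :
    f x * ζ x - W x * (adjointOp u ζ x)⁺ ≤
      F x * smoothPosTest hε ζ x - W x * adjointOp u (smoothPosTest hε ζ) x +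
        ε / 2 * (tsupport ζ).indicator (fun x ↦ F x + W x * |dvg u x|) x := by
  by_cases hx : x ∈ tsupport ζ
  · obtain ⟨hf, hfF⟩ := hfF hx
    have hf_le : f x * ζ x ≤ F x * (smoothPos ε (ζ x) + ε / 2) :=
      (mul_le_mul_of_nonneg_left (le_posPart _) hf).trans
        (mul_le_mul hfF (posPart_le_smoothPos_add ε _) (posPart_nonneg _) (hf.trans hfF))
    have hW_le :=
      mul_le_mul_of_nonneg_left (adjointOp_smoothPos_le (u := u) hε ζ.contDiff x) (hW hx)
    rw [indicator_of_mem hx]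
    change _ ≤ F x * smoothPos ε (ζ x) - W x * adjointOp u (smoothPos ε ∘ ζ) x + _
    linarith
  · have hη : x ∉ tsupport (smoothPosTest hε ζ) := fun h ↦
      hx (tsupport_comp_subset (smoothPos_zero hε) ζ h)
    simp [adjointOp_eq_zero_of_notMem_tsupport hx, adjointOp_eq_zero_of_notMem_tsupport hη,
      image_eq_zero_of_notMem_tsupport hx, image_eq_zero_of_notMem_tsupport hη, hx]

theorem IsWeakSol.integral_mul_le_add (hu : ContDiffOn ℝ 1 u Ω)
    (hW : LocallyIntegrableOn W Ω) (hF : LocallyIntegrableOn F Ω) (hf : LocallyIntegrableOn f Ω)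
    (hWF : IsWeakSol Ω u W F) (hW0 : ∀ᵐ x ∂volume.restrict Ω, 0 ≤ W x)
    (hfF : ∀ᵐ x ∂volume.restrict Ω, 0 ≤ f x ∧ f x ≤ F x) (ζ : 𝓓^{2}(Ω, ℝ)) (hε : 0 < ε) :
    ∫ x, f x * ζ x ≤ (∫ x, W x * (adjointOp u ζ x)⁺) +
      ε / 2 * ∫ x in tsupport ζ, (F x + W x * |dvg u x|) := by
  set η := smoothPosTest hε ζ
  set E : Euc n → ℝ := fun x ↦ F x + W x * |dvg u x|
  have hK : MeasurableSet (tsupport ζ) := (isClosed_tsupport ζ).measurableSet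
  have hE : IntegrableOn E (tsupport ζ) :=
    (hF.integrableOn_compact_subset ζ.tsupport_subset ζ.hasCompactSupport).add
      ((hW.integrableOn_compact_subset ζ.tsupport_subset ζ.hasCompactSupport).mul_continuousOn
        ((continuousOn_dvg hu).mono ζ.tsupport_subset).abs ζ.hasCompactSupport)
  have hEint := ((integrable_indicator_iff hK).2 hE).const_mul (ε / 2)
  have hFη := integrable_mul_testFunction hF η
  have hWη := integrable_mul_adjointOp hu hW η
  have hle : ∀ᵐ x, f x * ζ x - W x * (adjointOp u ζ x)⁺ ≤
      F x * η x - W x * adjointOp u η x + ε / 2 * (tsupport ζ).indicator E x := by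
    filter_upwards [(ae_restrict_iff' Ω.isOpen.measurableSet).1 hW0,
      (ae_restrict_iff' Ω.isOpen.measurableSet).1 hfF] with x hWx hfFx
    exact mul_sub_mul_posPart_le hε ζ x (fun hx ↦ hWx (ζ.tsupport_subset hx))
      (fun hx ↦ hfFx (ζ.tsupport_subset hx))
  have hint := integral_mono_ae ((integrable_mul_testFunction hf ζ).sub
    (integrable_mul_adjointOp_posPart hu hW ζ)) ((hFη.sub hWη).add hEint) hle
  simp only [Pi.sub_apply, Pi.add_apply] at hint
  rw [integral_sub (integrable_mul_testFunction hf ζ) (integrable_mul_adjointOp_posPart hu hW ζ),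
    integral_add (f := fun x ↦ F x * η x - W x * adjointOp u η x) (hFη.sub hWη) hEint,
    integral_sub hFη hWη, hWF η, sub_self, zero_add,
    integral_const_mul, integral_indicator hK] at hint
  linarith

/-- **Kato's inequality**: test the equation of `W` with `smoothPos ε ∘ ζ` and let `ε → 0`. -/
theorem IsWeakSol.integral_mul_le_integral_mul_posPart (hu : ContDiffOn ℝ 1 u Ω)
    (hW : LocallyIntegrableOn W Ω) (hF : LocallyIntegrableOn F Ω) (hf : LocallyIntegrableOn f Ω)
    (hWF : IsWeakSol Ω u W F) (hW0 : ∀ᵐ x ∂volume.restrict Ω, 0 ≤ W x)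
    (hfF : ∀ᵐ x ∂volume.restrict Ω, 0 ≤ f x ∧ f x ≤ F x) (ζ : 𝓓^{2}(Ω, ℝ)) :
    ∫ x, f x * ζ x ≤ ∫ x, W x * (adjointOp u ζ x)⁺ := by
  set C := ∫ x in tsupport ζ, (F x + W x * |dvg u x|)
  have hlim : Tendsto (fun ε : ℝ ↦ (∫ x, W x * (adjointOp u ζ x)⁺) + ε / 2 * C) (𝓝[>] 0)
      (𝓝 ((∫ x, W x * (adjointOp u ζ x)⁺) + 0 / 2 * C)) :=
    (Continuous.tendsto (by fun_prop) 0).mono_left nhdsWithin_le_nhds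
  rw [zero_div, zero_mul, add_zero] at hlim
  exact ge_of_tendsto hlim (eventually_mem_nhdsWithin.mono fun ε hε ↦
    hWF.integral_mul_le_add hu hW hF hf hW0 hfF ζ hε)

end Kato

section HahnBanach

theorem exists_comp_eq_of_le_sublinear {T V : Type*} [AddCommGroup T] [Module ℝ T]
    [AddCommGroup V] [Module ℝ V] (A : T →ₗ[ℝ] V) (l : T →ₗ[ℝ] ℝ) (p : V → ℝ)
    (hsmul : ∀ c : ℝ, 0 < c → ∀ x, p (c • x) = c * p x) (hadd : ∀ x y, p (x + y) ≤ p x + p y)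
    (hl : ∀ t, l t ≤ p (A t)) :
    ∃ L : V →ₗ[ℝ] ℝ, L ∘ₗ A = l ∧ ∀ x, L x ≤ p x := by
  have hp₀ : p 0 = 0 := by
    have := hsmul 2 two_pos 0
    rw [smul_zero] at this
    linarith
  have hker : l ∈ (LinearMap.ker A).dualAnnihilator := by
    refine (Submodule.mem_dualAnnihilator l).2 fun t (ht : A t = 0) ↦ le_antisymm ?_ ?_
    · simpa only [ht, hp₀] using hl t
    · simpa [ht, hp₀] using hl (-t)
  rw [← LinearMap.range_dualMap_eq_dualAnnihilator_ker] at hker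
  obtain ⟨m, rfl⟩ := hker
  obtain ⟨L, hL, hLp⟩ := exists_extension_of_le_sublinear (m.toPMap (LinearMap.range A)) p
    hsmul hadd (by rintro ⟨_, t, rfl⟩; exact hl t)
  exact ⟨L, LinearMap.ext fun t ↦ hL ⟨A t, t, rfl⟩, hLp⟩

end HahnBanach

section L2Lattice

variable {α : Type*} [MeasurableSpace α] {μ : Measure α} {f g : Lp ℝ 2 μ}

theorem L2_inner_nonneg (hf : 0 ≤ f) (hg : 0 ≤ g) : 0 ≤ ⟪f, g⟫ := by
  rw [L2.inner_def]
  refine integral_nonneg_of_ae ?_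
  filter_upwards [(Lp.coeFn_nonneg f).2 hf, (Lp.coeFn_nonneg g).2 hg] with x hfx hgx
  exact mul_nonneg hgx hfx

theorem L2_coeFn_posPart (f : Lp ℝ 2 μ) : ⇑f⁺ =ᵐ[μ] fun x ↦ (f x)⁺ := by
  filter_upwards [Lp.coeFn_sup f 0, Lp.coeFn_zero ℝ 2 μ] with x hsup hzero
  rw [posPart_def, hsup, Pi.sup_apply, hzero]
  rfl

theorem L2_inner_negPart_posPart (f : Lp ℝ 2 μ) : ⟪f⁻, f⁺⟫ = 0 := by
  rw [L2.inner_def]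
  refine integral_eq_zero_of_ae ?_
  filter_upwards [L2_coeFn_posPart f, L2_coeFn_posPart (-f), Lp.coeFn_neg f] with x hpos hneg hf
  rw [posPart_neg] at hneg
  rw [hpos, hneg, hf, Pi.neg_apply, posPart_neg]
  rcases le_total 0 (f x) with h | h
  · simp [negPart_of_nonneg h]
  · simp [posPart_of_nonpos h]

theorem L2_nonneg_of_forall_inner_nonneg (hf : ∀ h, 0 ≤ h → 0 ≤ ⟪f, h⟫) : 0 ≤ f := by
  have hself : ⟪f⁻, f⁻⟫ ≤ 0 := by
    have hinner : ⟪f, f⁻⟫ = ⟪f⁺ - f⁻, f⁻⟫ := by rw [posPart_sub_negPart]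
    rw [inner_sub_left, real_inner_comm f⁻ f⁺, L2_inner_negPart_posPart, zero_sub] at hinner
    linarith [hf f⁻ (negPart_nonneg f)]
  exact negPart_eq_zero.1 (inner_self_eq_zero.1 (hself.antisymm real_inner_self_nonneg))

theorem L2_posPart_smul {c : ℝ} (hc : 0 ≤ c) (f : Lp ℝ 2 μ) : (c • f)⁺ = c • f⁺ := by
  refine Lp.ext ?_
  filter_upwards [L2_coeFn_posPart (c • f), L2_coeFn_posPart f, Lp.coeFn_smul c f,
    Lp.coeFn_smul c f⁺] with x h₁ h₂ h₃ h₄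
  rw [h₁, h₄, h₃, Pi.smul_apply, Pi.smul_apply, h₂, smul_eq_mul, smul_eq_mul]
  change max (c * f x) 0 = c * max (f x) 0
  rw [mul_max_of_nonneg _ _ hc, mul_zero]

/-- Extend `A t ↦ l t` by Hahn–Banach below the sublinear functional `h ↦ ⟪W, h⁺⟫` and represent the
extension by `v`; its bound at `-h` and at `h`, for `0 ≤ h`, gives `0 ≤ v ≤ W`. -/
theorem exists_L2_inner_eq_of_le_inner_posPart {T : Type*} [AddCommGroup T] [Module ℝ T]
    (A : T →ₗ[ℝ] Lp ℝ 2 μ) (l : T →ₗ[ℝ] ℝ) {W : Lp ℝ 2 μ} (hW : 0 ≤ W)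
    (hl : ∀ t, l t ≤ ⟪W, (A t)⁺⟫) :
    ∃ v, 0 ≤ v ∧ v ≤ W ∧ ∀ t, ⟪v, A t⟫ = l t := by
  obtain ⟨L, hLA, hLW⟩ := exists_comp_eq_of_le_sublinear A l (fun h ↦ ⟪W, h⁺⟫)
    (fun c hc h ↦ by rw [L2_posPart_smul hc.le, inner_smul_right])
    (fun g h ↦ by
      rw [← inner_add_right, ← sub_nonneg, ← inner_sub_right]
      exact L2_inner_nonneg hW (sub_nonneg.2 (sup_le
        (add_le_add (le_posPart g) (le_posPart h))
        (add_nonneg (posPart_nonneg g) (posPart_nonneg h))))) hl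
  have hbound : ∀ h, L h ≤ ‖W‖ * ‖h‖ := fun h ↦
    (hLW h).trans ((real_inner_le_norm _ _).trans (by
      gcongr
      exact HasSolidNorm.solid (by
        rw [abs_of_nonneg (posPart_nonneg h)]
        exact sup_le (le_abs_self h) (abs_nonneg h))))
  let Lc : Lp ℝ 2 μ →L[ℝ] ℝ := L.mkContinuous ‖W‖ fun h ↦
    abs_le.2 ⟨by simpa [neg_le] using hbound (-h), hbound h⟩
  let v := (InnerProductSpace.toDual ℝ (Lp ℝ 2 μ)).symm Lc
  have hv : ∀ h, ⟪v, h⟫ = L h := fun h ↦ InnerProductSpace.toDual_symm_apply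
  refine ⟨v, L2_nonneg_of_forall_inner_nonneg fun h hh ↦ ?_,
    sub_nonneg.1 (L2_nonneg_of_forall_inner_nonneg fun h hh ↦ ?_),
    fun t ↦ (hv _).trans (LinearMap.congr_fun hLA t)⟩
  · have := hLW (-h)
    rw [map_neg, posPart_neg, negPart_of_nonneg hh, inner_zero_right] at this
    rw [hv]
    linarith
  · have := hLW h
    rw [posPart_of_nonneg hh] at this
    rw [inner_sub_left, hv]
    linarith

end L2Lattice

section WeakExistence

variable {n : ℕ} {Ω : Opens (Euc n)} {u : Euc n → Euc n} {W F f : Euc n → ℝ}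

theorem memLp_adjointOp (hu : ContDiffOn ℝ 1 u Ω) (ζ : 𝓓^{2}(Ω, ℝ)) :
    MemLp (adjointOp u ζ) 2 (volume.restrict Ω) :=
  .restrict Ω <|
    (continuous_adjointOp hu ζ).memLp_of_hasCompactSupport (hasCompactSupport_adjointOp u ζ)

theorem integral_mul_adjointOp_eq_setIntegral (J : ℝ → ℝ) (hJ : J 0 = 0) (ζ : 𝓓^{2}(Ω, ℝ)) :
    ∫ x, W x * J (adjointOp u ζ x) = ∫ x in Ω, W x * J (adjointOp u ζ x) :=
  (setIntegral_eq_integral_of_forall_compl_eq_zero fun x hx ↦ by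
    rw [adjointOp_eq_zero_of_notMem_tsupport fun h ↦ hx (ζ.tsupport_subset h), hJ, mul_zero]).symm

/-- `adjointOp u` as a linear map from test functions to `L²(Ω)`. -/
def adjointOpL2 (hu : ContDiffOn ℝ 1 u Ω) : 𝓓^{2}(Ω, ℝ) →ₗ[ℝ]
    Lp ℝ 2 (volume.restrict (Ω : Set (Euc n))) where
  toFun ζ := (memLp_adjointOp hu ζ).toLp
  map_add' ζ η := by
    rw [← MemLp.toLp_add]
    exact MemLp.toLp_congr _ _ (.of_eq (adjointOp_add ζ.contDiff η.contDiff))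
  map_smul' c ζ := by
    rw [RingHom.id_apply, ← MemLp.toLp_const_smul]
    exact MemLp.toLp_congr _ _ (.of_eq (adjointOp_const_smul c ζ))

/-- The distribution `ζ ↦ ∫ f ζ` defined by a locally integrable function `f`. -/
def integralPairing (hf : LocallyIntegrableOn f Ω) : 𝓓^{2}(Ω, ℝ) →ₗ[ℝ] ℝ where
  toFun ζ := ∫ x, f x * ζ x
  map_add' ζ η := by
    rw [← integral_add (integrable_mul_testFunction hf ζ) (integrable_mul_testFunction hf η)]
    simp only [FunLike.coe_add, Pi.add_apply, mul_add]
  map_smul' c ζ := by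
    rw [RingHom.id_apply, smul_eq_mul, ← integral_const_mul]
    simp only [FunLike.coe_smul, Pi.smul_apply, smul_eq_mul, mul_left_comm]

theorem exists_isWeakSol_of_le_integral_mul_posPart (hu : ContDiffOn ℝ 1 u Ω)
    (hW : MemLp W 2 (volume.restrict Ω)) (hf : LocallyIntegrableOn f Ω)
    (hW0 : ∀ᵐ x ∂volume.restrict Ω, 0 ≤ W x)
    (hfW : ∀ ζ : 𝓓^{2}(Ω, ℝ), ∫ x, f x * ζ x ≤ ∫ x, W x * (adjointOp u ζ x)⁺) :
    ∃ v, MemLp v 2 (volume.restrict Ω) ∧ (∀ᵐ x ∂volume.restrict Ω, 0 ≤ v x ∧ v x ≤ W x) ∧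
      IsWeakSol Ω u v f := by
  have hWL2 : 0 ≤ hW.toLp := (Lp.coeFn_nonneg _).1 (by
    filter_upwards [hW0, hW.coeFn_toLp] with x hx hWx
    exact hx.trans_eq hWx.symm)
  have hle : ∀ ζ, integralPairing hf ζ ≤ ⟪hW.toLp, (adjointOpL2 hu ζ)⁺⟫ := fun ζ ↦ by
    refine (hfW ζ).trans_eq ?_
    rw [integral_mul_adjointOp_eq_setIntegral (·⁺) posPart_zero, L2.inner_def]
    refine integral_congr_ae ?_
    filter_upwards [hW.coeFn_toLp, L2_coeFn_posPart (adjointOpL2 hu ζ),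
      (memLp_adjointOp hu ζ).coeFn_toLp] with x hWx hpos hx
    change _ = (adjointOpL2 hu ζ)⁺ x * hW.toLp _ x
    rw [hWx, hpos, mul_comm]
    exact congrArg (fun a ↦ a⁺ * W x) hx.symm
  obtain ⟨v, hv0, hvW, hvf⟩ := exists_L2_inner_eq_of_le_inner_posPart _ _ hWL2 hle
  refine ⟨v, Lp.memLp v, ?_, fun ζ ↦ ?_⟩
  · filter_upwards [(Lp.coeFn_nonneg v).2 hv0, (Lp.coeFn_le v _).2 hvW, hW.coeFn_toLp]
      with x h₀ hle hWx
    exact ⟨h₀, hle.trans_eq hWx⟩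
  · refine (integral_mul_adjointOp_eq_setIntegral (W := v) id rfl ζ).trans (Eq.trans ?_ (hvf ζ))
    rw [L2.inner_def]
    refine integral_congr_ae ?_
    filter_upwards [(memLp_adjointOp hu ζ).coeFn_toLp] with x hx
    change _ = (memLp_adjointOp hu ζ).toLp _ x * v x
    rw [hx, mul_comm, id]

theorem IsWeakSol.exists_isWeakSol_le (hu : ContDiffOn ℝ 1 u Ω)
    (hW : MemLp W 2 (volume.restrict Ω)) (hF : LocallyIntegrableOn F Ω)
    (hf : LocallyIntegrableOn f Ω) (hWF : IsWeakSol Ω u W F)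
    (hW0 : ∀ᵐ x ∂volume.restrict Ω, 0 ≤ W x)
    (hfF : ∀ᵐ x ∂volume.restrict Ω, 0 ≤ f x ∧ f x ≤ F x) :
    ∃ v, MemLp v 2 (volume.restrict Ω) ∧ (∀ᵐ x ∂volume.restrict Ω, 0 ≤ v x ∧ v x ≤ W x) ∧
      IsWeakSol Ω u v f :=
  exists_isWeakSol_of_le_integral_mul_posPart hu hW hf hW0 fun ζ ↦
    hWF.integral_mul_le_integral_mul_posPart hu
      (locallyIntegrableOn_of_locallyIntegrable_restrict (hW.locallyIntegrable one_le_two))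
      hF hf hW0 hfF ζ

end WeakExistence

section MonotoneIteration

variable {n : ℕ} {Ω : Opens (Euc n)} {u : Euc n → Euc n} {v v' w f f' F : Euc n → ℝ}

theorem IsWeakSol.add (hu : ContDiffOn ℝ 1 u Ω) (h : IsWeakSol Ω u v f) (h' : IsWeakSol Ω u v' f')
    (hv : LocallyIntegrableOn v Ω) (hv' : LocallyIntegrableOn v' Ω)
    (hf : LocallyIntegrableOn f Ω) (hf' : LocallyIntegrableOn f' Ω) :
    IsWeakSol Ω u (v + v') (f + f') := by
  intro ζ
  simp only [Pi.add_apply, add_mul]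
  rw [integral_add (integrable_mul_adjointOp hu hv ζ) (integrable_mul_adjointOp hu hv' ζ),
    integral_add (integrable_mul_testFunction hf ζ) (integrable_mul_testFunction hf' ζ), h ζ, h' ζ]

theorem IsWeakSol.neg (h : IsWeakSol Ω u v f) : IsWeakSol Ω u (-v) (-f) := by
  intro ζ
  simp only [Pi.neg_apply, neg_mul, integral_neg, h ζ]

theorem tendsto_integral_mul_of_dominated {V : ℕ → Euc n → ℝ} {η : Euc n → ℝ}
    (hV : ∀ k, LocallyIntegrableOn (V k) Ω) (hw : LocallyIntegrableOn w Ω)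
    (hη : Continuous η) (hηc : HasCompactSupport η) (hηΩ : tsupport η ⊆ Ω)
    (hle : ∀ k, ∀ᵐ x ∂volume.restrict Ω, |V k x| ≤ w x)
    (hlim : ∀ᵐ x ∂volume.restrict Ω, Tendsto (V · x) atTop (𝓝 (v x))) :
    Tendsto (fun k ↦ ∫ x, V k x * η x) atTop (𝓝 (∫ x, v x * η x)) := by
  have hη₀ : ∀ x ∉ (Ω : Set (Euc n)), η x = 0 := fun x hx ↦
    image_eq_zero_of_notMem_tsupport fun h ↦ hx (hηΩ h)
  refine tendsto_integral_of_dominated_convergence (fun x ↦ ‖w x * η x‖)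
    (fun k ↦ (integrable_mul_of_hasCompactSupport (hV k) hη hηc hηΩ).aestronglyMeasurable)
    (integrable_mul_of_hasCompactSupport hw hη hηc hηΩ).norm (fun k ↦ ?_) ?_
  · filter_upwards [(ae_restrict_iff' Ω.isOpen.measurableSet).1 (hle k)] with x hx
    by_cases hxΩ : x ∈ (Ω : Set (Euc n))
    · rw [norm_mul, norm_mul]
      gcongr
      exact (hx hxΩ).trans (le_abs_self _)
    · simp [hη₀ x hxΩ]
  · filter_upwards [(ae_restrict_iff' Ω.isOpen.measurableSet).1 hlim] with x hx
    by_cases hxΩ : x ∈ (Ω : Set (Euc n))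
    · exact (hx hxΩ).mul_const _
    · simp [hη₀ x hxΩ]

theorem isWeakSol_of_tendsto {V f' : ℕ → Euc n → ℝ} (hu : ContDiffOn ℝ 1 u Ω)
    (h : ∀ k, IsWeakSol Ω u (V k) (f' k)) (hV : ∀ k, LocallyIntegrableOn (V k) Ω)
    (hf' : ∀ k, LocallyIntegrableOn (f' k) Ω) (hw : LocallyIntegrableOn w Ω)
    (hF : LocallyIntegrableOn F Ω)
    (hVw : ∀ k, ∀ᵐ x ∂volume.restrict Ω, |V k x| ≤ w x)
    (hfF : ∀ k, ∀ᵐ x ∂volume.restrict Ω, |f' k x| ≤ F x)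
    (hVv : ∀ᵐ x ∂volume.restrict Ω, Tendsto (V · x) atTop (𝓝 (v x)))
    (hff : ∀ᵐ x ∂volume.restrict Ω, Tendsto (f' · x) atTop (𝓝 (f x))) : IsWeakSol Ω u v f := by
  intro ζ
  have hleft := tendsto_integral_mul_of_dominated hV hw (continuous_adjointOp hu ζ)
    (hasCompactSupport_adjointOp u ζ)
    ((tsupport_adjointOp_subset u ζ).trans ζ.tsupport_subset) hVw hVv
  simp only [h _ ζ] at hleft
  exact tendsto_nhds_unique hleft (tendsto_integral_mul_of_dominated hf' hF ζ.continuous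
    ζ.hasCompactSupport ζ.tsupport_subset hfF hff)

/-- A stage of the monotone iteration for `-Δv + u · ∇v = G v` below `w`: a weak subsolution
between `0` and `w` whose right-hand side is nonnegative. -/
structure IsMonotoneIterate (Ω : Opens (Euc n)) (u : Euc n → Euc n) (G : ℝ → ℝ) (w v : Euc n → ℝ) :
    Prop where
  memLp : MemLp v 2 (volume.restrict Ω)
  bounds : ∀ᵐ x ∂volume.restrict Ω, 0 ≤ v x ∧ v x ≤ w x
  subsolution : ∃ f, LocallyIntegrableOn f Ω ∧ IsWeakSol Ω u v f ∧
    ∀ᵐ x ∂volume.restrict Ω, 0 ≤ f x ∧ f x ≤ G (v x)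

variable {G : ℝ → ℝ}

theorem isMonotoneIterate_zero (hG₀ : 0 ≤ G 0) (hw : ∀ᵐ x ∂volume.restrict Ω, 0 ≤ w x) :
    IsMonotoneIterate Ω u G w 0 where
  memLp := MemLp.zero
  bounds := hw.mono fun _ hx ↦ ⟨le_rfl, hx⟩
  subsolution := ⟨0, locallyIntegrable_zero.locallyIntegrableOn _, fun ζ ↦ by simp,
    .of_forall fun _ ↦ ⟨le_rfl, hG₀⟩⟩

theorem ae_nonneg_and_comp_le {α : Type*} [MeasurableSpace α] {μ : Measure α} {v w F : α → ℝ}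
    (hGm : MonotoneOn G (Ici 0)) (hG₀ : 0 ≤ G 0) (hGF : ∀ᵐ x ∂μ, G (w x) ≤ F x)
    (hvw : ∀ᵐ x ∂μ, 0 ≤ v x ∧ v x ≤ w x) : ∀ᵐ x ∂μ, 0 ≤ G (v x) ∧ G (v x) ≤ F x := by
  filter_upwards [hvw, hGF] with x hx hGx
  exact ⟨hG₀.trans (hGm self_mem_Ici hx.1 hx.1), (hGm hx.1 (hx.1.trans hx.2) hx.2).trans hGx⟩

theorem locallyIntegrableOn_of_le (hF : LocallyIntegrableOn F Ω)
    (hf : AEStronglyMeasurable f (volume.restrict Ω))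
    (hfF : ∀ᵐ x ∂volume.restrict Ω, 0 ≤ f x ∧ f x ≤ F x) : LocallyIntegrableOn f Ω := by
  refine (locallyIntegrableOn_iff Ω.isOpen.isLocallyClosed).2 fun K hKΩ hK ↦ ?_
  have hle : volume.restrict K ≤ volume.restrict (Ω : Set (Euc n)) :=
    Measure.restrict_mono_set _ hKΩ
  refine Integrable.mono (hF.integrableOn_compact_subset hKΩ hK) (hf.mono_measure hle) ?_
  filter_upwards [ae_mono hle hfF] with x hx
  rw [Real.norm_of_nonneg hx.1, Real.norm_of_nonneg (hx.1.trans hx.2)]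
  exact hx.2

theorem locallyIntegrableOn_of_memLp_two (hv : MemLp v 2 (volume.restrict Ω)) :
    LocallyIntegrableOn v Ω :=
  locallyIntegrableOn_of_locallyIntegrable_restrict (hv.locallyIntegrable one_le_two)

/-- One step of the iteration solves `-Δv' + u · ∇v' = G v`, by adding to `v` a weak solution that
is dominated by the supersolution `w - v`. -/
theorem IsMonotoneIterate.exists_next (hu : ContDiffOn ℝ 1 u Ω) (hG : Continuous G)
    (hGm : MonotoneOn G (Ici 0)) (hG₀ : 0 ≤ G 0) (hw : MemLp w 2 (volume.restrict Ω))
    (hF : LocallyIntegrableOn F Ω) (hwF : IsWeakSol Ω u w F)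
    (hGF : ∀ᵐ x ∂volume.restrict Ω, G (w x) ≤ F x) (hv : IsMonotoneIterate Ω u G w v) :
    ∃ v', IsMonotoneIterate Ω u G w v' ∧ v ≤ᵐ[volume.restrict Ω] v' ∧
      IsWeakSol Ω u v' (G ∘ v) := by
  obtain ⟨hvL2, hvw, f, hf, hvf, hfG⟩ := hv
  have hGv := ae_nonneg_and_comp_le hGm hG₀ hGF hvw
  have hGvint : LocallyIntegrableOn (G ∘ v) Ω :=
    locallyIntegrableOn_of_le hF (hG.comp_aestronglyMeasurable hvL2.1) hGv
  have hwv : IsWeakSol Ω u (w + -v) (F + -f) :=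
    hwF.add hu hvf.neg (locallyIntegrableOn_of_memLp_two hw)
      (locallyIntegrableOn_of_memLp_two hvL2).neg hF hf.neg
  obtain ⟨z, hzL2, hz, hzf⟩ := hwv.exists_isWeakSol_le (f := G ∘ v + -f) hu (hw.add hvL2.neg)
    (hF.add hf.neg) (hGvint.add hf.neg)
    (hvw.mono fun x hx ↦ by simpa using hx.2)
    (by filter_upwards [hfG, hGv] with x hfx hGx
        simpa using ⟨hfx.2, hGx.2⟩)
  have hvz : IsWeakSol Ω u (v + z) (G ∘ v) := by
    simpa using hvf.add hu hzf (locallyIntegrableOn_of_memLp_two hvL2)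
      (locallyIntegrableOn_of_memLp_two hzL2) hf (hGvint.add hf.neg)
  refine ⟨v + z, ⟨hvL2.add hzL2, ?_, G ∘ v, hGvint, hvz, ?_⟩, ?_, hvz⟩
  · filter_upwards [hvw, hz] with x hvx hzx
    simp only [Pi.add_apply, Pi.neg_apply] at hzx ⊢
    constructor <;> linarith
  · filter_upwards [hvw, hz, hGv] with x hvx hzx hGx
    exact ⟨hGx.1, hGm hvx.1 (add_nonneg hvx.1 hzx.1) (le_add_of_nonneg_right hzx.1)⟩
  · exact hz.mono fun x hzx ↦ le_add_of_nonneg_right hzx.1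

theorem exists_monotone_iterates (hu : ContDiffOn ℝ 1 u Ω) (hG : Continuous G)
    (hGm : MonotoneOn G (Ici 0)) (hG₀ : 0 ≤ G 0) (hw : MemLp w 2 (volume.restrict Ω))
    (hw₀ : ∀ᵐ x ∂volume.restrict Ω, 0 ≤ w x) (hF : LocallyIntegrableOn F Ω)
    (hwF : IsWeakSol Ω u w F) (hGF : ∀ᵐ x ∂volume.restrict Ω, G (w x) ≤ F x) :
    ∃ V : ℕ → Euc n → ℝ, (∀ k, IsMonotoneIterate Ω u G w (V k)) ∧
      (∀ k, V k ≤ᵐ[volume.restrict Ω] V (k + 1)) ∧ ∀ k, IsWeakSol Ω u (V (k + 1)) (G ∘ V k) := by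
  choose next hnext hle hsol using fun v : {v // IsMonotoneIterate Ω u G w v} ↦
    v.2.exists_next hu hG hGm hG₀ hw hF hwF hGF
  let V : ℕ → {v // IsMonotoneIterate Ω u G w v} := fun k ↦
    (fun v ↦ ⟨next v, hnext v⟩)^[k] ⟨0, isMonotoneIterate_zero hG₀ hw₀⟩
  have hV : ∀ k, (V (k + 1)).1 = next (V k) := fun k ↦
    congrArg Subtype.val (Function.iterate_succ_apply' _ _ _)
  refine ⟨fun k ↦ (V k).1, fun k ↦ (V k).2, fun k ↦ ?_, fun k ↦ ?_⟩ <;> simp only [hV]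
  exacts [hle _, hsol _]

theorem ae_tendsto_iSup_of_ae_le_succ {α : Type*} [MeasurableSpace α] {μ : Measure α}
    {V : ℕ → α → ℝ} {w : α → ℝ} (hmono : ∀ k, V k ≤ᵐ[μ] V (k + 1)) (hVw : ∀ k, V k ≤ᵐ[μ] w) :
    ∀ᵐ x ∂μ, Tendsto (V · x) atTop (𝓝 (⨆ k, V k x)) := by
  filter_upwards [ae_all_iff.2 hmono, ae_all_iff.2 hVw] with x hx hxw
  exact tendsto_atTop_ciSup (monotone_nat_of_le_succ hx) ⟨w x, forall_mem_range.2 hxw⟩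

theorem exists_isWeakSol_comp_of_supersolution (hu : ContDiffOn ℝ 1 u Ω) (hG : Continuous G)
    (hGm : MonotoneOn G (Ici 0)) (hG₀ : 0 ≤ G 0) (hw : MemLp w 2 (volume.restrict Ω))
    (hw₀ : ∀ᵐ x ∂volume.restrict Ω, 0 ≤ w x) (hF : LocallyIntegrableOn F Ω)
    (hwF : IsWeakSol Ω u w F) (hGF : ∀ᵐ x ∂volume.restrict Ω, G (w x) ≤ F x) :
    ∃ v, AEStronglyMeasurable v (volume.restrict Ω) ∧
      (∀ᵐ x ∂volume.restrict Ω, 0 ≤ v x ∧ v x ≤ w x) ∧ IsWeakSol Ω u v (G ∘ v) := by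
  obtain ⟨V, hV, hmono, hsol⟩ := exists_monotone_iterates hu hG hGm hG₀ hw hw₀ hF hwF hGF
  have hlim := ae_tendsto_iSup_of_ae_le_succ hmono fun k ↦ (hV k).bounds.mono fun x hx ↦ hx.2
  have hGV := fun k ↦ ae_nonneg_and_comp_le hGm hG₀ hGF (hV k).bounds
  refine ⟨fun x ↦ ⨆ k, V k x, aestronglyMeasurable_of_tendsto_ae _ (fun k ↦ (hV k).memLp.1) hlim,
    ?_, ?_⟩
  · filter_upwards [hlim, ae_all_iff.2 fun k ↦ (hV k).bounds] with x hx hbounds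
    exact ⟨ge_of_tendsto' hx fun k ↦ (hbounds k).1, le_of_tendsto' hx fun k ↦ (hbounds k).2⟩
  · refine isWeakSol_of_tendsto hu hsol
      (fun k ↦ locallyIntegrableOn_of_memLp_two (hV (k + 1)).memLp)
      (fun k ↦ locallyIntegrableOn_of_le hF (hG.comp_aestronglyMeasurable (hV k).memLp.1) (hGV k))
      (locallyIntegrableOn_of_memLp_two hw) hF (fun k ↦ ?_) (fun k ↦ ?_) ?_ ?_
    · exact (hV (k + 1)).bounds.mono fun x hx ↦ (abs_of_nonneg hx.1).trans_le hx.2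
    · exact (hGV k).mono fun x hx ↦ (abs_of_nonneg hx.1).trans_le hx.2
    · exact hlim.mono fun x hx ↦ (tendsto_add_atTop_iff_nat 1).2 hx
    · exact hlim.mono fun x hx ↦ (hG.tendsto _).comp hx

end MonotoneIteration

section HolderContinuity

variable {E F : Type*} [NormedAddCommGroup E] [NormedAddCommGroup F] {f g : E → F} {x : E}
  {l : Filter (E × E)}

/-- Hölder continuity with exponent `1/2` of the increments of `f` along a filter on pairs of
points: the filter `⊤` gives the global notion and `𝓝 (x, x)` the local one at `x`. -/
def IsHolderAlong (l : Filter (E × E)) (f : E → F) : Prop :=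
  (fun p : E × E ↦ f p.1 - f p.2) =O[l] fun p ↦ √‖p.1 - p.2‖

theorem isHolderAlong_top {f : E → F} :
    IsHolderAlong ⊤ f ↔ ∃ C, ∀ x y, ‖f x - f y‖ ≤ C * √‖x - y‖ := by
  simp only [IsHolderAlong, Asymptotics.isBigO_top, Prod.forall, Real.norm_of_nonneg,
    Real.sqrt_nonneg]

theorem IsHolderAlong.continuousAt (hf : IsHolderAlong (𝓝 (x, x)) f) : ContinuousAt f x := by
  have hpair : Tendsto (fun y ↦ (y, x)) (𝓝 x) (𝓝 (x, x)) := by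
    exact (continuous_id.prodMk continuous_const).tendsto x
  have hzero : Tendsto (fun y : E ↦ √‖y - x‖) (𝓝 x) (𝓝 0) :=
    Continuous.tendsto' (by fun_prop) _ _ (by simp)
  exact tendsto_sub_nhds_zero_iff.1 ((hf.comp_tendsto hpair).trans_tendsto hzero)

theorem eventually_diag {p : E → Prop} (h : ∀ᶠ y in 𝓝 x, p y) :
    ∀ᶠ y : E × E in 𝓝 (x, x), p y.1 ∧ p y.2 :=
  (continuousAt_fst.eventually h).and (continuousAt_snd.eventually h)

theorem IsHolderAlong.congr (hf : IsHolderAlong (𝓝 (x, x)) f) (h : g =ᶠ[𝓝 x] f) :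
    IsHolderAlong (𝓝 (x, x)) g := by
  refine Asymptotics.IsBigO.congr' hf ?_ .rfl
  filter_upwards [eventually_diag h] with p hp
  rw [hp.1, hp.2]

theorem IsHolderAlong.add (hf : IsHolderAlong l f) (hg : IsHolderAlong l g) :
    IsHolderAlong l (f + g) :=
  (Asymptotics.IsBigO.add hf hg).congr_left fun _ ↦ by simp only [Pi.add_apply]; abel

theorem IsHolderAlong.sub (hf : IsHolderAlong l f) (hg : IsHolderAlong l g) :
    IsHolderAlong l (f - g) :=
  (Asymptotics.IsBigO.sub hf hg).congr_left fun _ ↦ by simp only [Pi.sub_apply]; abel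

theorem isHolderAlong_sum {ι : Type*} (s : Finset ι) {f : ι → E → F}
    (hf : ∀ i ∈ s, IsHolderAlong l (f i)) : IsHolderAlong l fun y ↦ ∑ i ∈ s, f i y :=
  (Asymptotics.IsBigO.sum hf).congr_left fun _ ↦ by
    simp only [Finset.sum_apply, Finset.sum_sub_distrib]

theorem isHolderAlong_const (c : F) : IsHolderAlong l fun _ : E ↦ c := by
  simp [IsHolderAlong, Asymptotics.isBigO_zero]

theorem IsHolderAlong.clm_comp {G : Type*} [NormedSpace ℝ F] [NormedAddCommGroup G]
    [NormedSpace ℝ G] (L : F →L[ℝ] G) (hf : IsHolderAlong l f) : IsHolderAlong l (L ∘ f) :=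
  ((L.isBigO_comp _ _).trans hf).congr_left fun _ ↦ map_sub L _ _

theorem IsHolderAlong.mul {a b : E → ℝ} (ha : IsHolderAlong (𝓝 (x, x)) a)
    (hb : IsHolderAlong (𝓝 (x, x)) b) : IsHolderAlong (𝓝 (x, x)) (a * b) := by
  have ha₁ : (fun p : E × E ↦ a p.1) =O[𝓝 (x, x)] fun _ ↦ (1 : ℝ) :=
    (ContinuousAt.comp (x := (x, x)) (f := Prod.fst) ha.continuousAt
      continuousAt_fst).tendsto.isBigO_one ℝ
  have hb₁ : (fun p : E × E ↦ b p.2) =O[𝓝 (x, x)] fun _ ↦ (1 : ℝ) :=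
    (ContinuousAt.comp (x := (x, x)) (f := Prod.snd) hb.continuousAt
      continuousAt_snd).tendsto.isBigO_one ℝ
  have hright := (Asymptotics.IsBigO.mul ha hb₁).congr_right fun _ ↦ mul_comm _ _
  refine ((ha₁.mul hb).add hright).congr (fun p ↦ ?_) fun p ↦ ?_
  · simp only [Pi.mul_apply]; ring
  · ring

theorem IsHolderAlong.comp_contDiff {G : ℝ → ℝ} {a : E → ℝ} (hG : ContDiff ℝ 1 G)
    (ha : IsHolderAlong (𝓝 (x, x)) a) : IsHolderAlong (𝓝 (x, x)) (G ∘ a) := by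
  obtain ⟨L, t, ht, hL⟩ := (hG.contDiffAt (x := a x)).exists_lipschitzOnWith
  refine Asymptotics.IsBigO.trans (.of_bound L ?_) ha
  filter_upwards [eventually_diag (ha.continuousAt.eventually ht)] with p hp
  exact hL.norm_sub_le hp.1 hp.2

theorem sub_isBigO_sqrt_norm_sub :
    (fun p : E × E ↦ p.1 - p.2) =O[𝓝 (x, x)] fun p ↦ √‖p.1 - p.2‖ := by
  have hbdd : (fun p : E × E ↦ √‖p.1 - p.2‖) =O[𝓝 (x, x)] fun _ ↦ (1 : ℝ) :=
    (Continuous.tendsto (by fun_prop) (x, x)).isBigO_one ℝ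
  refine ((hbdd.mul (Asymptotics.isBigO_refl _ _)).congr (fun p ↦ ?_) fun _ ↦ one_mul _
    ).of_norm_left
  exact Real.mul_self_sqrt (norm_nonneg _)

theorem isHolderAlong_of_contDiffAt [NormedSpace ℝ E] [NormedSpace ℝ F]
    (hf : ContDiffAt ℝ 1 f x) : IsHolderAlong (𝓝 (x, x)) f := by
  obtain ⟨L, t, ht, hL⟩ := hf.exists_lipschitzOnWith
  refine Asymptotics.IsBigO.trans (.of_bound L ?_) sub_isBigO_sqrt_norm_sub
  filter_upwards [eventually_diag ht] with p hp
  exact hL.norm_sub_le hp.1 hp.2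

theorem isBigO_principal_of_isCompact {X F' : Type*} [TopologicalSpace X] [NormedAddCommGroup F']
    {a : X → F} {b : X → F'} {s : Set X} (hs : IsCompact s) (h : ∀ x ∈ s, a =O[𝓝 x] b) :
    a =O[𝓟 s] b := by
  refine hs.induction_on (p := fun t ↦ a =O[𝓟 t] b) (by simp)
    (fun t t' htt' h ↦ h.mono (principal_mono.2 htt')) (fun t t' h h' ↦ ?_) fun x hx ↦ ?_
  · rw [← sup_principal]
    exact h.sup h'
  · obtain ⟨C, hC⟩ := (h x hx).bound
    exact ⟨_, mem_nhdsWithin_of_mem_nhds hC, .of_bound C (mem_principal_self _)⟩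

theorem isHolderAlong_of_isHolderAlong_diag (hf : ∀ x, IsHolderAlong (𝓝 (x, x)) f) (p : E × E) :
    IsHolderAlong (𝓝 p) f := by
  obtain ⟨x, y⟩ := p
  rcases eq_or_ne x y with rfl | hxy
  · exact hf x
  have hcont : Continuous f := continuous_iff_continuousAt.2 fun x ↦ (hf x).continuousAt
  have hpos : 0 < √‖x - y‖ := Real.sqrt_pos.2 (norm_pos_iff.2 (sub_ne_zero.2 hxy))
  have hlim : Tendsto (fun p : E × E ↦ √‖p.1 - p.2‖) (𝓝 (x, y)) (𝓝 √‖x - y‖) :=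
    Continuous.tendsto (by fun_prop) (x, y)
  refine ((Continuous.tendsto (by fun_prop) (x, y)).isBigO_one ℝ).trans
    ((Asymptotics.isBigO_const_left_iff_pos_le_norm one_ne_zero).2
      ⟨√‖x - y‖ / 2, half_pos hpos, ?_⟩)
  filter_upwards [hlim.eventually_const_lt (half_lt_self hpos)] with p hp
  exact hp.le.trans (le_abs_self _)

theorem isHolderAlong_top_of_hasCompactSupport [ProperSpace E] (hfs : HasCompactSupport f)
    (hf : ∀ x, IsHolderAlong (𝓝 (x, x)) f) : IsHolderAlong ⊤ f := by
  have hcont : Continuous f := continuous_iff_continuousAt.2 fun x ↦ (hf x).continuousAt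
  set S := Metric.cthickening 1 (tsupport f)
  have hcompact : IsCompact (S ×ˢ S) := hfs.isCompact.cthickening.prod hfs.isCompact.cthickening
  have hnear : IsHolderAlong (𝓟 (S ×ˢ S)) f :=
    isBigO_principal_of_isCompact hcompact fun p _ ↦ isHolderAlong_of_isHolderAlong_diag hf p
  have hfar : IsHolderAlong (𝓟 {p | 1 ≤ ‖p.1 - p.2‖}) f := by
    obtain ⟨M, hM⟩ := hcont.bounded_above_of_compact_support hfs
    refine .of_bound (M + M) fun p (hp : 1 ≤ ‖p.1 - p.2‖) ↦ ?_
    have hp' : 1 ≤ ‖√‖p.1 - p.2‖‖ := by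
      rw [Real.norm_of_nonneg (Real.sqrt_nonneg _)]
      exact Real.one_le_sqrt.2 hp
    have hM₀ : 0 ≤ M := (norm_nonneg _).trans (hM p.1)
    calc ‖f p.1 - f p.2‖ ≤ M + M := (norm_sub_le _ _).trans (add_le_add (hM _) (hM _))
      _ ≤ _ := le_mul_of_one_le_right (by positivity) hp'
  have hout : IsHolderAlong (𝓟 ((tsupport f)ᶜ ×ˢ (tsupport f)ᶜ)) f := by
    refine .of_bound 0 fun p hp ↦ ?_
    simp [image_eq_zero_of_notMem_tsupport hp.1, image_eq_zero_of_notMem_tsupport hp.2]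
  refine ((hnear.sup hfar).sup hout).mono ?_
  rw [sup_principal, sup_principal, ← principal_univ, principal_mono]
  rintro ⟨x, y⟩ -
  by_cases hxy : 1 ≤ ‖x - y‖
  · exact .inl (.inr hxy)
  have hdist : dist x y ≤ 1 := by
    rw [dist_eq_norm]
    exact (not_le.1 hxy).le
  have hS₀ {z : E} (hz : z ∈ tsupport f) : z ∈ S :=
    Metric.self_subset_cthickening _ hz
  by_cases hx : x ∈ tsupport f
  · exact .inl (.inl ⟨hS₀ hx, Metric.mem_cthickening_of_dist_le y x _ _ hx (dist_comm x y ▸ hdist)⟩)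
  by_cases hy : y ∈ tsupport f
  · exact .inl (.inl ⟨Metric.mem_cthickening_of_dist_le x y _ _ hy hdist, hS₀ hy⟩)
  · exact .inr ⟨hx, hy⟩

end HolderContinuity

section DyadicPotentials

open Module
open scoped Convolution

theorem sqrt_half_lt_one : √(1 / 2) < 1 := by
  rw [Real.sqrt_lt' one_pos]
  norm_num

theorem sqrt_half_pow_mul_sqrt_two_pow (j : ℕ) : √(1 / 2) ^ j * √(2 ^ j : ℝ) = 1 := by
  have h : √((2 : ℝ) ^ j) = √2 ^ j := by
    induction j with
    | zero => simp
    | succ j ih => rw [pow_succ, Real.sqrt_mul (by positivity), ih, pow_succ]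
  rw [h, ← mul_pow, ← Real.sqrt_mul (by norm_num)]
  norm_num

variable {E F : Type*} [NormedAddCommGroup E] [NormedSpace ℝ E] [NormedAddCommGroup F]
  [NormedSpace ℝ F] {q : E → ℝ} {K : E → F} {r : ℝ}

/-- The dilation of `K` by the factor `2 ^ (-j)` that preserves the integral. -/
def dilate (j : ℕ) (K : E → F) (x : E) : F :=
  (2 ^ j : ℝ) ^ finrank ℝ E • K ((2 : ℝ) ^ j • x)

theorem contDiff_dilate {m : WithTop ℕ∞} (hK : ContDiff ℝ m K) (j : ℕ) :
    ContDiff ℝ m (dilate j K) :=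
  (hK.comp (contDiff_const_smul _)).const_smul _

theorem continuous_dilate (hK : Continuous K) (j : ℕ) : Continuous (dilate j K) :=
  (hK.comp (continuous_const_smul _)).const_smul _

theorem hasCompactSupport_dilate (hK : HasCompactSupport K) (j : ℕ) :
    HasCompactSupport (dilate j K) :=
  (hK.comp_smul (pow_ne_zero j two_ne_zero)).smul_left (f := fun _ ↦ (2 ^ j : ℝ) ^ finrank ℝ E)

theorem norm_dilate (j : ℕ) (K : E → F) (x : E) : ‖dilate j K x‖ = dilate j (‖K ·‖) x := by
  simp only [dilate, norm_smul, norm_pow, Real.norm_ofNat, smul_eq_mul]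

theorem fderiv_dilate (hK : Differentiable ℝ K) (j : ℕ) (x : E) :
    fderiv ℝ (dilate j K) x = (2 : ℝ) ^ j • dilate j (fderiv ℝ K) x := by
  have h := ((hK _).hasFDerivAt.comp x ((hasFDerivAt_id x).const_smul ((2 : ℝ) ^ j))).const_smul
    ((2 ^ j : ℝ) ^ finrank ℝ E)
  refine h.fderiv.trans ?_
  simp only [ContinuousLinearMap.comp_smul, ContinuousLinearMap.comp_id, dilate]
  exact smul_comm _ _ _

variable [FiniteDimensional ℝ E] [MeasureSpace E] [BorelSpace E]
  [(volume : Measure E).IsAddHaarMeasure]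

theorem integral_dilate (j : ℕ) (K : E → F) : ∫ x, dilate j K x = ∫ x, K x := by
  have h2 : (0 : ℝ) < (2 ^ j) ^ finrank ℝ E := by positivity
  simp only [dilate]
  rw [integral_smul, Measure.integral_comp_smul, abs_of_pos (inv_pos.2 h2), smul_inv_smul₀ h2.ne']

theorem integrable_convolution_integrand (hq : MemLp q ∞) (hK : Continuous K)
    (hKs : HasCompactSupport K) (x : E) : Integrable fun y ↦ q y • K (x - y) :=
  hKs.convolutionExists_right (ContinuousLinearMap.lsmul ℝ ℝ) (hq.locallyIntegrable le_top) hK x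

theorem norm_convolution_dilate_le (hq : MemLp q ∞) (hK : Continuous K)
    (hKs : HasCompactSupport K) (j : ℕ) (x : E) :
    ‖(q ⋆ dilate j K) x‖ ≤ lpNorm q ∞ volume * ∫ y, ‖K y‖ := by
  have hint : Integrable fun y ↦ ‖dilate j K (x - y)‖ :=
    (((continuous_dilate hK j).integrable_of_hasCompactSupport
      (hasCompactSupport_dilate hKs j)).comp_sub_left x).norm
  calc ‖(q ⋆ dilate j K) x‖ ≤ ∫ y, lpNorm q ∞ volume * ‖dilate j K (x - y)‖ := by
        refine norm_integral_le_of_norm_le (hint.const_mul _) ?_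
        filter_upwards [ae_le_lpNorm_exponent_top hq] with y hy
        rw [ContinuousLinearMap.lsmul_apply, norm_smul]
        gcongr
    _ = lpNorm q ∞ volume * ∫ y, ‖K y‖ := by
        rw [integral_const_mul, integral_sub_left_eq_self (fun y ↦ ‖dilate j K y‖)]
        simp only [norm_dilate, integral_dilate]

theorem norm_convolution_dilate_le_of_isHolder (hq : MemLp q ∞) {H : ℝ}
    (hqH : ∀ x y, ‖q x - q y‖ ≤ H * √‖x - y‖) (hK : Continuous K) (hKs : HasCompactSupport K)
    (hK₀ : ∫ x, K x = 0) (j : ℕ) (x : E) :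
    ‖(q ⋆ dilate j K) x‖ ≤ √(1 / 2) ^ j * (H * ∫ y, √‖y‖ * ‖K y‖) := by
  have hd := continuous_dilate hK j
  have hds := hasCompactSupport_dilate hKs j
  have hint : Integrable fun y ↦ √‖x - y‖ * ‖dilate j K (x - y)‖ :=
    (Continuous.integrable_of_hasCompactSupport (f := fun y ↦ √‖y‖ * ‖dilate j K y‖)
      (by fun_prop) hds.norm.mul_left).comp_sub_left x
  have hcancel : (q ⋆ dilate j K) x = ∫ y, (q y - q x) • dilate j K (x - y) := by
    have hconst : Integrable fun y ↦ q x • dilate j K (x - y) :=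
      ((hd.integrable_of_hasCompactSupport hds).comp_sub_left x).smul _
    simp only [sub_smul]
    rw [integral_sub (integrable_convolution_integrand hq hd hds x) hconst, integral_smul,
      integral_sub_left_eq_self (dilate j K), integral_dilate, hK₀, smul_zero, sub_zero]
    rfl
  have hscale (y : E) : √‖y‖ * ‖dilate j K y‖ =
      √(1 / 2) ^ j * dilate j (fun y ↦ √‖y‖ * ‖K y‖) y := by
    simp only [dilate, norm_smul, norm_pow, Real.norm_ofNat, smul_eq_mul,
      Real.sqrt_mul (show (0 : ℝ) ≤ 2 ^ j by positivity)]
    linear_combination -(√‖y‖ * (2 ^ j) ^ finrank ℝ E * ‖K ((2 : ℝ) ^ j • y)‖) *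
      sqrt_half_pow_mul_sqrt_two_pow j
  calc ‖(q ⋆ dilate j K) x‖ ≤ ∫ y, H * (√‖x - y‖ * ‖dilate j K (x - y)‖) := by
        rw [hcancel]
        refine norm_integral_le_of_norm_le (hint.const_mul H) (ae_of_all _ fun y ↦ ?_)
        rw [norm_smul, ← mul_assoc, norm_sub_rev x]
        gcongr
        exact hqH y x
    _ = H * ∫ y, √‖y‖ * ‖dilate j K y‖ := by
        rw [integral_const_mul, integral_sub_left_eq_self (fun y ↦ √‖y‖ * ‖dilate j K y‖)]
    _ = √(1 / 2) ^ j * (H * ∫ y, √‖y‖ * ‖K y‖) := by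
        simp only [hscale]
        rw [integral_const_mul, integral_dilate]
        ring

theorem contDiff_convolution_dilate {m : ℕ∞} (hq : MemLp q ∞) (hK : ContDiff ℝ m K)
    (hKs : HasCompactSupport K) (j : ℕ) : ContDiff ℝ m (q ⋆ dilate j K) :=
  (hasCompactSupport_dilate hKs j).contDiff_convolution_right _ (hq.locallyIntegrable le_top)
    (contDiff_dilate hK j)

theorem fderiv_convolution_dilate (hq : MemLp q ∞) (hK : ContDiff ℝ 1 K)
    (hKs : HasCompactSupport K) (j : ℕ) (x : E) :
    fderiv ℝ (q ⋆ dilate j K) x = (2 : ℝ) ^ j • (q ⋆ dilate j (fderiv ℝ K)) x := by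
  refine ((hasCompactSupport_dilate hKs j).hasFDerivAt_convolution_right _
    (hq.locallyIntegrable le_top) (contDiff_dilate hK j) x).fderiv.trans ?_
  rw [convolution_def, convolution_def, ← integral_smul]
  refine integral_congr_ae (ae_of_all _ fun y ↦ ?_)
  simp only [fderiv_dilate (hK.differentiable one_ne_zero)]
  ext v
  exact smul_comm (q y) ((2 : ℝ) ^ j) (dilate j (fderiv ℝ K) (x - y) v)

theorem norm_convolution_dilate_sub_le (hq : MemLp q ∞) (hK : ContDiff ℝ 1 K)
    (hKs : HasCompactSupport K) (j : ℕ) (x y : E) :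
    ‖(q ⋆ dilate j K) x - (q ⋆ dilate j K) y‖ ≤
      2 ^ j * (lpNorm q ∞ volume * ∫ z, ‖fderiv ℝ K z‖) * ‖x - y‖ := by
  refine convex_univ.norm_image_sub_le_of_norm_fderiv_le (𝕜 := ℝ) (fun z _ ↦
    (contDiff_convolution_dilate (m := 1) hq hK hKs j).differentiable one_ne_zero z)
    (fun z _ ↦ ?_) (mem_univ y) (mem_univ x)
  rw [fderiv_convolution_dilate hq hK hKs, norm_smul, norm_pow, Real.norm_ofNat]
  gcongr
  exact norm_convolution_dilate_le hq (hK.continuous_fderiv one_ne_zero) (hKs.fderiv ℝ) j z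

/-- The uniform bound and the Lipschitz bound, combined through `min a b ≤ √(a * b)`. -/
theorem norm_convolution_dilate_sub_le_sqrt (hq : MemLp q ∞) (hK : ContDiff ℝ 1 K)
    (hKs : HasCompactSupport K) (j : ℕ) (x y : E) :
    ‖(q ⋆ dilate j K) x - (q ⋆ dilate j K) y‖ ≤
      √(2 ^ j) * (lpNorm q ∞ volume * √(2 * (∫ z, ‖K z‖) * ∫ z, ‖fderiv ℝ K z‖) * √‖x - y‖) := by
  set A := ∫ z, ‖K z‖
  set B := ∫ z, ‖fderiv ℝ K z‖
  have hAB : 0 ≤ 2 * A * B := mul_nonneg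
    (mul_nonneg zero_le_two (integral_nonneg fun _ ↦ norm_nonneg _))
    (integral_nonneg fun _ ↦ norm_nonneg _)
  have hsup : ‖(q ⋆ dilate j K) x - (q ⋆ dilate j K) y‖ ≤ lpNorm q ∞ volume * A +
      lpNorm q ∞ volume * A :=
    norm_sub_le_of_le (norm_convolution_dilate_le hq hK.continuous hKs j x)
      (norm_convolution_dilate_le hq hK.continuous hKs j y)
  have hq₀ : 0 ≤ lpNorm q ∞ volume := lpNorm_nonneg
  refine (abs_le_of_sq_le_sq' ?_ (by positivity)).2
  calc ‖(q ⋆ dilate j K) x - (q ⋆ dilate j K) y‖ ^ 2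
      ≤ (lpNorm q ∞ volume * A + lpNorm q ∞ volume * A) *
          (2 ^ j * (lpNorm q ∞ volume * B) * ‖x - y‖) := by
        rw [sq]
        exact mul_le_mul hsup (norm_convolution_dilate_sub_le hq hK hKs j x y) (norm_nonneg _)
          ((norm_nonneg _).trans hsup)
    _ = _ := by
        rw [mul_pow, mul_pow, mul_pow, Real.sq_sqrt (by positivity), Real.sq_sqrt hAB,
          Real.sq_sqrt (norm_nonneg _)]
        ring

/-- The potential of `q` with respect to the kernel `∑ j, r ^ j • dilate j K`. If `K` is smooth
with compact support, the kernel is homogeneous of degree `-(finrank ℝ E + log₂ r)` up to a smooth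
function; Newtonian potentials correspond to `r = 1 / 4` and their gradients to `r = 1 / 2`. -/
def dyadicPotential (r : ℝ) (q : E → ℝ) (K : E → F) (x : E) : F :=
  ∑' j : ℕ, r ^ j • (q ⋆ dilate j K) x

theorem norm_dyadicPotential_term_le (hr₀ : 0 ≤ r) (hq : MemLp q ∞) (hK : Continuous K)
    (hKs : HasCompactSupport K) (j : ℕ) (x : E) :
    ‖r ^ j • (q ⋆ dilate j K) x‖ ≤ r ^ j * (lpNorm q ∞ volume * ∫ y, ‖K y‖) := by
  rw [norm_smul, Real.norm_of_nonneg (by positivity)]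
  gcongr
  exact norm_convolution_dilate_le hq hK hKs j x

theorem integral_fderiv_eq_zero (hK : ContDiff ℝ 1 K) (hKs : HasCompactSupport K) :
    ∫ x, fderiv ℝ K x = 0 := by
  have hint : Integrable (fderiv ℝ K) :=
    (hK.continuous_fderiv one_ne_zero).integrable_of_hasCompactSupport (hKs.fderiv ℝ)
  ext v
  have h := integral_bilinear_hasLineDerivAt_right_eq_neg_left_of_integrable (μ := volume)
    (f := fun _ : E ↦ (1 : ℝ)) (f' := 0) (g := K) (g' := fun x ↦ fderiv ℝ K x v) (v := v)
    (B := ContinuousLinearMap.lsmul ℝ ℝ) (by simp) (by simpa using hint.apply_continuousLinearMap v)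
    (by simpa using hK.continuous.integrable_of_hasCompactSupport hKs)
    (fun x _ ↦ (hasFDerivAt_const (1 : ℝ) x).hasLineDerivAt v)
    (fun x _ ↦ (hK.differentiable one_ne_zero x).hasFDerivAt.hasLineDerivAt v)
  simpa [ContinuousLinearMap.integral_apply hint] using h

theorem hasFDerivAt_dyadicPotential_term (hq : MemLp q ∞) (hK : ContDiff ℝ 1 K)
    (hKs : HasCompactSupport K) (r : ℝ) (j : ℕ) (x : E) :
    HasFDerivAt (fun x ↦ r ^ j • (q ⋆ dilate j K) x)
      ((2 * r) ^ j • (q ⋆ dilate j (fderiv ℝ K)) x) x := by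
  have hd := (contDiff_convolution_dilate (m := 1) hq hK hKs j).differentiable one_ne_zero x
  refine (hd.hasFDerivAt.const_smul (r ^ j)).congr_fderiv ?_
  rw [fderiv_convolution_dilate hq hK hKs, smul_smul, mul_pow, mul_comm]

variable [CompleteSpace F]

theorem summable_dyadicPotential (hr₀ : 0 ≤ r) (hr₁ : r < 1) (hq : MemLp q ∞)
    (hK : Continuous K) (hKs : HasCompactSupport K) (x : E) :
    Summable fun j : ℕ ↦ r ^ j • (q ⋆ dilate j K) x :=
  .of_norm_bounded ((summable_geometric_of_lt_one hr₀ hr₁).mul_right _)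
    fun j ↦ norm_dyadicPotential_term_le hr₀ hq hK hKs j x

theorem continuous_dyadicPotential (hr₀ : 0 ≤ r) (hr₁ : r < 1) (hq : MemLp q ∞)
    (hK : Continuous K) (hKs : HasCompactSupport K) : Continuous (dyadicPotential r q K) :=
  continuous_tsum
    (fun j ↦ ((contDiff_convolution_dilate (m := 0) hq (contDiff_zero.2 hK) hKs j).continuous
      ).const_smul (r ^ j))
    ((summable_geometric_of_lt_one hr₀ hr₁).mul_right _)
    fun j x ↦ norm_dyadicPotential_term_le hr₀ hq hK hKs j x

theorem hasFDerivAt_dyadicPotential_of_summable {b : ℕ → ℝ} (hr₀ : 0 ≤ r) (hr₁ : r < 1)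
    (hq : MemLp q ∞) (hK : ContDiff ℝ 1 K) (hKs : HasCompactSupport K) (hb : Summable b)
    (hbound : ∀ j x, ‖(2 * r) ^ j • (q ⋆ dilate j (fderiv ℝ K)) x‖ ≤ b j) (x : E) :
    HasFDerivAt (dyadicPotential r q K) (dyadicPotential (2 * r) q (fderiv ℝ K) x) x :=
  hasFDerivAt_tsum hb (hasFDerivAt_dyadicPotential_term hq hK hKs r) hbound
    (summable_dyadicPotential hr₀ hr₁ hq hK.continuous hKs 0) x

theorem hasFDerivAt_dyadicPotential (hr₀ : 0 ≤ r) (hr₁ : r < 1 / 2) (hq : MemLp q ∞)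
    (hK : ContDiff ℝ 1 K) (hKs : HasCompactSupport K) (x : E) :
    HasFDerivAt (dyadicPotential r q K) (dyadicPotential (2 * r) q (fderiv ℝ K) x) x :=
  hasFDerivAt_dyadicPotential_of_summable hr₀ (by linarith) hq hK hKs
    ((summable_geometric_of_lt_one (by positivity) (by linarith)).mul_right _)
    (fun j x ↦ norm_dyadicPotential_term_le (by positivity) hq (hK.continuous_fderiv one_ne_zero)
      (hKs.fderiv ℝ) j x) x

theorem contDiff_one_dyadicPotential (hr₀ : 0 ≤ r) (hr₁ : r < 1 / 2) (hq : MemLp q ∞)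
    (hK : ContDiff ℝ 1 K) (hKs : HasCompactSupport K) :
    ContDiff ℝ 1 (dyadicPotential r q K) := by
  have hderiv := hasFDerivAt_dyadicPotential hr₀ hr₁ hq hK hKs
  refine contDiff_one_iff_fderiv.2 ⟨fun x ↦ (hderiv x).differentiableAt, ?_⟩
  rw [funext fun x ↦ (hderiv x).fderiv]
  exact continuous_dyadicPotential (by positivity) (by linarith) hq
    (hK.continuous_fderiv one_ne_zero) (hKs.fderiv ℝ)

theorem isHolderAlong_dyadicPotential (hq : MemLp q ∞) (hK : ContDiff ℝ 1 K)
    (hKs : HasCompactSupport K) : IsHolderAlong ⊤ (dyadicPotential (1 / 2) q K) := by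
  set H := lpNorm q ∞ volume * √(2 * (∫ z, ‖K z‖) * ∫ z, ‖fderiv ℝ K z‖)
  have hterm (j : ℕ) (x y : E) : ‖(1 / 2 : ℝ) ^ j • (q ⋆ dilate j K) x -
      (1 / 2 : ℝ) ^ j • (q ⋆ dilate j K) y‖ ≤ √(1 / 2) ^ j * (H * √‖x - y‖) := by
    have hhalf : (1 / 2 : ℝ) ^ j = √(1 / 2) ^ j * √(1 / 2) ^ j := by
      rw [← mul_pow, Real.mul_self_sqrt (by norm_num)]
    rw [← smul_sub, norm_smul, Real.norm_of_nonneg (by positivity), hhalf, mul_assoc]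
    refine mul_le_mul_of_nonneg_left ?_ (by positivity)
    calc √(1 / 2) ^ j * ‖(q ⋆ dilate j K) x - (q ⋆ dilate j K) y‖
        ≤ √(1 / 2) ^ j * (√(2 ^ j) * (H * √‖x - y‖)) := by
          gcongr
          exact norm_convolution_dilate_sub_le_sqrt hq hK hKs j x y
      _ = H * √‖x - y‖ := by rw [← mul_assoc, sqrt_half_pow_mul_sqrt_two_pow, one_mul]
  have hsum (x : E) := summable_dyadicPotential (r := 1 / 2) (by norm_num) (by norm_num) hq
    hK.continuous hKs x
  refine isHolderAlong_top.2 ⟨(1 - √(1 / 2))⁻¹ * H, fun x y ↦ ?_⟩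
  rw [dyadicPotential, dyadicPotential, ← (hsum x).tsum_sub (hsum y), mul_assoc]
  exact tsum_of_norm_bounded ((hasSum_geometric_of_lt_one (Real.sqrt_nonneg _)
    sqrt_half_lt_one).mul_right _) (hterm · x y)

theorem contDiff_dyadicPotential_of_isHolder (hq : MemLp q ∞) (hqH : IsHolderAlong ⊤ q)
    (hK : ContDiff ℝ 1 K) (hKs : HasCompactSupport K) :
    ContDiff ℝ 1 (dyadicPotential (1 / 2) q K) := by
  obtain ⟨H, hH⟩ := isHolderAlong_top.1 hqH
  have hK' := hK.continuous_fderiv one_ne_zero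
  have hbound (j : ℕ) (x : E) := norm_convolution_dilate_le_of_isHolder hq hH hK' (hKs.fderiv ℝ)
    (integral_fderiv_eq_zero hK hKs) j x
  have hb := (summable_geometric_of_lt_one (Real.sqrt_nonneg _) sqrt_half_lt_one).mul_right
    (H * ∫ y, √‖y‖ * ‖fderiv ℝ K y‖)
  have hderiv := hasFDerivAt_dyadicPotential_of_summable (r := 1 / 2) (by norm_num) (by norm_num)
    hq hK hKs hb (by simpa using hbound)
  refine contDiff_one_iff_fderiv.2 ⟨fun x ↦ (hderiv x).differentiableAt, ?_⟩
  rw [funext fun x ↦ (hderiv x).fderiv]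
  refine continuous_tsum (fun j ↦ ?_) hb (by simpa using hbound)
  exact (contDiff_convolution_dilate (m := 0) hq (contDiff_zero.2 hK') (hKs.fderiv ℝ) j
    ).continuous.const_smul ((2 * (1 / 2) : ℝ) ^ j)

end DyadicPotentials

section DyadicKernel

variable {n : ℕ}

theorem pderiv_norm_sq (i : Fin n) (x : Euc n) : pderiv i (fun y ↦ ‖y‖ ^ 2) x = 2 * x i := by
  simp [pderiv, (hasStrictFDerivAt_norm_sq x).hasFDerivAt.fderiv,
    EuclideanSpace.inner_single_right]

theorem lapl_norm_sq (x : Euc n) : lapl (fun y : Euc n ↦ ‖y‖ ^ 2) x = 2 * n := by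
  have hcoord (i : Fin n) : pderiv i (fun y : Euc n ↦ 2 * y i) x = 2 := by
    have h : HasFDerivAt (fun y : Euc n ↦ 2 * y i)
        ((2 : ℝ) • (EuclideanSpace.proj i : Euc n →L[ℝ] ℝ)) x :=
      (EuclideanSpace.proj i : Euc n →L[ℝ] ℝ).hasFDerivAt.const_mul 2
    simp [pderiv, h.fderiv]
  have hgrad (i : Fin n) : pderiv i (fun y : Euc n ↦ ‖y‖ ^ 2) = fun y ↦ 2 * y i :=
    funext (pderiv_norm_sq i)
  simp only [lapl_eq_sum_pderiv, hgrad, hcoord]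
  simp [mul_comm]

theorem lapl_radial {K : ℝ → ℝ} (hK : ContDiff ℝ 2 K) (x : Euc n) :
    lapl (fun y ↦ K (‖y‖ ^ 2)) x =
      4 * ‖x‖ ^ 2 * deriv (deriv K) (‖x‖ ^ 2) + 2 * n * deriv K (‖x‖ ^ 2) := by
  have hgrad : ∑ i, pderiv i (fun y : Euc n ↦ ‖y‖ ^ 2) x ^ 2 = 4 * ‖x‖ ^ 2 := by
    simp only [pderiv_norm_sq]
    rw [EuclideanSpace.norm_sq_eq, Finset.mul_sum]
    refine Finset.sum_congr rfl fun i _ ↦ ?_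
    rw [Real.norm_eq_abs, sq_abs]
    ring
  refine (lapl_comp hK (contDiff_norm_sq ℝ) x).trans ?_
  rw [hgrad, lapl_norm_sq]
  ring

/-- The smooth cut-off, in the variable `s = ‖x‖ ^ 2`, from `0` on `s ≤ 1 / 2` to `1` on `1 ≤ s`. -/
def radialCutoff (s : ℝ) : ℝ := Real.smoothTransition (2 * s - 1)

/-- The profile of the radial field `x ↦ 2 * fluxProfile n (‖x‖ ^ 2) • x`, which is proportional to
`x / ‖x‖ ^ n`, the gradient of the fundamental solution, outside the unit ball. -/
def fluxProfile (n : ℕ) (s : ℝ) : ℝ := radialCutoff s * s ^ (-(n / 2 : ℝ))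

/-- The divergence of `x ↦ 2 * P (‖x‖ ^ 2) • x` in dimension `n`, as a function of `‖x‖ ^ 2`. -/
def fluxDivergence (n : ℕ) (P : ℝ → ℝ) (s : ℝ) : ℝ := 4 * s * deriv P s + 2 * n * P s

theorem contDiff_radialCutoff : ContDiff ℝ ∞ radialCutoff :=
  Real.smoothTransition.contDiff.comp (by fun_prop)

theorem radialCutoff_of_le {s : ℝ} (hs : s ≤ 1 / 2) : radialCutoff s = 0 :=
  Real.smoothTransition.zero_of_nonpos (by linarith)

theorem radialCutoff_of_ge {s : ℝ} (hs : 1 ≤ s) : radialCutoff s = 1 :=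
  Real.smoothTransition.one_of_one_le (by linarith)

theorem deriv_radialCutoff_nonneg (s : ℝ) : 0 ≤ deriv radialCutoff s :=
  Monotone.deriv_nonneg fun _ _ h ↦ Real.smoothTransition.monotone (by linarith)

theorem deriv_radialCutoff_of_le {s : ℝ} (hs : s ≤ 1 / 2) : deriv radialCutoff s = 0 := by
  refine IsLocalMin.deriv_eq_zero (.of_forall fun t ↦ ?_)
  rw [radialCutoff_of_le hs]
  exact Real.smoothTransition.nonneg _

theorem deriv_radialCutoff_of_ge {s : ℝ} (hs : 1 ≤ s) : deriv radialCutoff s = 0 := by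
  refine IsLocalMax.deriv_eq_zero (.of_forall fun t ↦ ?_)
  rw [radialCutoff_of_ge hs]
  exact Real.smoothTransition.le_one _

theorem exists_deriv_radialCutoff_pos : ∃ s, 0 < s ∧ 0 < deriv radialCutoff s := by
  obtain ⟨s, hs, hslope⟩ := exists_deriv_eq_slope radialCutoff (show (0 : ℝ) < 1 by norm_num)
    contDiff_radialCutoff.continuous.continuousOn
    (contDiff_radialCutoff.differentiable (by simp)).differentiableOn
  refine ⟨s, hs.1, ?_⟩
  rw [hslope, radialCutoff_of_ge le_rfl, radialCutoff_of_le (s := 0) (by norm_num)]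
  norm_num

theorem fluxProfile_eventuallyEq_zero (n : ℕ) {s : ℝ} (hs : s < 1 / 2) :
    fluxProfile n =ᶠ[𝓝 s] 0 := by
  filter_upwards [Iio_mem_nhds hs] with t ht
  simp [fluxProfile, radialCutoff_of_le (le_of_lt ht)]

theorem contDiff_fluxProfile (n : ℕ) : ContDiff ℝ ∞ (fluxProfile n) := by
  refine contDiff_iff_contDiffAt.2 fun s ↦ ?_
  rcases lt_or_ge s (1 / 2) with h | h
  · exact contDiffAt_const.congr_of_eventuallyEq (fluxProfile_eventuallyEq_zero n h)
  · exact contDiff_radialCutoff.contDiffAt.mul (Real.contDiffAt_rpow_const_of_ne (by linarith))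

theorem two_pow_mul_fluxProfile_four_mul (n : ℕ) {s : ℝ} (hs : 1 ≤ s) :
    2 ^ n * fluxProfile n (4 * s) = fluxProfile n s := by
  have h4 : (2 : ℝ) ^ n * 4 ^ (-(n / 2 : ℝ)) = 1 := by
    rw [show (4 : ℝ) = 2 ^ (2 : ℝ) by norm_num, ← Real.rpow_mul (by norm_num),
      ← Real.rpow_natCast, ← Real.rpow_add (by norm_num)]
    ring_nf
    exact Real.rpow_zero 2
  rw [fluxProfile, fluxProfile, radialCutoff_of_ge hs, radialCutoff_of_ge (by linarith),
    Real.mul_rpow (by norm_num) (by linarith)]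
  linear_combination s ^ (-(n / 2 : ℝ)) * h4

theorem fluxDivergence_fluxProfile (n : ℕ) (s : ℝ) :
    fluxDivergence n (fluxProfile n) s = 4 * s * s ^ (-(n / 2 : ℝ)) * deriv radialCutoff s := by
  rcases lt_or_ge s (1 / 2) with h | h
  · have hzero := fluxProfile_eventuallyEq_zero n h
    simp [fluxDivergence, hzero.deriv_eq, hzero.eq_of_nhds, deriv_radialCutoff_of_le h.le]
  · have hs : s ≠ 0 := by linarith
    have hderiv : HasDerivAt (fluxProfile n) _ s :=
      (contDiff_radialCutoff.differentiable (by simp) s).hasDerivAt.mul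
        (Real.hasDerivAt_rpow_const (p := -(n / 2 : ℝ)) (.inl hs))
    rw [fluxDivergence, hderiv.deriv, Real.rpow_sub_one hs, fluxProfile]
    field_simp
    ring

/-- The radial kernel `ρ` of the dyadic decomposition, before normalization. -/
def radialBump (n : ℕ) (x : Euc n) : ℝ := fluxDivergence n (fluxProfile n) (‖x‖ ^ 2)

theorem contDiff_radialBump (n : ℕ) : ContDiff ℝ 2 (radialBump n) := by
  have hP : ContDiff ℝ 2 (fluxProfile n) := contDiff_infty.1 (contDiff_fluxProfile n) 2
  have hP' : ContDiff ℝ 2 (deriv (fluxProfile n)) :=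
    contDiff_infty.1 (contDiff_infty_iff_deriv.1 (contDiff_fluxProfile n)).2 2
  have hdiv : ContDiff ℝ 2 (fluxDivergence n (fluxProfile n)) := by
    unfold fluxDivergence
    fun_prop
  exact hdiv.comp (contDiff_norm_sq ℝ)

theorem hasCompactSupport_of_eq_zero_of_one_le_norm {f : Euc n → ℝ} (hf : ∀ x, 1 ≤ ‖x‖ → f x = 0) :
    HasCompactSupport f :=
  .intro (isCompact_closedBall 0 1) fun x hx ↦ hf x (by simpa using hx : 1 < ‖x‖).le

theorem hasCompactSupport_radialBump (n : ℕ) : HasCompactSupport (radialBump n) :=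
  hasCompactSupport_of_eq_zero_of_one_le_norm fun x hx ↦ by
    rw [radialBump, fluxDivergence_fluxProfile, deriv_radialCutoff_of_ge (one_le_pow₀ hx), mul_zero]

theorem integral_radialBump_pos (hn : 0 < n) : 0 < ∫ x, radialBump n x := by
  obtain ⟨s, hs, hderiv⟩ := exists_deriv_radialCutoff_pos
  have hnorm : ‖√s • (EuclideanSpace.single ⟨0, hn⟩ 1 : Euc n)‖ ^ 2 = s := by
    simp [norm_smul, Real.sq_sqrt hs.le]
  refine (contDiff_radialBump n).continuous.integral_pos_of_hasCompactSupport_nonneg_nonzero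
    (hasCompactSupport_radialBump n) (fun x ↦ ?_)
    (x := √s • EuclideanSpace.single ⟨0, hn⟩ 1) ?_
  · have := deriv_radialCutoff_nonneg (‖x‖ ^ 2)
    rw [radialBump, fluxDivergence_fluxProfile]
    positivity
  · rw [radialBump, hnorm, fluxDivergence_fluxProfile]
    positivity

theorem exists_contDiff_deriv_eq {P : ℝ → ℝ} (hP : ContDiff ℝ 1 P) (hP₀ : ∀ s, 1 ≤ s → P s = 0) :
    ∃ K : ℝ → ℝ, ContDiff ℝ 2 K ∧ deriv K = P ∧ ∀ s, 1 ≤ s → K s = 0 := by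
  have hderiv (s : ℝ) : HasDerivAt (fun s ↦ ∫ t in (1 : ℝ)..s, P t) (P s) s :=
    hP.continuous.integral_hasStrictDerivAt 1 s |>.hasDerivAt
  have hderiv_eq : deriv (fun s ↦ ∫ t in (1 : ℝ)..s, P t) = P := funext fun s ↦ (hderiv s).deriv
  refine ⟨fun s ↦ ∫ t in (1 : ℝ)..s, P t, ?_, hderiv_eq, fun s hs ↦ ?_⟩
  · rw [show (2 : WithTop ℕ∞) = 1 + 1 by norm_num, contDiff_succ_iff_deriv, hderiv_eq]
    exact ⟨fun s ↦ (hderiv s).differentiableAt, by simp, hP⟩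
  · refine (intervalIntegral.integral_congr (g := 0) fun t ht ↦ ?_).trans (by simp)
    rw [uIcc_of_le hs] at ht
    exact hP₀ t ht.1

theorem exists_lapl_eq_dilate_radialBump_sub (n : ℕ) : ∃ Θ : Euc n → ℝ, ContDiff ℝ 2 Θ ∧
    HasCompactSupport Θ ∧ ∀ x, lapl Θ x = dilate 1 (radialBump n) x - radialBump n x := by
  have hP := contDiff_fluxProfile n
  have hPd : Differentiable ℝ (fluxProfile n) := hP.differentiable (by simp)
  obtain ⟨K, hK, hKP, hK₀⟩ := exists_contDiff_deriv_eq
    (P := fun s ↦ 2 ^ n * fluxProfile n (4 * s) - fluxProfile n s)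
    (by have h1 : ContDiff ℝ 1 (fluxProfile n) := contDiff_infty.1 hP 1
        fun_prop)
    fun s hs ↦ sub_eq_zero.2 (two_pow_mul_fluxProfile_four_mul n hs)
  refine ⟨fun y ↦ K (‖y‖ ^ 2), hK.comp (contDiff_norm_sq ℝ),
    hasCompactSupport_of_eq_zero_of_one_le_norm fun x hx ↦ hK₀ _ (one_le_pow₀ hx), fun x ↦ ?_⟩
  have hderiv (s : ℝ) : deriv (fun s ↦ 2 ^ n * fluxProfile n (4 * s) - fluxProfile n s) s =
      2 ^ n * (deriv (fluxProfile n) (4 * s) * 4) - deriv (fluxProfile n) s := by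
    have h4 : HasDerivAt (fun s : ℝ ↦ 4 * s) 4 s := by
      simpa using (hasDerivAt_id s).const_mul 4
    exact ((((hPd _).hasDerivAt.comp _ h4).const_mul (2 ^ n)).sub (hPd _).hasDerivAt).deriv
  have hnorm : ‖(2 : ℝ) • x‖ ^ 2 = 4 * ‖x‖ ^ 2 := by
    rw [norm_smul, mul_pow]
    norm_num
  rw [lapl_radial hK, hKP, hderiv]
  simp only [dilate, radialBump, fluxDivergence, pow_one, hnorm, finrank_euclideanSpace_fin,
    smul_eq_mul]
  ring

/-- `ρ` is a mollifier and `Θ` a compactly supported kernel whose Laplacian is the difference of two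
consecutive dilates of `ρ`. The sum of the rescaled copies of `Θ` stands in for the fundamental
solution of the Laplacian. -/
structure IsDyadicKernel (ρ Θ : Euc n → ℝ) : Prop where
  contDiff_mollifier : ContDiff ℝ 2 ρ
  hasCompactSupport_mollifier : HasCompactSupport ρ
  integral_mollifier : ∫ x, ρ x = 1
  contDiff_kernel : ContDiff ℝ 2 Θ
  hasCompactSupport_kernel : HasCompactSupport Θ
  lapl_kernel (x : Euc n) : lapl Θ x = dilate 1 ρ x - ρ x

theorem exists_isDyadicKernel (n : ℕ) : ∃ ρ Θ : Euc n → ℝ, IsDyadicKernel ρ Θ := by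
  rcases n.eq_zero_or_pos with rfl | hn
  · refine ⟨1, 0, contDiff_const, .of_compactSpace _, ?_, contDiff_const, .zero, fun x ↦ ?_⟩
    · simp [volume_euclideanSpace_eq_dirac]
    · simp [lapl, dilate]
  obtain ⟨Θ, hΘ, hΘs, hlapl⟩ := exists_lapl_eq_dilate_radialBump_sub n
  set I := ∫ x, radialBump n x
  refine ⟨I⁻¹ • radialBump n, I⁻¹ • Θ, contDiff_const.smul (contDiff_radialBump n),
    (hasCompactSupport_radialBump n).smul_left (f := fun _ ↦ I⁻¹), ?_, contDiff_const.smul hΘ,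
    hΘs.smul_left (f := fun _ ↦ I⁻¹), fun x ↦ ?_⟩
  · exact (integral_const_mul I⁻¹ _).trans <| inv_mul_cancel₀ (integral_radialBump_pos hn).ne'
  · simp only [lapl_const_smul, Pi.smul_apply, hlapl, dilate, smul_eq_mul]
    ring

end DyadicKernel

section Representation

open Module
open scoped Convolution

theorem ae_tendsto_convolution_dilate {E : Type*} [NormedAddCommGroup E] [NormedSpace ℝ E]
    [FiniteDimensional ℝ E] [MeasureSpace E] [BorelSpace E] [(volume : Measure E).IsAddHaarMeasure]
    {w ρ : E → ℝ} (hw : LocallyIntegrable w) (hρ : Continuous ρ) (hρs : HasCompactSupport ρ)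
    (hρ₁ : ∫ x, ρ x = 1) : ∀ᵐ x, Tendsto (fun j ↦ (w ⋆ dilate j ρ) x) atTop (𝓝 (w x)) := by
  obtain ⟨B, hB⟩ := hρ.bounded_above_of_compact_support hρs
  obtain ⟨R, hR, hρR⟩ := hρs.isCompact.isBounded.subset_closedBall_lt 0 0
  have hδ : Tendsto (fun j : ℕ ↦ R * (1 / 2) ^ j) atTop (𝓝[>] 0) := by
    refine tendsto_nhdsWithin_iff.2 ⟨?_, .of_forall fun j ↦ mem_Ioi.2 (by positivity)⟩
    simpa using (tendsto_pow_atTop_nhds_zero_of_lt_one (r := (1 / 2 : ℝ)) (by norm_num)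
      (by norm_num)).const_mul R
  filter_upwards [(Besicovitch.vitaliFamily (volume : Measure E)).ae_tendsto_average_norm_sub hw]
    with x hx
  have hlim : Tendsto (fun j ↦ ∫ y, dilate j ρ (x - y) • w y) atTop (𝓝 (w x)) := by
    refine tendsto_integral_smul_of_tendsto_average_norm_sub
      (B * (R ^ finrank ℝ E * volume.real (Metric.closedBall (0 : E) 1)))
      ((hx.comp (Besicovitch.tendsto_filterAt volume x)).comp hδ)
      (.of_forall fun j ↦ hw.integrableOn_isCompact (isCompact_closedBall _ _))
      (tendsto_const_nhds.congr fun j ↦ ?_) (.of_forall fun j y hy ↦ ?_) (.of_forall fun j y ↦ ?_)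
    · rw [integral_sub_left_eq_self, integral_dilate, hρ₁]
    · have hmem := hρR (subset_tsupport ρ (right_ne_zero_of_smul hy))
      rw [mem_closedBall_zero_iff, norm_smul, norm_pow, Real.norm_ofNat] at hmem
      rw [Metric.mem_closedBall, dist_eq_norm_sub', one_div, inv_pow, ← div_eq_mul_inv,
        le_div_iff₀' (by positivity)]
      exact hmem
    · have hV : 0 < volume.real (Metric.closedBall (0 : E) 1) :=
        ENNReal.toReal_pos (Metric.measure_closedBall_pos _ _ one_pos).ne'
          measure_closedBall_lt_top.ne
      rw [Measure.addHaar_real_closedBall' _ x (by positivity), ← Real.norm_eq_abs, norm_dilate,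
        le_div_iff₀ (by positivity), dilate, smul_eq_mul]
      calc _ = ‖ρ ((2 : ℝ) ^ j • (x - y))‖ *
            (R ^ finrank ℝ E * volume.real (Metric.closedBall (0 : E) 1)) := by
            rw [mul_pow, one_div, inv_pow, inv_pow]
            field_simp
        _ ≤ _ := by gcongr; exact hB _
  exact hlim.congr fun j ↦ by simp only [convolution_def, ContinuousLinearMap.lsmul_apply,
    smul_eq_mul, mul_comm]

variable {n : ℕ} {w q₀ f ρ Θ : Euc n → ℝ} {q : Fin n → Euc n → ℝ}

theorem pderiv_comp_smul_sub (hf : Differentiable ℝ f) (c : ℝ) (x : Euc n) (i : Fin n) :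
    pderiv i (fun y ↦ f (c • (x - y))) = (-c) • fun y ↦ pderiv i f (c • (x - y)) := by
  ext y
  have hinner : HasFDerivAt (fun y : Euc n ↦ c • (x - y))
      (c • -ContinuousLinearMap.id ℝ (Euc n)) y :=
    ((hasFDerivAt_id y).const_sub x).const_smul c
  have hcomp := ((hf (c • (x - y))).hasFDerivAt.comp y hinner).fderiv
  rw [Function.comp_def] at hcomp
  simp [pderiv, hcomp]

theorem lapl_comp_smul_sub (hf : ContDiff ℝ 2 f) (c : ℝ) (x y : Euc n) :
    lapl (fun y ↦ f (c • (x - y))) y = c ^ 2 * lapl f (c • (x - y)) := by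
  have hf' (i : Fin n) : Differentiable ℝ (pderiv i f) :=
    (contDiff_pderiv (m := 1) hf (by norm_num) i).differentiable one_ne_zero
  simp only [lapl_eq_sum_pderiv, pderiv_comp_smul_sub (hf.differentiable two_ne_zero),
    pderiv_const_smul, pderiv_comp_smul_sub (hf' _), Finset.mul_sum, Pi.smul_apply, smul_eq_mul]
  exact Finset.sum_congr rfl fun i _ ↦ by ring

theorem hasCompactSupport_comp_smul_sub (hf : HasCompactSupport f) {c : ℝ} (hc : c ≠ 0)
    (x : Euc n) : HasCompactSupport fun y ↦ f (c • (x - y)) :=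
  hf.comp_homeomorph ((Homeomorph.subLeft x).trans (Homeomorph.smulOfNeZero c hc))

theorem HasWeakLapl.integral_comp_smul_sub (h : HasWeakLapl ⊤ w q₀ q) (hw : MemLp w ∞)
    (hq₀ : MemLp q₀ ∞) (hq : ∀ i, MemLp (q i) ∞) (hΘ : ContDiff ℝ 2 Θ) (hΘs : HasCompactSupport Θ)
    {c : ℝ} (hc : c ≠ 0) (x : Euc n) :
    c ^ 2 * ∫ y, w y * lapl Θ (c • (x - y)) =
      (∫ y, q₀ y * Θ (c • (x - y))) + ∑ i, c * ∫ y, q i y * pderiv i Θ (c • (x - y)) := by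
  let ζ : 𝓓^{2}((⊤ : Opens (Euc n)), ℝ) := ⟨fun y ↦ Θ (c • (x - y)), hΘ.comp (by fun_prop),
    hasCompactSupport_comp_smul_sub hΘs hc x, subset_univ _⟩
  have hint {a K : Euc n → ℝ} (ha : MemLp a ∞) (hK : Continuous K) (hKs : HasCompactSupport K) :
      Integrable fun y ↦ a y * K (c • (x - y)) :=
    integrable_mul_of_hasCompactSupport (Ω := ⊤)
      ((ha.locallyIntegrable le_top).locallyIntegrableOn _) (hK.comp (by fun_prop))
      (hasCompactSupport_comp_smul_sub hKs hc x) (subset_univ _)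
  have hlapl := (hint hw (continuous_lapl hΘ) (hasCompactSupport_lapl hΘs)).const_mul (c ^ 2)
  have hzero := hint hq₀ hΘ.continuous hΘs
  have hgrad (i : Fin n) := (hint (hq i) (continuous_pderiv (hΘ.of_le one_le_two) i)
    (hasCompactSupport_pderiv hΘs i)).const_mul c
  have hsum := integrable_finsetSum Finset.univ fun i _ ↦ hgrad i
  have hrhs : Integrable fun y ↦ q₀ y * Θ (c • (x - y)) +
      ∑ i, c * (q i y * pderiv i Θ (c • (x - y))) := hzero.add hsum
  simp only [← integral_const_mul]
  rw [← integral_finsetSum _ fun i _ ↦ hgrad i, ← integral_add hzero hsum, ← sub_eq_zero,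
    ← integral_sub hlapl hrhs, ← h ζ]
  congr 1 with y
  change _ = w y * lapl (fun y ↦ Θ (c • (x - y))) y - q₀ y * Θ (c • (x - y)) +
    ∑ i, q i y * pderiv i (fun y ↦ Θ (c • (x - y))) y
  simp only [lapl_comp_smul_sub hΘ, pderiv_comp_smul_sub (hΘ.differentiable two_ne_zero),
    Pi.smul_apply, smul_eq_mul, neg_mul, mul_neg, Finset.sum_neg_distrib, mul_left_comm (q _ y)]
  ring

theorem HasWeakLapl.convolution_dilate_lapl (h : HasWeakLapl ⊤ w q₀ q) (hw : MemLp w ∞)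
    (hq₀ : MemLp q₀ ∞) (hq : ∀ i, MemLp (q i) ∞) (hΘ : ContDiff ℝ 2 Θ) (hΘs : HasCompactSupport Θ)
    (j : ℕ) (x : Euc n) :
    (w ⋆ dilate j (lapl Θ)) x = (1 / 4 : ℝ) ^ j • (q₀ ⋆ dilate j Θ) x +
      ∑ i, (1 / 2 : ℝ) ^ j • (q i ⋆ dilate j (pderiv i Θ)) x := by
  set c : ℝ := (2 ^ j) ^ finrank ℝ (Euc n)
  have hscale (a K : Euc n → ℝ) :
      (a ⋆ dilate j K) x = c * ∫ y, a y * K ((2 : ℝ) ^ j • (x - y)) := by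
    rw [convolution_def, ← integral_const_mul]
    congr 1 with y
    exact mul_left_comm (a y) c _
  have hj : (2 ^ j : ℝ) ≠ 0 := by positivity
  have hweak := h.integral_comp_smul_sub hw hq₀ hq hΘ hΘs hj x
  have h4 : (1 / 4 : ℝ) ^ j = ((2 ^ j) ^ 2)⁻¹ := by
    rw [one_div, inv_pow, ← pow_mul, mul_comm, pow_mul]
    norm_num
  simp only [hscale, smul_eq_mul, h4, ← Finset.mul_sum] at hweak ⊢
  rw [one_div, inv_pow]
  field_simp
  linear_combination c * hweak

theorem HasWeakLapl.convolution_dilate_eq (h : HasWeakLapl ⊤ w q₀ q) (hw : MemLp w ∞)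
    (hq₀ : MemLp q₀ ∞) (hq : ∀ i, MemLp (q i) ∞) (hk : IsDyadicKernel ρ Θ) (N : ℕ) (x : Euc n) :
    (w ⋆ dilate N ρ) x = (w ⋆ dilate 0 ρ) x +
      ((∑ j ∈ Finset.range N, (1 / 4 : ℝ) ^ j • (q₀ ⋆ dilate j Θ) x) +
        ∑ i, ∑ j ∈ Finset.range N, (1 / 2 : ℝ) ^ j • (q i ⋆ dilate j (pderiv i Θ)) x) := by
  have hstep (j : ℕ) : (w ⋆ dilate (j + 1) ρ) x - (w ⋆ dilate j ρ) x =
      (w ⋆ dilate j (lapl Θ)) x := by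
    have hint (j : ℕ) := integrable_convolution_integrand hw
      (continuous_dilate hk.contDiff_mollifier.continuous j)
      (hasCompactSupport_dilate hk.hasCompactSupport_mollifier j) x
    refine (integral_sub (hint (j + 1)) (hint j)).symm.trans ?_
    rw [convolution_def]
    congr 1 with y
    simp only [ContinuousLinearMap.lsmul_apply, smul_eq_mul, dilate, hk.lapl_kernel,
      pow_one, smul_smul]
    rw [← pow_succ', pow_succ', mul_pow]
    ring
  rw [Finset.sum_comm, ← Finset.sum_add_distrib, ← sub_eq_iff_eq_add',
    ← Finset.sum_range_sub (fun j ↦ (w ⋆ dilate j ρ) x)]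
  exact Finset.sum_congr rfl fun j _ ↦ (hstep j).trans
    (h.convolution_dilate_lapl hw hq₀ hq hk.contDiff_kernel hk.hasCompactSupport_kernel j x)

/-- The function recovered from the data of `Δw = q₀ + ∑ i, ∂ᵢ (q i)` by a dyadic kernel: the
derivatives `∂ᵢ` have been moved onto the kernel. -/
def dyadicRepr (ρ Θ w q₀ : Euc n → ℝ) (q : Fin n → Euc n → ℝ) (x : Euc n) : ℝ :=
  (w ⋆ dilate 0 ρ) x +
    (dyadicPotential (1 / 4) q₀ Θ x + ∑ i, dyadicPotential (1 / 2) (q i) (pderiv i Θ) x)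

theorem HasWeakLapl.ae_eq_dyadicRepr (h : HasWeakLapl ⊤ w q₀ q) (hw : MemLp w ∞)
    (hq₀ : MemLp q₀ ∞) (hq : ∀ i, MemLp (q i) ∞) (hk : IsDyadicKernel ρ Θ) :
    w =ᵐ[volume] dyadicRepr ρ Θ w q₀ q := by
  filter_upwards [ae_tendsto_convolution_dilate (hw.locallyIntegrable le_top)
    hk.contDiff_mollifier.continuous hk.hasCompactSupport_mollifier hk.integral_mollifier]
    with x hx
  refine tendsto_nhds_unique hx (.congr
    (fun N ↦ (h.convolution_dilate_eq hw hq₀ hq hk N x).symm) ?_)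
  have hgrad (i : Fin n) := summable_dyadicPotential (r := 1 / 2) (by norm_num) (by norm_num) (hq i)
    (continuous_pderiv (hk.contDiff_kernel.of_le one_le_two) i)
    (hasCompactSupport_pderiv hk.hasCompactSupport_kernel i) x
  exact tendsto_const_nhds.add <| .add
    (summable_dyadicPotential (by norm_num) (by norm_num) hq₀ hk.contDiff_kernel.continuous
      hk.hasCompactSupport_kernel x).hasSum.tendsto_sum_nat
    (tendsto_finsetSum _ fun i _ ↦ (hgrad i).hasSum.tendsto_sum_nat)

theorem isHolderAlong_dyadicRepr (hw : MemLp w ∞) (hq₀ : MemLp q₀ ∞) (hq : ∀ i, MemLp (q i) ∞)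
    (hk : IsDyadicKernel ρ Θ) (x : Euc n) :
    IsHolderAlong (𝓝 (x, x)) (dyadicRepr ρ Θ w q₀ q) := by
  have hmoll : ContDiff ℝ 1 (w ⋆ dilate 0 ρ) := contDiff_convolution_dilate hw
    (hk.contDiff_mollifier.of_le one_le_two) hk.hasCompactSupport_mollifier 0
  have hpot : ContDiff ℝ 1 (dyadicPotential (1 / 4) q₀ Θ) :=
    contDiff_one_dyadicPotential (by norm_num) (by norm_num) hq₀
      (hk.contDiff_kernel.of_le one_le_two) hk.hasCompactSupport_kernel
  refine (isHolderAlong_of_contDiffAt hmoll.contDiffAt).add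
    ((isHolderAlong_of_contDiffAt hpot.contDiffAt).add (isHolderAlong_sum _ fun i _ ↦ ?_))
  exact (isHolderAlong_dyadicPotential (hq i)
    (contDiff_pderiv hk.contDiff_kernel one_add_one_eq_two.le i)
    (hasCompactSupport_pderiv hk.hasCompactSupport_kernel i)).mono le_top

theorem contDiff_one_dyadicRepr (hw : MemLp w ∞) (hq₀ : MemLp q₀ ∞) (hq : ∀ i, MemLp (q i) ∞)
    (hqH : ∀ i, IsHolderAlong ⊤ (q i)) (hk : IsDyadicKernel ρ Θ) :
    ContDiff ℝ 1 (dyadicRepr ρ Θ w q₀ q) := by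
  refine .add (contDiff_convolution_dilate hw (hk.contDiff_mollifier.of_le one_le_two)
    hk.hasCompactSupport_mollifier 0) (.add ?_ (.sum fun i _ ↦ ?_))
  · exact contDiff_one_dyadicPotential (by norm_num) (by norm_num) hq₀
      (hk.contDiff_kernel.of_le one_le_two) hk.hasCompactSupport_kernel
  · exact contDiff_dyadicPotential_of_isHolder (hq i) (hqH i)
      (contDiff_pderiv hk.contDiff_kernel one_add_one_eq_two.le i)
      (hasCompactSupport_pderiv hk.hasCompactSupport_kernel i)

theorem fderiv_dyadicRepr_zero (hw : MemLp w ∞) (hq₀ : MemLp q₀ ∞) (hk : IsDyadicKernel ρ Θ) :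
    fderiv ℝ (dyadicRepr ρ Θ w q₀ 0) =
      fderiv ℝ (w ⋆ dilate 0 ρ) + dyadicPotential (1 / 2) q₀ (fderiv ℝ Θ) := by
  ext1 x
  have hmoll : ContDiff ℝ 1 (w ⋆ dilate 0 ρ) := contDiff_convolution_dilate hw
    (hk.contDiff_mollifier.of_le one_le_two) hk.hasCompactSupport_mollifier 0
  have hpot := hasFDerivAt_dyadicPotential (r := 1 / 4) (by norm_num) (by norm_num) hq₀
    (hk.contDiff_kernel.of_le one_le_two) hk.hasCompactSupport_kernel x
  have hrepr : dyadicRepr ρ Θ w q₀ 0 = (w ⋆ dilate 0 ρ) + dyadicPotential (1 / 4) q₀ Θ := by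
    ext y
    simp [dyadicRepr, dyadicPotential, convolution_def]
  rw [hrepr, ((hmoll.differentiable one_ne_zero x).hasFDerivAt.add hpot).fderiv]
  norm_num

theorem isHolderAlong_fderiv_dyadicRepr_zero (hw : MemLp w ∞) (hq₀ : MemLp q₀ ∞)
    (hk : IsDyadicKernel ρ Θ) (x : Euc n) :
    IsHolderAlong (𝓝 (x, x)) (fderiv ℝ (dyadicRepr ρ Θ w q₀ 0)) := by
  have hmoll : ContDiff ℝ 2 (w ⋆ dilate 0 ρ) := contDiff_convolution_dilate hw
    hk.contDiff_mollifier hk.hasCompactSupport_mollifier 0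
  rw [fderiv_dyadicRepr_zero hw hq₀ hk]
  exact (isHolderAlong_of_contDiffAt
    (hmoll.fderiv_right one_add_one_eq_two.le).contDiffAt).add
    ((isHolderAlong_dyadicPotential hq₀
      (hk.contDiff_kernel.fderiv_right one_add_one_eq_two.le)
      (hk.hasCompactSupport_kernel.fderiv ℝ)).mono le_top)

theorem contDiff_two_dyadicRepr_zero (hw : MemLp w ∞) (hq₀ : MemLp q₀ ∞)
    (hqH : IsHolderAlong ⊤ q₀) (hk : IsDyadicKernel ρ Θ) :
    ContDiff ℝ 2 (dyadicRepr ρ Θ w q₀ 0) := by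
  have hmoll : ContDiff ℝ 2 (w ⋆ dilate 0 ρ) := contDiff_convolution_dilate hw
    hk.contDiff_mollifier hk.hasCompactSupport_mollifier 0
  have hone : ContDiff ℝ 1 (dyadicRepr ρ Θ w q₀ 0) :=
    contDiff_one_dyadicRepr hw hq₀ (fun _ ↦ .zero) (fun _ ↦ isHolderAlong_const 0) hk
  refine one_add_one_eq_two (R := WithTop ℕ∞) ▸ contDiff_succ_iff_fderiv.2
    ⟨hone.differentiable one_ne_zero, by simp, ?_⟩
  rw [fderiv_dyadicRepr_zero hw hq₀ hk]
  exact (hmoll.fderiv_right one_add_one_eq_two.le).add (contDiff_dyadicPotential_of_isHolder hq₀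
    hqH (hk.contDiff_kernel.fderiv_right one_add_one_eq_two.le)
    (hk.hasCompactSupport_kernel.fderiv ℝ))

end Representation

section LocalRegularity

variable {n : ℕ} {Ω : Opens (Euc n)} {v a b q₀ χ : Euc n → ℝ} {q : Fin n → Euc n → ℝ} {x : Euc n}

/-- A smooth function with compact support in `Ω`, by which functions on `Ω` are localised. -/
structure IsCutoff (Ω : Opens (Euc n)) (χ : Euc n → ℝ) : Prop where
  contDiff : ContDiff ℝ ∞ χ
  hasCompactSupport : HasCompactSupport χ
  tsupport_subset : tsupport χ ⊆ Ω

/-- Measurability and essential boundedness of `a` on every compact subset of `Ω`. -/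
def IsLocallyBounded (Ω : Opens (Euc n)) (a : Euc n → ℝ) : Prop :=
  ∀ K ⊆ (Ω : Set (Euc n)), IsCompact K → MemLp a ∞ (volume.restrict K)

theorem exists_isCutoff_eventuallyEq_one (hx : x ∈ Ω) : ∃ χ, IsCutoff Ω χ ∧ χ =ᶠ[𝓝 x] 1 := by
  obtain ⟨ε, hε, hεΩ⟩ := Metric.nhds_basis_closedBall.mem_iff.1 (Ω.isOpen.mem_nhds hx)
  let χ : ContDiffBump x := ⟨ε / 2, ε, half_pos hε, half_lt_self hε⟩
  exact ⟨χ, ⟨χ.contDiff, χ.hasCompactSupport, χ.tsupport_eq.trans_subset hεΩ⟩,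
    χ.eventuallyEq_one⟩

protected theorem IsCutoff.pderiv (hχ : IsCutoff Ω χ) (i : Fin n) : IsCutoff Ω (pderiv i χ) :=
  ⟨contDiff_pderiv hχ.contDiff le_rfl i, hasCompactSupport_pderiv hχ.hasCompactSupport i,
    (tsupport_pderiv_subset χ i).trans hχ.tsupport_subset⟩

protected theorem IsCutoff.lapl (hχ : IsCutoff Ω χ) : IsCutoff Ω (lapl χ) :=
  ⟨.sum fun i _ ↦ ((hχ.pderiv i).pderiv i).contDiff, hasCompactSupport_lapl hχ.hasCompactSupport,
    (tsupport_lapl_subset χ).trans hχ.tsupport_subset⟩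

theorem isLocallyBounded_of_continuousOn (ha : ContinuousOn a Ω) : IsLocallyBounded Ω a := by
  intro K hK hKc
  obtain ⟨C, hC⟩ := hKc.exists_bound_of_continuousOn (ha.mono hK)
  exact memLp_top_of_bound ((ha.mono hK).aestronglyMeasurable hKc.measurableSet) C
    (ae_restrict_of_forall_mem hKc.measurableSet hC)

theorem IsLocallyBounded.mono (hb : IsLocallyBounded Ω b)
    (ha : AEStronglyMeasurable a (volume.restrict Ω))
    (hab : ∀ᵐ x ∂volume.restrict Ω, |a x| ≤ |b x|) : IsLocallyBounded Ω a :=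
  fun K hK hKc ↦ (hb K hK hKc).mono (ha.mono_set hK) (ae_restrict_of_ae_restrict_of_subset hK hab)

theorem IsLocallyBounded.mul (ha : IsLocallyBounded Ω a) (hb : IsLocallyBounded Ω b) :
    IsLocallyBounded Ω fun x ↦ a x * b x :=
  fun K hK hKc ↦ (hb K hK hKc).mul (ha K hK hKc)

theorem IsLocallyBounded.neg (ha : IsLocallyBounded Ω a) : IsLocallyBounded Ω fun x ↦ -a x :=
  fun K hK hKc ↦ (ha K hK hKc).neg

theorem IsLocallyBounded.sub (ha : IsLocallyBounded Ω a) (hb : IsLocallyBounded Ω b) :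
    IsLocallyBounded Ω fun x ↦ a x - b x :=
  fun K hK hKc ↦ (ha K hK hKc).sub (hb K hK hKc)

theorem IsLocallyBounded.locallyIntegrableOn (ha : IsLocallyBounded Ω a) :
    LocallyIntegrableOn a Ω := by
  refine (locallyIntegrableOn_iff Ω.isOpen.isLocallyClosed).2 fun K hK hKc ↦ ?_
  have := isFiniteMeasure_restrict.2 (hKc.measure_lt_top (μ := volume)).ne
  exact (ha K hK hKc).integrable le_top

theorem IsCutoff.memLp_mul (hχ : IsCutoff Ω χ) (ha : IsLocallyBounded Ω a) :
    MemLp (fun x ↦ χ x * a x) ∞ := by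
  have hind : (tsupport χ).indicator (fun x ↦ χ x * a x) = fun x ↦ χ x * a x :=
    indicator_eq_self.2 ((Function.support_mul_subset_left _ _).trans (subset_tsupport χ))
  rw [← hind, memLp_indicator_iff_restrict (isClosed_tsupport χ).measurableSet]
  exact (ha _ hχ.tsupport_subset hχ.hasCompactSupport).mul
    ((hχ.contDiff.continuous.memLp_top_of_hasCompactSupport hχ.hasCompactSupport _).restrict _)

theorem IsCutoff.contDiff_mul (hχ : IsCutoff Ω χ) (hv : ContDiffOn ℝ 1 v Ω) :
    ContDiff ℝ 1 fun x ↦ χ x * v x :=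
  contMDiff_iff_contDiff.1 <| contMDiff_of_tsupport fun _ hx ↦
    ((hχ.contDiff.of_le (by simp)).contDiffAt.mul (hv.contDiffAt (Ω.isOpen.mem_nhds
      (hχ.tsupport_subset (tsupport_mul_subset_left hx))))).contMDiffAt

theorem IsCutoff.pderiv_mul (hχ : IsCutoff Ω χ) (hv : ContDiffOn ℝ 1 v Ω) (i : Fin n)
    (x : Euc n) :
    pderiv i (fun x ↦ χ x * v x) x = χ x * pderiv i v x + pderiv i χ x * v x := by
  by_cases hx : x ∈ tsupport χ
  · exact ExplosionProblem.pderiv_mul (hχ.contDiff.differentiable (by simp) x)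
      ((hv.contDiffAt (Ω.isOpen.mem_nhds (hχ.tsupport_subset hx))).differentiableAt one_ne_zero) i
  · have hpderiv {f : Euc n → ℝ} (hf : tsupport f ⊆ tsupport χ) : pderiv i f x = 0 :=
      image_eq_zero_of_notMem_tsupport fun h ↦ hx (hf (tsupport_pderiv_subset f i h))
    rw [hpderiv tsupport_mul_subset_left, hpderiv subset_rfl,
      image_eq_zero_of_notMem_tsupport hx, zero_mul, zero_mul, add_zero]

theorem eventuallyEq_cutoff_mul (h : χ =ᶠ[𝓝 x] 1) (v : Euc n → ℝ) :
    (fun x ↦ χ x * v x) =ᶠ[𝓝 x] v := by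
  filter_upwards [h] with y hy
  rw [hy, Pi.one_apply, one_mul]

theorem IsCutoff.isHolderAlong_mul (hχ : IsCutoff Ω χ)
    (ha : ∀ x ∈ Ω, IsHolderAlong (𝓝 (x, x)) a) : IsHolderAlong ⊤ fun x ↦ χ x * a x := by
  refine isHolderAlong_top_of_hasCompactSupport hχ.hasCompactSupport.mul_right fun x ↦ ?_
  by_cases hx : x ∈ tsupport χ
  · exact (isHolderAlong_of_contDiffAt (hχ.contDiff.of_le (by simp)).contDiffAt).mul
      (ha x (hχ.tsupport_subset hx))
  · refine (isHolderAlong_const 0).congr ?_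
    filter_upwards [notMem_tsupport_iff_eventuallyEq.1 hx] with y hy
    rw [hy, Pi.zero_apply, zero_mul]

/-- The function part of `Δ(χ v)` when `Δv = q₀ + ∑ i, ∂ᵢ (q i)`. -/
def cutoffSource (χ v q₀ : Euc n → ℝ) (q : Fin n → Euc n → ℝ) (x : Euc n) : ℝ :=
  χ x * q₀ x - ∑ i, pderiv i χ x * q i x - lapl χ x * v x

/-- The vector field whose divergence occurs in `Δ(χ v)` when `Δv = q₀ + ∑ i, ∂ᵢ (q i)`. -/
def cutoffFlux (χ v : Euc n → ℝ) (q : Fin n → Euc n → ℝ) (i : Fin n) (x : Euc n) : ℝ :=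
  χ x * q i x + 2 * (pderiv i χ x * v x)

theorem HasWeakLapl.mul_cutoff (h : HasWeakLapl Ω v q₀ q) (hχ : IsCutoff Ω χ) :
    HasWeakLapl ⊤ (fun x ↦ χ x * v x) (cutoffSource χ v q₀ q) (cutoffFlux χ v q) := by
  intro ζ
  have hχ₂ : ContDiff ℝ 2 χ := hχ.contDiff.of_le (by norm_cast)
  let χζ : 𝓓^{2}(Ω, ℝ) := ⟨fun x ↦ χ x * ζ x, hχ₂.mul ζ.contDiff,
    hχ.hasCompactSupport.mul_right, tsupport_mul_subset_left.trans hχ.tsupport_subset⟩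
  rw [← h χζ]
  congr 1 with x
  have hmul (i : Fin n) : pderiv i χζ x =
      χ x * pderiv i ζ x + pderiv i χ x * ζ x :=
    pderiv_mul (hχ₂.differentiable two_ne_zero x) (ζ.contDiff.differentiable two_ne_zero x) i
  rw [show lapl χζ x = _ from lapl_mul hχ₂ ζ.contDiff x, show χζ x = χ x * ζ x from rfl]
  simp only [hmul, cutoffSource, cutoffFlux, add_mul, mul_add, Finset.sum_add_distrib, sub_mul,
    Finset.sum_mul, Finset.mul_sum]
  simp only [mul_assoc, mul_left_comm, mul_comm]
  ring

theorem IsCutoff.memLp_cutoffSource (hχ : IsCutoff Ω χ) (hv : IsLocallyBounded Ω v)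
    (hq₀ : IsLocallyBounded Ω q₀) (hq : ∀ i, IsLocallyBounded Ω (q i)) :
    MemLp (cutoffSource χ v q₀ q) ∞ :=
  ((hχ.memLp_mul hq₀).sub (memLp_finsetSum _ fun i _ ↦ (hχ.pderiv i).memLp_mul (hq i))).sub
    (hχ.lapl.memLp_mul hv)

theorem IsCutoff.memLp_cutoffFlux (hχ : IsCutoff Ω χ) (hv : IsLocallyBounded Ω v)
    (hq : ∀ i, IsLocallyBounded Ω (q i)) (i : Fin n) : MemLp (cutoffFlux χ v q i) ∞ :=
  (hχ.memLp_mul (hq i)).add (((hχ.pderiv i).memLp_mul hv).const_mul 2)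

theorem IsCutoff.isHolderAlong_cutoffFlux (hχ : IsCutoff Ω χ)
    (hv : ∀ x ∈ Ω, IsHolderAlong (𝓝 (x, x)) v)
    (hq : ∀ i, ∀ x ∈ Ω, IsHolderAlong (𝓝 (x, x)) (q i)) (i : Fin n) :
    IsHolderAlong ⊤ (cutoffFlux χ v q i) :=
  (hχ.isHolderAlong_mul (hq i)).add
    (((hχ.pderiv i).isHolderAlong_mul hv).clm_comp ((2 : ℝ) • ContinuousLinearMap.id ℝ ℝ))

theorem exists_ae_eq_of_forall_ae_eq {X Y : Type*} [TopologicalSpace X] [MeasurableSpace X]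
    [OpensMeasurableSpace X] [SecondCountableTopology X] {μ : Measure X}
    [μ.IsOpenPosMeasure] [TopologicalSpace Y] [T2Space Y] {s : Set X} (hs : MeasurableSet s)
    {f : X → Y} {P : X → X → Y} (hP : ∀ x ∈ s, Continuous (P x))
    (hf : ∀ x ∈ s, ∃ U, IsOpen U ∧ x ∈ U ∧ U ⊆ s ∧ f =ᵐ[μ.restrict U] P x) :
    ∃ f' : X → Y, f =ᵐ[μ.restrict s] f' ∧ ∀ x ∈ s, f' =ᶠ[𝓝 x] P x := by
  choose! U hUo hxU hUs hfU using hf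
  have hdiag {x y : X} (hx : x ∈ s) (hy : y ∈ U x) : P y y = P x y := by
    have hys := hUs x hx hy
    have hPx : f =ᵐ[μ.restrict (U x ∩ U y)] P x :=
      (hfU x hx).filter_mono (ae_mono (Measure.restrict_mono_set _ inter_subset_left))
    have hPy : f =ᵐ[μ.restrict (U x ∩ U y)] P y :=
      (hfU y hys).filter_mono (ae_mono (Measure.restrict_mono_set _ inter_subset_right))
    exact Measure.eqOn_open_of_ae_eq (hPy.symm.trans hPx) ((hUo x hx).inter (hUo y hys))
      (hP y hys).continuousOn (hP x hx).continuousOn ⟨hy, hxU y hys⟩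
  refine ⟨fun y ↦ P y y, (ae_restrict_iff' hs).2 ?_, fun x hx ↦ ?_⟩
  · refine measure_null_of_locally_null _ fun x hx ↦ ?_
    have hxs : x ∈ s := of_not_imp hx
    refine ⟨_, inter_mem_nhdsWithin _ ((hUo x hxs).mem_nhds (hxU x hxs)), ?_⟩
    refine measure_mono_null ?_ ((ae_restrict_iff' (hUo x hxs).measurableSet).1 (hfU x hxs))
    exact fun y hy hyU ↦ hy.1 fun _ ↦ (hyU hy.2).trans (hdiag hxs hy.2).symm
  · filter_upwards [(hUo x hx).mem_nhds (hxU x hx)] with y hy using hdiag hx hy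

theorem HasWeakLapl.exists_ae_eq_isHolderAlong (h : HasWeakLapl Ω v q₀ q)
    (hv : IsLocallyBounded Ω v) (hq₀ : IsLocallyBounded Ω q₀) (hq : ∀ i, IsLocallyBounded Ω (q i)) :
    ∃ v', v =ᵐ[volume.restrict Ω] v' ∧ ∀ x ∈ Ω, IsHolderAlong (𝓝 (x, x)) v' := by
  obtain ⟨ρ, Θ, hk⟩ := exists_isDyadicKernel n
  have hloc : ∀ x ∈ (Ω : Set (Euc n)), ∃ P : Euc n → ℝ,
      (∀ y, IsHolderAlong (𝓝 (y, y)) P) ∧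
      ∃ U, IsOpen U ∧ x ∈ U ∧ U ⊆ Ω ∧ v =ᵐ[volume.restrict U] P := by
    intro x hx
    obtain ⟨χ, hχ, hχ₁⟩ := exists_isCutoff_eventuallyEq_one hx
    have hw := hχ.memLp_mul hv
    have hQ₀ := hχ.memLp_cutoffSource hv hq₀ hq
    have hQ := hχ.memLp_cutoffFlux hv hq
    obtain ⟨U, hU, hUo, hxU⟩ := eventually_nhds_iff.1 (hχ₁.and (Ω.isOpen.mem_nhds hx))
    refine ⟨_, isHolderAlong_dyadicRepr hw hQ₀ hQ hk, U, hUo, hxU, fun y hy ↦ (hU y hy).2,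
      (ae_restrict_iff' hUo.measurableSet).2 ?_⟩
    filter_upwards [(h.mul_cutoff hχ).ae_eq_dyadicRepr hw hQ₀ hQ hk] with y hy hyU
    rw [← hy, (hU y hyU).1, Pi.one_apply, one_mul]
  choose! P hP hvP using hloc
  obtain ⟨v', hv', hv'P⟩ := exists_ae_eq_of_forall_ae_eq Ω.isOpen.measurableSet
    (fun x hx ↦ continuous_iff_continuousAt.2 fun y ↦ (hP x hx y).continuousAt) hvP
  exact ⟨v', hv', fun x hx ↦ (hP x hx x).congr (hv'P x hx)⟩

theorem HasWeakLapl.eq_dyadicRepr {ρ Θ w : Euc n → ℝ} (h : HasWeakLapl ⊤ w q₀ q)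
    (hw : Continuous w) (hws : HasCompactSupport w) (hq₀ : MemLp q₀ ∞) (hq : ∀ i, MemLp (q i) ∞)
    (hk : IsDyadicKernel ρ Θ) : w = dyadicRepr ρ Θ w q₀ q := by
  have hw' := hw.memLp_top_of_hasCompactSupport hws volume
  exact (hw.ae_eq_iff_eq volume (continuous_iff_continuousAt.2 fun x ↦
    (isHolderAlong_dyadicRepr hw' hq₀ hq hk x).continuousAt)).1 (h.ae_eq_dyadicRepr hw' hq₀ hq hk)

theorem HasWeakLapl.contDiffOn_one (h : HasWeakLapl Ω v q₀ q)
    (hv : ∀ x ∈ Ω, IsHolderAlong (𝓝 (x, x)) v) (hq₀ : IsLocallyBounded Ω q₀)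
    (hq : ∀ i, ∀ x ∈ Ω, IsHolderAlong (𝓝 (x, x)) (q i)) : ContDiffOn ℝ 1 v Ω := by
  obtain ⟨ρ, Θ, hk⟩ := exists_isDyadicKernel n
  have hcont {a : Euc n → ℝ} (ha : ∀ x ∈ Ω, IsHolderAlong (𝓝 (x, x)) a) : ContinuousOn a Ω :=
    fun x hx ↦ (ha x hx).continuousAt.continuousWithinAt
  have hv' := isLocallyBounded_of_continuousOn (hcont hv)
  have hq' (i : Fin n) := isLocallyBounded_of_continuousOn (hcont (hq i))
  intro x hx
  obtain ⟨χ, hχ, hχ₁⟩ := exists_isCutoff_eventuallyEq_one hx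
  have hQ₀ := hχ.memLp_cutoffSource hv' hq₀ hq'
  have hQ := hχ.memLp_cutoffFlux hv' hq'
  have hχv : Continuous fun y ↦ χ y * v y := continuous_iff_continuousAt.2 fun y ↦
    IsHolderAlong.continuousAt ((hχ.isHolderAlong_mul hv).mono le_top)
  have hrepr :=
    (h.mul_cutoff hχ).eq_dyadicRepr hχv hχ.hasCompactSupport.mul_right hQ₀ hQ hk
  have hw : ContDiff ℝ 1 fun x ↦ χ x * v x := hrepr ▸ contDiff_one_dyadicRepr
    (hχ.memLp_mul hv') hQ₀ hQ (hχ.isHolderAlong_cutoffFlux hv hq) hk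
  exact (hw.contDiffAt.congr_of_eventuallyEq (eventuallyEq_cutoff_mul hχ₁ v).symm).contDiffWithinAt

/-- The value of `Δ(χ v)` when `v` is continuously differentiable and `Δv = q₀`. -/
def cutoffLapl (χ v q₀ : Euc n → ℝ) (x : Euc n) : ℝ :=
  χ x * q₀ x + 2 * ∑ i, pderiv i χ x * pderiv i v x + lapl χ x * v x

theorem HasWeakLapl.mul_cutoff_of_contDiffOn (h : HasWeakLapl Ω v q₀ 0)
    (hv : ContDiffOn ℝ 1 v Ω) (hχ : IsCutoff Ω χ) :
    HasWeakLapl ⊤ (fun x ↦ χ x * v x) (cutoffLapl χ v q₀) 0 := by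
  have hflux (i : Fin n) : cutoffFlux χ v 0 i = (2 : ℝ) • fun x ↦ pderiv i χ x * v x := by
    ext x
    simp [cutoffFlux]
  have hdiff (i : Fin n) : ContDiff ℝ 1 (cutoffFlux χ v 0 i) :=
    hflux i ▸ contDiff_const.smul ((hχ.pderiv i).contDiff_mul hv)
  convert (hasWeakLapl_iff_absorb_divergence fun i ↦ (hdiff i).contDiffOn).1
    (h.mul_cutoff hχ) using 1
  ext x
  have hpderiv (i : Fin n) : pderiv i (cutoffFlux χ v 0 i) x =
      2 * (pderiv i χ x * pderiv i v x) + 2 * (pderiv i (pderiv i χ) x * v x) := by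
    rw [hflux, pderiv_const_smul, ← mul_add, ← (hχ.pderiv i).pderiv_mul hv]
    rfl
  simp only [cutoffLapl, cutoffSource, lapl_eq_sum_pderiv, hpderiv, Finset.sum_add_distrib,
    ← Finset.mul_sum, ← Finset.sum_mul, Pi.zero_apply, mul_zero, Finset.sum_const_zero]
  ring

theorem IsCutoff.memLp_cutoffLapl (hχ : IsCutoff Ω χ) (hv : ContDiffOn ℝ 1 v Ω)
    (hq₀ : IsLocallyBounded Ω q₀) : MemLp (cutoffLapl χ v q₀) ∞ :=
  ((hχ.memLp_mul hq₀).add ((memLp_finsetSum _ fun i _ ↦ (hχ.pderiv i).memLp_mul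
    (isLocallyBounded_of_continuousOn (continuousOn_pderiv hv i))).const_mul 2)).add
    (hχ.lapl.memLp_mul (isLocallyBounded_of_continuousOn hv.continuousOn))

theorem HasWeakLapl.exists_eventuallyEq_dyadicRepr {ρ Θ : Euc n → ℝ} (h : HasWeakLapl Ω v q₀ 0)
    (hv : ContDiffOn ℝ 1 v Ω) (hq₀ : IsLocallyBounded Ω q₀) (hk : IsDyadicKernel ρ Θ)
    (hx : x ∈ Ω) : ∃ χ, IsCutoff Ω χ ∧
      v =ᶠ[𝓝 x] dyadicRepr ρ Θ (fun x ↦ χ x * v x) (cutoffLapl χ v q₀) 0 := by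
  obtain ⟨χ, hχ, hχ₁⟩ := exists_isCutoff_eventuallyEq_one hx
  have hrepr := (h.mul_cutoff_of_contDiffOn hv hχ).eq_dyadicRepr (hχ.contDiff_mul hv).continuous
    hχ.hasCompactSupport.mul_right (hχ.memLp_cutoffLapl hv hq₀) (fun _ ↦ .zero) hk
  exact ⟨χ, hχ, hrepr ▸ (eventuallyEq_cutoff_mul hχ₁ v).symm⟩

theorem HasWeakLapl.isHolderAlong_pderiv (h : HasWeakLapl Ω v q₀ 0) (hv : ContDiffOn ℝ 1 v Ω)
    (hq₀ : IsLocallyBounded Ω q₀) (hx : x ∈ Ω) (i : Fin n) :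
    IsHolderAlong (𝓝 (x, x)) (pderiv i v) := by
  obtain ⟨ρ, Θ, hk⟩ := exists_isDyadicKernel n
  obtain ⟨χ, hχ, hrepr⟩ := h.exists_eventuallyEq_dyadicRepr hv hq₀ hk hx
  have hfderiv := (isHolderAlong_fderiv_dyadicRepr_zero
    (hχ.memLp_mul (isLocallyBounded_of_continuousOn hv.continuousOn))
    (hχ.memLp_cutoffLapl hv hq₀) hk x).congr hrepr.fderiv
  exact hfderiv.clm_comp (ContinuousLinearMap.apply ℝ ℝ (EuclideanSpace.single i 1))

theorem HasWeakLapl.contDiffOn_two (h : HasWeakLapl Ω v q₀ 0) (hv : ContDiffOn ℝ 1 v Ω)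
    (hq₀ : ∀ x ∈ Ω, IsHolderAlong (𝓝 (x, x)) q₀) : ContDiffOn ℝ 2 v Ω := by
  obtain ⟨ρ, Θ, hk⟩ := exists_isDyadicKernel n
  have hq₀' : IsLocallyBounded Ω q₀ := isLocallyBounded_of_continuousOn fun x hx ↦
    (hq₀ x hx).continuousAt.continuousWithinAt
  have hvH : ∀ x ∈ Ω, IsHolderAlong (𝓝 (x, x)) v := fun x hx ↦
    isHolderAlong_of_contDiffAt (hv.contDiffAt (Ω.isOpen.mem_nhds hx))
  intro x hx
  obtain ⟨χ, hχ, hrepr⟩ := h.exists_eventuallyEq_dyadicRepr hv hq₀' hk hx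
  have hQ : IsHolderAlong ⊤ (cutoffLapl χ v q₀) :=
    ((hχ.isHolderAlong_mul hq₀).add ((isHolderAlong_sum Finset.univ fun i _ ↦
      (hχ.pderiv i).isHolderAlong_mul fun y hy ↦ h.isHolderAlong_pderiv hv hq₀' hy i).clm_comp
        ((2 : ℝ) • ContinuousLinearMap.id ℝ ℝ))).add (hχ.lapl.isHolderAlong_mul hvH)
  exact ((contDiff_two_dyadicRepr_zero
    (hχ.memLp_mul (isLocallyBounded_of_continuousOn hv.continuousOn))
    (hχ.memLp_cutoffLapl hv hq₀') hQ hk).contDiffAt.congr_of_eventuallyEq hrepr).contDiffWithinAt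

section Drift

variable {u : Euc n → Euc n} {f : Euc n → ℝ}

/-- The drift is first carried by the divergence term, and becomes a function once `v` is
differentiable. -/
theorem IsWeakSol.contDiffOn_two (h : IsWeakSol Ω u v f) (hu : ContDiffOn ℝ 1 u Ω)
    (hv : ∀ x ∈ Ω, IsHolderAlong (𝓝 (x, x)) v) (hf : ∀ x ∈ Ω, IsHolderAlong (𝓝 (x, x)) f) :
    ContDiffOn ℝ 2 v Ω := by
  have hcont {a : Euc n → ℝ} (ha : ∀ x ∈ Ω, IsHolderAlong (𝓝 (x, x)) a) : ContinuousOn a Ω :=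
    fun x hx ↦ (ha x hx).continuousAt.continuousWithinAt
  have hint {a : Euc n → ℝ} (ha : ContinuousOn a Ω) : LocallyIntegrableOn a Ω :=
    ha.locallyIntegrableOn Ω.isOpen.measurableSet
  have huH (i) (x) (hx : x ∈ Ω) : IsHolderAlong (𝓝 (x, x)) fun x ↦ u x i :=
    isHolderAlong_of_contDiffAt ((contDiffOn_coord hu i).contDiffAt (Ω.isOpen.mem_nhds hx))
  have hone : ContDiffOn ℝ 1 v Ω :=
    ((isWeakSol_iff_hasWeakLapl hu (hint (hcont hv)) (hint (hcont hf))).1 h).contDiffOn_one hv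
      (isLocallyBounded_of_continuousOn
        ((hcont hf).neg.sub ((continuousOn_dvg hu).mul (hcont hv))))
      fun i x hx ↦ (huH i x hx).mul (hv x hx)
  have hlapl : HasWeakLapl Ω v (fun x ↦ ⟪u x, gradient v x⟫ - f x) 0 :=
    (isWeakSol_iff_of_contDiffOn hu hone (hint (hcont hf))).1 h
  have hsource := isLocallyBounded_of_continuousOn
    ((continuousOn_inner_gradient hu hone).sub (hcont hf))
  refine hlapl.contDiffOn_two hone fun x hx ↦ IsHolderAlong.sub ?_ (hf x hx)
  simp only [inner_gradient]
  exact isHolderAlong_sum _ fun i _ ↦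
    (huH i x hx).mul (hlapl.isHolderAlong_pderiv hone hsource hx i)

theorem IsWeakSol.eqOn_of_contDiffOn (h : IsWeakSol Ω u v f) (hu : ContDiffOn ℝ 1 u Ω)
    (hv : ContDiffOn ℝ 2 v Ω) (hf : ContinuousOn f Ω) :
    EqOn (fun x ↦ -lapl v x + ⟪u x, gradient v x⟫) f Ω := by
  intro x hx
  have hone := hv.of_le one_le_two
  have hweak := (isWeakSol_iff_of_contDiffOn hu hone
    (hf.locallyIntegrableOn Ω.isOpen.measurableSet)).1 h
  have hlapl := eqOn_of_hasWeakLapl (hasWeakLapl_of_contDiffOn hv) hweak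
    (hv.continuousOn.locallyIntegrableOn Ω.isOpen.measurableSet) (continuousOn_lapl hv)
    ((continuousOn_inner_gradient hu hone).sub hf) hx
  simp only [hlapl]
  ring

theorem IsWeakSol.exists_ae_eq_contDiffOn {G : ℝ → ℝ}
    (h : IsWeakSol Ω u v (G ∘ v)) (hu : ContDiffOn ℝ 1 u Ω) (hG : ContDiff ℝ 1 G)
    (hv : IsLocallyBounded Ω v) (hGv : IsLocallyBounded Ω (G ∘ v)) :
    ∃ v', v =ᵐ[volume.restrict Ω] v' ∧ ContDiffOn ℝ 2 v' Ω ∧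
      ∀ x ∈ Ω, -lapl v' x + ⟪u x, gradient v' x⟫ = G (v' x) := by
  have hweak := (isWeakSol_iff_hasWeakLapl hu hv.locallyIntegrableOn hGv.locallyIntegrableOn).1 h
  have hdvg := (isLocallyBounded_of_continuousOn (continuousOn_dvg hu)).mul hv
  obtain ⟨v', hvv', hv'⟩ := hweak.exists_ae_eq_isHolderAlong hv (hGv.neg.sub hdvg) fun i ↦
    (isLocallyBounded_of_continuousOn (contDiffOn_coord hu i).continuousOn).mul hv
  have hGv' (x) (hx : x ∈ Ω) : IsHolderAlong (𝓝 (x, x)) (G ∘ v') :=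
    (hv' x hx).comp_contDiff hG
  have h' : IsWeakSol Ω u v' (G ∘ v') := h.congr hvv' (hvv'.fun_comp G)
  have htwo := h'.contDiffOn_two hu hv' hGv'
  exact ⟨v', hvv', htwo, h'.eqOn_of_contDiffOn hu htwo
    (hG.continuous.comp_continuousOn htwo.continuousOn)⟩

end Drift

end LocalRegularity

section MinimumPrinciple

variable {n : ℕ} {Ω : Set (Euc n)} {u : Euc n → Euc n} {w : Euc n → ℝ} {x : Euc n}

theorem deriv_deriv_nonneg_of_isLocalMin {f : ℝ → ℝ} {t : ℝ} (hf : ContinuousAt f t)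
    (h : IsLocalMin f t) : 0 ≤ deriv (deriv f) t := by
  by_contra! hneg
  have hconst : f =ᶠ[𝓝 t] fun _ ↦ f t :=
    EventuallyLE.antisymm (isLocalMax_of_deriv_deriv_neg hneg h.deriv_eq_zero hf) h
  simp [hconst.deriv.deriv_eq] at hneg

theorem pderiv_pderiv_eq_deriv_deriv {f : Euc n → ℝ} (hf : ContDiffAt ℝ 2 f x) (i : Fin n) :
    pderiv i (pderiv i f) x =
      deriv (deriv fun t : ℝ ↦ f (x + t • EuclideanSpace.single i 1)) 0 := by
  have hline (t : ℝ) : HasDerivAt (fun t : ℝ ↦ x + t • EuclideanSpace.single i (1 : ℝ))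
      (EuclideanSpace.single i 1) t := by
    simpa using ((hasDerivAt_id t).smul_const _).const_add x
  have htendsto : Tendsto (fun t : ℝ ↦ x + t • EuclideanSpace.single i (1 : ℝ)) (𝓝 0) (𝓝 x) := by
    simpa using (hline 0).continuousAt.tendsto
  have hfirst : deriv (fun t : ℝ ↦ f (x + t • EuclideanSpace.single i 1)) =ᶠ[𝓝 0]
      fun t ↦ pderiv i f (x + t • EuclideanSpace.single i 1) := by
    filter_upwards [htendsto.eventually (hf.eventually (by simp))] with t ht
    exact ((ht.differentiableAt two_ne_zero).hasFDerivAt.comp_hasDerivAt t (hline t)).deriv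
  have hpderiv : DifferentiableAt ℝ (pderiv i f) x :=
    ((hf.fderiv_right one_add_one_eq_two.le).clm_apply contDiffAt_const).differentiableAt
      one_ne_zero
  rw [hfirst.deriv_eq]
  have hpderiv₀ : HasFDerivAt (pderiv i f) (fderiv ℝ (pderiv i f) x)
      (x + (0 : ℝ) • EuclideanSpace.single i 1) := by
    simpa using hpderiv.hasFDerivAt
  exact (hpderiv₀.comp_hasDerivAt 0 (hline 0)).deriv.symm

theorem lapl_nonneg_of_isLocalMin (hw : ContDiffAt ℝ 2 w x) (h : IsLocalMin w x) :
    0 ≤ lapl w x := by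
  refine Finset.sum_nonneg fun i _ ↦ ?_
  refine (deriv_deriv_nonneg_of_isLocalMin ?_ ?_).trans_eq (pderiv_pderiv_eq_deriv_deriv hw i).symm
  · refine ContinuousAt.comp' (f := fun t : ℝ ↦ x + t • EuclideanSpace.single i (1 : ℝ)) ?_
      (by fun_prop)
    simpa using hw.continuousAt
  · have hline : Continuous fun t : ℝ ↦ x + t • EuclideanSpace.single i (1 : ℝ) := by fun_prop
    have hmin := (hline.tendsto' 0 x (by simp)).eventually h
    simpa [IsLocalMin, IsMinFilter] using hmin

theorem nonneg_of_elliptic_pos (hΩ : IsOpen Ω) (hΩb : Bornology.IsBounded Ω)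
    (hw : ∀ x ∈ Ω, ContDiffAt ℝ 2 w x) (hwc : ContinuousOn w (closure Ω))
    (hwb : ∀ x ∈ frontier Ω, 0 ≤ w x) (hpos : ∀ x ∈ Ω, 0 < -lapl w x + ⟪u x, gradient w x⟫)
    (hx : x ∈ Ω) : 0 ≤ w x := by
  obtain ⟨y, hy, hmin⟩ :=
    hΩb.isCompact_closure.exists_isMinOn ⟨x, subset_closure hx⟩ hwc
  refine le_trans ?_ (hmin (subset_closure hx))
  by_cases hyΩ : y ∈ Ω
  · have hloc : IsLocalMin w y :=
      (hmin.on_subset subset_closure).isLocalMin (hΩ.mem_nhds hyΩ)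
    have hgrad : gradient w y = 0 := by rw [gradient, hloc.fderiv_eq_zero, map_zero]
    have hlapl := lapl_nonneg_of_isLocalMin (hw y hyΩ) hloc
    have := hpos y hyΩ
    rw [hgrad, inner_zero_right] at this
    linarith
  · exact hwb y (hΩ.frontier_eq ▸ ⟨hy, hyΩ⟩)

end MinimumPrinciple

section Supersolution

variable {n : ℕ} {Ω : Set (Euc n)} {u : Euc n → Euc n} {g : ℝ → ℝ} {lam : ℝ}
  {v w : Euc n → ℝ}

theorem continuousOn_closure_indicator_of_squeeze (hΩ : IsOpen Ω) (hv : ContinuousOn v Ω)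
    (hv₀ : ∀ x ∈ Ω, 0 ≤ v x) (hvw : ∀ x ∈ Ω, v x ≤ w x) (hw : ContinuousOn w (closure Ω))
    (hwb : ∀ x ∈ frontier Ω, w x = 0) : ContinuousOn (Ω.indicator v) (closure Ω) := by
  intro x hx
  by_cases hxΩ : x ∈ Ω
  · exact ((hv.continuousAt (hΩ.mem_nhds hxΩ)).congr
      (eqOn_indicator.symm.eventuallyEq_of_mem (hΩ.mem_nhds hxΩ))).continuousWithinAt
  · have hw₀ {y : Euc n} (hy : y ∈ closure Ω) (hyΩ : y ∉ Ω) : w y = 0 :=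
      hwb y (hΩ.frontier_eq ▸ ⟨hy, hyΩ⟩)
    have hlim := hw x hx
    rw [ContinuousWithinAt, hw₀ hx hxΩ] at hlim
    rw [ContinuousWithinAt, indicator_of_notMem hxΩ]
    refine squeeze_zero' (.of_forall (indicator_nonneg hv₀)) ?_ hlim
    filter_upwards [self_mem_nhdsWithin] with y hy
    by_cases hyΩ : y ∈ Ω
    · exact (indicator_of_mem hyΩ v).trans_le (hvw y hyΩ)
    · rw [indicator_of_notMem hyΩ, hw₀ hy hyΩ]

theorem isNonnegSol_indicator (hΩ : IsOpen Ω) (hv : ContDiffOn ℝ 2 v Ω)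
    (hcont : ContinuousOn (Ω.indicator v) (closure Ω)) (hv₀ : ∀ x ∈ Ω, 0 ≤ v x)
    (heq : ∀ x ∈ Ω, -lapl v x + ⟪u x, gradient v x⟫ = lam * g (v x)) :
    IsNonnegSol Ω u g lam (Ω.indicator v) := by
  have hev {x : Euc n} (hx : x ∈ Ω) : Ω.indicator v =ᶠ[𝓝 x] v :=
    eqOn_indicator.eventuallyEq_of_mem (hΩ.mem_nhds hx)
  refine ⟨⟨fun x hx ↦ ?_, hcont, fun x hx ↦ ?_, fun x hx ↦ ?_⟩,
    fun x _ ↦ indicator_nonneg hv₀ x⟩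
  · exact (hv.contDiffAt (hΩ.mem_nhds hx)).congr_of_eventuallyEq (hev hx)
  · have hpderiv (i : Fin n) : pderiv i (Ω.indicator v) =ᶠ[𝓝 x] pderiv i v :=
      (hev hx).fderiv.fun_comp (· (EuclideanSpace.single i 1))
    have hlapl : lapl (Ω.indicator v) x = lapl v x :=
      Finset.sum_congr rfl fun i _ ↦
        DFunLike.congr_fun (hpderiv i).fderiv_eq (EuclideanSpace.single i 1)
    rw [hlapl, gradient, (hev hx).fderiv_eq, (hev hx).eq_of_nhds]
    exact heq x hx
  · rw [hΩ.frontier_eq] at hx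
    exact indicator_of_notMem hx.2 v

theorem forall_mem_le_of_ae_le {X : Type*} [TopologicalSpace X] [MeasurableSpace X]
    {μ : Measure X} [μ.IsOpenPosMeasure] {s : Set X} {a b : X → ℝ} (hs : IsOpen s)
    (ha : ContinuousOn a s) (hb : ContinuousOn b s) (hab : a ≤ᵐ[μ.restrict s] b) :
    ∀ x ∈ s, a x ≤ b x := by
  have hmin : a ⊓ b =ᵐ[μ.restrict s] a := hab.mono fun x hx ↦ inf_of_le_left hx
  exact fun x hx ↦ inf_eq_left.1 (Measure.eqOn_open_of_ae_eq hmin hs (ha.inf hb) ha hx)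

theorem exists_contDiffOn_between_zero_and_supersolution {Ω : Opens (Euc n)} {G : ℝ → ℝ}
    (hu : ContDiffOn ℝ 1 u Ω) (hG : ContDiff ℝ 1 G) (hGm : MonotoneOn G (Ici 0))
    (hG₀ : 0 ≤ G 0) (hw : ContDiffOn ℝ 2 w Ω) (hw₂ : MemLp w 2 (volume.restrict Ω))
    (hw₀ : ∀ x ∈ Ω, 0 ≤ w x)
    (hGw : ∀ x ∈ Ω, G (w x) ≤ -lapl w x + ⟪u x, gradient w x⟫) :
    ∃ v, ContDiffOn ℝ 2 v Ω ∧ (∀ x ∈ Ω, 0 ≤ v x ∧ v x ≤ w x) ∧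
      ∀ x ∈ Ω, -lapl v x + ⟪u x, gradient v x⟫ = G (v x) := by
  have hΩ := Ω.isOpen.measurableSet
  have hF : ContinuousOn (fun x ↦ -lapl w x + ⟪u x, gradient w x⟫) Ω :=
    (continuousOn_lapl hw).neg.add (continuousOn_inner_gradient hu (hw.of_le one_le_two))
  obtain ⟨v, hvm, hvw, hv⟩ := exists_isWeakSol_comp_of_supersolution hu hG.continuous hGm hG₀ hw₂
    (ae_restrict_of_forall_mem hΩ hw₀) (hF.locallyIntegrableOn hΩ) (isWeakSol_of_contDiffOn hu hw)
    (ae_restrict_of_forall_mem hΩ hGw)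
  have hGv := ae_nonneg_and_comp_le hGm hG₀ (ae_restrict_of_forall_mem hΩ hGw) hvw
  have hvb : IsLocallyBounded Ω v := (isLocallyBounded_of_continuousOn hw.continuousOn).mono hvm
    (hvw.mono fun x hx ↦ abs_le_abs_of_nonneg hx.1 hx.2)
  have hGvb : IsLocallyBounded Ω (G ∘ v) := (isLocallyBounded_of_continuousOn hF).mono
    (hG.continuous.comp_aestronglyMeasurable hvm)
    (hGv.mono fun x hx ↦ abs_le_abs_of_nonneg hx.1 hx.2)
  obtain ⟨v', hvv', hv', heq⟩ := hv.exists_ae_eq_contDiffOn hu hG hvb hGvb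
  have hnonneg := forall_mem_le_of_ae_le Ω.isOpen continuousOn_const hv'.continuousOn
    (hvv'.mp (hvw.mono fun x hx h ↦ h ▸ hx.1))
  have hle := forall_mem_le_of_ae_le Ω.isOpen hv'.continuousOn hw.continuousOn
    (hvv'.mp (hvw.mono fun x hx h ↦ h ▸ hx.2))
  exact ⟨v', hv', fun x hx ↦ ⟨hnonneg x hx, hle x hx⟩, heq⟩

theorem exists_isNonnegSol_le_supersolution (hΩ : IsOpen Ω) (hΩb : Bornology.IsBounded Ω)
    (hu : ContDiffOn ℝ 1 u Ω) (hg : ContDiff ℝ 1 g) (hgm : MonotoneOn g (Ici 0)) (hg₀ : 0 ≤ g 0)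
    (hlam : 0 ≤ lam) (hw : ∀ x ∈ Ω, ContDiffAt ℝ 2 w x) (hwc : ContinuousOn w (closure Ω))
    (hwb : ∀ x ∈ frontier Ω, w x = 0) (hw₀ : ∀ x ∈ Ω, 0 ≤ w x)
    (hgw : ∀ x ∈ Ω, lam * g (w x) ≤ -lapl w x + ⟪u x, gradient w x⟫) :
    ∃ v, IsNonnegSol Ω u g lam v ∧ ∀ x ∈ Ω, v x ≤ w x := by
  have hw₂ : MemLp w 2 (volume.restrict Ω) := by
    obtain ⟨C, hC⟩ := hΩb.isCompact_closure.exists_bound_of_continuousOn hwc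
    have := isFiniteMeasure_restrict.2 (hΩb.measure_lt_top (μ := volume)).ne
    exact .of_bound ((hwc.mono subset_closure).aestronglyMeasurable hΩ.measurableSet) C
      (ae_restrict_of_forall_mem hΩ.measurableSet fun x hx ↦ hC x (subset_closure hx))
  obtain ⟨v, hv, hvw, heq⟩ := exists_contDiffOn_between_zero_and_supersolution (Ω := ⟨Ω, hΩ⟩)
    (G := fun t ↦ lam * g t) hu (contDiff_const.mul hg)
    (fun _ hs _ ht hst ↦ mul_le_mul_of_nonneg_left (hgm hs ht hst) hlam) (mul_nonneg hlam hg₀)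
    (hΩ.contDiffOn_iff.2 fun x hx ↦ hw x hx) hw₂ hw₀ hgw
  refine ⟨Ω.indicator v, isNonnegSol_indicator hΩ hv ?_ (fun x hx ↦ (hvw x hx).1) heq,
    fun x hx ↦ (indicator_of_mem hx v).trans_le (hvw x hx).2⟩
  exact continuousOn_closure_indicator_of_squeeze hΩ hv.continuousOn (fun x hx ↦ (hvw x hx).1)
    (fun x hx ↦ (hvw x hx).2) hwc hwb

end Supersolution

section Linearization

variable {n : ℕ} {Ω : Set (Euc n)} {u : Euc n → Euc n} {g : ℝ → ℝ} {lam κ : ℝ}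
  {φ ψ : Euc n → ℝ} {x : Euc n}

theorem exists_pos_forall_le_linearization_add (hg : ContDiff ℝ 1 g) (p q : ℝ) {c : ℝ}
    (hc : 0 < c) : ∃ δ > 0, ∀ s t, p ≤ t → t ≤ s → s ≤ q → s - t < δ →
      g t ≤ g s - (deriv g s - c) * (s - t) := by
  have hdg : Continuous (deriv g) := hg.continuous_deriv le_rfl
  obtain ⟨δ, hδ, hdist⟩ := Metric.uniformContinuousOn_iff.1
    (isCompact_Icc.uniformContinuousOn_of_continuous (hdg.continuousOn (s := Icc p q))) c hc
  refine ⟨δ, hδ, fun s t hpt hts hsq hst ↦ ?_⟩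
  obtain rfl | hlt := hts.eq_or_lt
  · simp
  obtain ⟨ξ, hξ, hslope⟩ := exists_deriv_eq_slope g hlt hg.continuous.continuousOn
    (hg.differentiable one_ne_zero).differentiableOn
  have hclose : dist (deriv g s) (deriv g ξ) < c :=
    hdist s ⟨hpt.trans hts, hsq⟩ ξ ⟨hpt.trans hξ.1.le, hξ.2.le.trans hsq⟩
      (by rw [Real.dist_eq, abs_of_pos (sub_pos.2 hξ.2)]; linarith [hξ.1])
  have hle : deriv g s - c ≤ (g s - g t) / (s - t) := by
    rw [← hslope]
    linarith [le_of_abs_le (Real.dist_eq _ _ ▸ hclose.le)]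
  linarith [(le_div_iff₀ (sub_pos.2 hlt)).1 hle]

theorem elliptic_sub_const_smul (hφ : ContDiffAt ℝ 2 φ x) (hψ : ContDiffAt ℝ 2 ψ x) (ε : ℝ) :
    -lapl (φ - ε • ψ) x + ⟪u x, gradient (φ - ε • ψ) x⟫ =
      (-lapl φ x + ⟪u x, gradient φ x⟫) - ε * (-lapl ψ x + ⟪u x, gradient ψ x⟫) := by
  have hsub : φ - ε • ψ = φ + (-ε) • ψ := by rw [neg_smul, sub_eq_add_neg]
  have hψ' : ContDiffAt ℝ 2 ((-ε) • ψ) x := contDiffAt_const.smul hψ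
  have hpderiv (i : Fin n) : pderiv i (φ + (-ε) • ψ) x = pderiv i φ x - ε * pderiv i ψ x := by
    rw [pderiv_add (hφ.differentiableAt two_ne_zero) (hψ'.differentiableAt two_ne_zero),
      pderiv_const_smul, Pi.smul_apply, smul_eq_mul, neg_mul, ← sub_eq_add_neg]
  simp only [hsub, lapl_add hφ hψ', lapl_const_smul, inner_gradient, hpderiv, Pi.smul_apply,
    smul_eq_mul, mul_sub, Finset.sum_sub_distrib, mul_left_comm _ ε, ← Finset.mul_sum]
  ring

theorem le_elliptic_sub_smul {ε : ℝ} (hφ : ContDiffAt ℝ 2 φ x) (hψ : ContDiffAt ℝ 2 ψ x)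
    (hφg : -lapl φ x + ⟪u x, gradient φ x⟫ = lam * g (φ x))
    (hψκ : -lapl ψ x + ⟪u x, gradient ψ x⟫ - lam * deriv g (φ x) * ψ x ≤ κ * ψ x) (hε : 0 ≤ ε) :
    lam * g (φ x) - ε * ((lam * deriv g (φ x) + κ) * ψ x) ≤
      -lapl (φ - ε • ψ) x + ⟪u x, gradient (φ - ε • ψ) x⟫ := by
  rw [elliptic_sub_const_smul hφ hψ, hφg]
  gcongr
  linarith

theorem exists_pos_mul_lt_and_mul_lt {a b : ℝ} (ha : 0 < a) (hb : 0 < b) (s t : ℝ) :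
    ∃ ε > 0, ε * s < a ∧ ε * t < b := by
  obtain ⟨ε, hε, hlt⟩ := exists_pos_mul_lt (lt_min ha hb) (max s t)
  have hle {r : ℝ} (hr : r ≤ max s t) : ε * r < min a b :=
    (mul_le_mul_of_nonneg_left hr hε.le).trans_lt (mul_comm ε _ ▸ hlt)
  exact ⟨ε, hε, (hle (le_max_left s t)).trans_le (min_le_left a b),
    (hle (le_max_right s t)).trans_le (min_le_right a b)⟩

theorem exists_pos_supersolution_sub_smul (hΩb : Bornology.IsBounded Ω) (hg : ContDiff ℝ 1 g)
    (hg₀ : 0 < g 0) (hgm : MonotoneOn g (Ici 0)) (hlam : 0 < lam) (hκ : κ < 0)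
    (hφ : IsNonnegSol Ω u g lam φ) (hψ : ∀ x ∈ Ω, ContDiffAt ℝ 2 ψ x)
    (hψc : ContinuousOn ψ (closure Ω)) (hψ₀ : ∀ x ∈ Ω, 0 ≤ ψ x)
    (hψκ : ∀ x ∈ Ω, -lapl ψ x + ⟪u x, gradient ψ x⟫ - lam * deriv g (φ x) * ψ x ≤ κ * ψ x) :
    ∃ ε > 0, ∀ x ∈ Ω,
      0 < -lapl (φ - ε • ψ) x + ⟪u x, gradient (φ - ε • ψ) x⟫ ∧
      (0 ≤ φ x - ε * ψ x → lam * g (φ x - ε * ψ x) ≤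
        -lapl (φ - ε • ψ) x + ⟪u x, gradient (φ - ε • ψ) x⟫) := by
  obtain ⟨⟨hφ₂, hφc, hφeq, -⟩, hφ₀⟩ := hφ
  have hK := hΩb.isCompact_closure
  obtain ⟨A, hA⟩ := hK.bddAbove_image hφc
  obtain ⟨B, hB⟩ := hK.bddAbove_image hψc
  have hdg := (hg.continuous_deriv le_rfl).comp_continuousOn' hφc
  obtain ⟨E, hE⟩ := hK.bddAbove_image (f := fun x ↦ (lam * deriv g (φ x) + κ) * ψ x) (by fun_prop)
  obtain ⟨δ, hδ, htaylor⟩ := exists_pos_forall_le_linearization_add hg 0 A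
    (div_pos (neg_pos.2 hκ) hlam)
  obtain ⟨ε, hε, hεE, hεB⟩ := exists_pos_mul_lt_and_mul_lt (mul_pos hlam hg₀) hδ E B
  refine ⟨ε, hε, fun x hx ↦ ?_⟩
  have hxK := subset_closure hx
  have helliptic := le_elliptic_sub_smul (hφ₂ x hx) (hψ x hx) (hφeq x hx) (hψκ x hx) hε.le
  refine ⟨?_, fun hw₀ ↦ ?_⟩
  · have hgφ : lam * g 0 ≤ lam * g (φ x) :=
      mul_le_mul_of_nonneg_left (hgm self_mem_Ici (hφ₀ x hx) (hφ₀ x hx)) hlam.le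
    have hE := mul_le_mul_of_nonneg_left (hE (mem_image_of_mem _ hxK)) hε.le
    linarith
  · refine le_trans ?_ helliptic
    have hεψ : 0 ≤ ε * ψ x := mul_nonneg hε.le (hψ₀ x hx)
    have hεψB := mul_le_mul_of_nonneg_left (hB (mem_image_of_mem _ hxK)) hε.le
    calc lam * g (φ x - ε * ψ x)
        ≤ lam * (g (φ x) - (deriv g (φ x) - -κ / lam) * (φ x - (φ x - ε * ψ x))) := by
          gcongr
          exact htaylor _ _ hw₀ (by linarith) (hA (mem_image_of_mem _ hxK)) (by linarith)
      _ = lam * g (φ x) - ε * ((lam * deriv g (φ x) + κ) * ψ x) := by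
          field_simp
          ring

end Linearization

end ExplosionProblem

open ExplosionProblem in
theorem minimal_solution_linearization_nonneg_eigenvalue_general {n : ℕ}
    {Ω : Set (EuclideanSpace ℝ (Fin n))} (hΩ : IsOpen Ω) (hΩb : Bornology.IsBounded Ω)
    {u : EuclideanSpace ℝ (Fin n) → EuclideanSpace ℝ (Fin n)} (hu : ContDiffOn ℝ 1 u Ω)
    {g : ℝ → ℝ} (hg : ContDiff ℝ 1 g) (hg₀ : 0 < g 0) (hgm : MonotoneOn g (Ici 0))
    {lam : ℝ} (hlam : 0 < lam) {φ : EuclideanSpace ℝ (Fin n) → ℝ}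
    (hφ : IsMinimalSol Ω u g lam φ) {κ : ℝ} {ψ : EuclideanSpace ℝ (Fin n) → ℝ}
    (hψ : ∀ x ∈ Ω, ContDiffAt ℝ 2 ψ x) (hψc : ContinuousOn ψ (closure Ω))
    (hψ₀ : ∀ x ∈ Ω, 0 ≤ ψ x) (hψne : ∃ x ∈ Ω, ψ x ≠ 0) (hψb : ∀ x ∈ frontier Ω, ψ x = 0)
    (hψκ : ∀ x ∈ Ω, -lapl ψ x + ⟪u x, gradient ψ x⟫ - lam * deriv g (φ x) * ψ x ≤ κ * ψ x) :
    0 ≤ κ := by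
  by_contra! hκ
  obtain ⟨hφsol, hφmin⟩ := hφ
  obtain ⟨ε, hε, hsuper⟩ :=
    exists_pos_supersolution_sub_smul hΩb hg hg₀ hgm hlam hκ hφsol hψ hψc hψ₀ hψκ
  have hw (x) (hx : x ∈ Ω) : ContDiffAt ℝ 2 (φ - ε • ψ) x :=
    (hφsol.1.1 x hx).sub (contDiffAt_const.smul (hψ x hx))
  have hwc : ContinuousOn (φ - ε • ψ) (closure Ω) :=
    hφsol.1.2.1.sub (continuousOn_const.smul hψc)
  have hwb (x) (hx : x ∈ frontier Ω) : (φ - ε • ψ) x = 0 := by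
    simp [hφsol.1.2.2.2 x hx, hψb x hx]
  have hw₀ (x) (hx : x ∈ Ω) : 0 ≤ (φ - ε • ψ) x :=
    nonneg_of_elliptic_pos hΩ hΩb hw hwc (fun x hx ↦ (hwb x hx).ge) (fun x hx ↦ (hsuper x hx).1) hx
  obtain ⟨v, hv, hvw⟩ := exists_isNonnegSol_le_supersolution hΩ hΩb hu hg hgm hg₀.le hlam.le hw hwc
    hwb hw₀ fun x hx ↦ (hsuper x hx).2 (hw₀ x hx)
  obtain ⟨x, hx, hψx⟩ := hψne
  have hlt : (φ - ε • ψ) x < φ x := sub_lt_self _ (mul_pos hε ((hψ₀ x hx).lt_of_ne' hψx))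
  exact ((hφmin v hv x hx).trans (hvw x hx)).not_gt hlt

/-- If `φ_λ` is a minimal nonnegative classical solution and `ψ` is a
positive principal eigenfunction of the linearized operator
`Mψ = -Δψ + ⟨u, ∇ψ⟩ - λ g'(φ_λ) ψ` with eigenvalue `κ`, then `κ ≥ 0`. -/
theorem minimal_solution_linearization_nonneg_eigenvalue {n : ℕ}
    (Ω : Set (EuclideanSpace ℝ (Fin n)))
    (hΩo : IsOpen Ω) (hΩc : IsConnected Ω) (hΩb : Bornology.IsBounded Ω)
    (u : EuclideanSpace ℝ (Fin n) → EuclideanSpace ℝ (Fin n))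
    (hu : ContDiffOn ℝ 1 u (closure Ω))
    (g : ℝ → ℝ) (hg : ContDiff ℝ 2 g) (hg0 : 0 < g 0)
    (hgmono : StrictMonoOn g (Ici 0)) (hgconv : ConvexOn ℝ (Ici 0) g)
    (lam : ℝ) (hlam : 0 < lam)
    (φ : EuclideanSpace ℝ (Fin n) → ℝ) (hφ : IsMinimalSol Ω u g lam φ)
    (κ : ℝ) (ψ : EuclideanSpace ℝ (Fin n) → ℝ)
    (hψreg : ∀ x ∈ Ω, ContDiffAt ℝ 2 ψ x)
    (hψcont : ContinuousOn ψ (closure Ω))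
    (hψpos : ∀ x ∈ Ω, 0 < ψ x)
    (hψbd : ∀ x ∈ frontier Ω, ψ x = 0)
    (hψeig : ∀ x ∈ Ω,
      -lapl ψ x + ⟪u x, gradient ψ x⟫ - lam * deriv g (φ x) * ψ x = κ * ψ x) :
    0 ≤ κ :=
  minimal_solution_linearization_nonneg_eigenvalue_general hΩo hΩb (hu.mono subset_closure)
    (hg.of_le one_le_two) hg0 hgmono.monotoneOn hlam hφ hψreg hψcont (fun x hx ↦ (hψpos x hx).le)
    (hΩc.nonempty.imp fun x hx ↦ ⟨hx, (hψpos x hx).ne'⟩) hψbd fun x hx ↦ (hψeig x hx).le
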